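/- Let F : ℝ³ × ℝ⁸ → ℝ be given by F(x,y,z,λ) = x³ − 4xyz + y²z + yz² + λ₁ + λ₂x + λ₃y + λ₄z + λ₅xy + λ₆xz + λ₇yz + λ₈xyz. Then there exists ε₀ > 0 such that for every ε with 0 < ε ≤ ε₀ there exists δ > 0 with the following property: writing Σ = {λ ∈ ℝ⁸ : ‖λ‖ < δ and there exists p ∈ ℝ³ with ‖p‖ ≤ ε, F(p,λ) = 0 and the gradient of F(·,λ) vanishes at p}, there exist 15 points of the set {λ ∈ ℝ⁸ : ‖λ‖ < δ} \ Σ lying pairwise in distinct connected components of this set (i.e. the complement of the local discriminant has at least 15 connected components). -/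

import Mathlib

/-!
The proof attaches to a small nondiscriminant parameter `l` a locally constant integer, the
invariant `code l`, and exhibits fifteen arbitrarily small parameters at which it takes fifteen
different values. Parameters in one connected component of the complement have the same value.

**Reduction to the unit ball.** `F` is quasi-homogeneous: `F(τp, sc τ l) = τ³ F(p, l)` for a linear
action `sc τ` on the parameters (`F_sc`). This action carries the radius `ε` to the radius `1`, and
`sc (-1)` exchanges the regions `F < 0` and `F > 0`. A compactness argument (`exists_good`) shows
that for small nondiscriminant `l` the zero surface is regular, is transverse to the unit sphere,
and that all its straight lines meet the open unit ball; such parameters are called `Good`.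

**The invariants.** They are of two kinds.

* Topology of the negative region in the unit ball. The region `F(·, 0) < 0` has two ends, with base
  points `q₁`, `q₂`. `Conn l` says that these are joined in the negative region of `l`, and `Sph l`
  that this region has a component off the unit sphere. Regularity and transversality make the
  regions of nearby parameters locally joinable in a uniform way (`local_join`), so that both
  properties are locally constant (`conn_locally_const`, `sph_locally_const`).
* Elliptic lines. The zero surface is a cubic surface, whose real lines are hyperbolic or elliptic
  in the sense of Segre, according to the sign of the resultant `Res`. A line with nonzero resultant
  is a nondegenerate solution of its equations and continues uniquely by the implicit function
  theorem (`line_continue`); an elliptic line cannot degenerate unless the surface acquires a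
  singular point (`res_ne_zero`); and lines stay in a compact set. So the number of elliptic lines
  is locally constant (`ell_locally_const`), and so is the number of those whose direction is on the
  oval of the cubic curve at infinity (`ellO_locally_const`).

**The samples.** They are taken in the family
`F = x³ + ux + k + y (z² + z (y - 4x + c) + dx + e)` (`fam`). There the surface meets the plane
`y = 0` in lines `x = a`, and the planes through such a line cut out conics; lines meeting it
correspond to the roots of a quartic polynomial, and the elliptic ones to roots with a given
sign of the derivative. Isolating these roots in rational intervals gives the number of elliptic
lines. Four samples are distinguished by the number of elliptic lines with direction on the oval.
In one sample neither the negative nor the positive region joins its ends. In five others only the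
negative region fails to do so; these are told apart by the number of elliptic lines and, for the
two without elliptic lines, by a spherical component. The images of these five under `sc (-1)` are
the last five.
-/

/-- The standard versal deformation of the `P₈²` singularity `x³ − 4xyz + y²z + yz²`. -/
noncomputable def P82Def (p : EuclideanSpace ℝ (Fin 3)) (l : EuclideanSpace ℝ (Fin 8)) : ℝ :=
  (p 0) ^ 3 - 4 * (p 0 * p 1 * p 2) + (p 1) ^ 2 * p 2 + p 1 * (p 2) ^ 2
    + l 0 + l 1 * p 0 + l 2 * p 1 + l 3 * p 2
    + l 4 * (p 0 * p 1) + l 5 * (p 0 * p 2) + l 6 * (p 1 * p 2) + l 7 * (p 0 * p 1 * p 2)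

/-- The local discriminant: parameters `l` with `‖l‖ < δ` such that the corresponding
function has a real critical point `p` with `‖p‖ ≤ ε` and critical value `0`. -/
noncomputable def P82Disc (ε δ : ℝ) : Set (EuclideanSpace ℝ (Fin 8)) :=
  {l | ‖l‖ < δ ∧ ∃ p : EuclideanSpace ℝ (Fin 3), ‖p‖ ≤ ε ∧ P82Def p l = 0 ∧
    fderiv ℝ (fun q => P82Def q l) p = 0}

namespace P82

open Set Filter Topology

/-! ### The gradient -/

/-- The space of the variables. -/
abbrev E3 := EuclideanSpace ℝ (Fin 3)

/-- The space of the parameters. -/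
abbrev E8 := EuclideanSpace ℝ (Fin 8)

/-- The gradient of `F(·, l)` at `p`, as a plain triple of reals. -/
noncomputable def grad (l : E8) (p : E3) : Fin 3 → ℝ :=
  ![3 * (p 0) ^ 2 - 4 * (p 1 * p 2) + l 1 + l 4 * p 1 + l 5 * p 2 + l 7 * (p 1 * p 2),
    -4 * (p 0 * p 2) + 2 * (p 1 * p 2) + (p 2) ^ 2 + l 2 + l 4 * p 0 + l 6 * p 2
      + l 7 * (p 0 * p 2),
    -4 * (p 0 * p 1) + (p 1) ^ 2 + 2 * (p 1 * p 2) + l 3 + l 5 * p 0 + l 6 * p 1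
      + l 7 * (p 0 * p 1)]

/-- The linear coefficient in `s` of `grad l (p + s • d)`. -/
noncomputable def grad₁ (l : E8) (p d : E3) : Fin 3 → ℝ :=
  ![6 * (p 0 * d 0) - 4 * (p 1 * d 2 + d 1 * p 2) + l 4 * d 1 + l 5 * d 2
      + l 7 * (p 1 * d 2 + d 1 * p 2),
    -4 * (p 0 * d 2 + d 0 * p 2) + 2 * (p 1 * d 2 + d 1 * p 2) + 2 * (p 2 * d 2) + l 4 * d 0
      + l 6 * d 2 + l 7 * (p 0 * d 2 + d 0 * p 2),
    -4 * (p 0 * d 1 + d 0 * p 1) + 2 * (p 1 * d 1) + 2 * (p 1 * d 2 + d 1 * p 2) + l 5 * d 0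
      + l 6 * d 1 + l 7 * (p 0 * d 1 + d 0 * p 1)]

/-- The quadratic coefficient in `s` of `grad l (p + s • d)`: the gradient at `d` of the cubic
part of `F(·, l)`. -/
noncomputable def grad₂ (l : E8) (d : E3) : Fin 3 → ℝ :=
  ![3 * (d 0) ^ 2 - 4 * (d 1 * d 2) + l 7 * (d 1 * d 2),
    -4 * (d 0 * d 2) + 2 * (d 1 * d 2) + (d 2) ^ 2 + l 7 * (d 0 * d 2),
    -4 * (d 0 * d 1) + (d 1) ^ 2 + 2 * (d 1 * d 2) + l 7 * (d 0 * d 1)]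

/-- The standard scalar product of a triple of reals with a vector. -/
noncomputable def dot (a : Fin 3 → ℝ) (v : E3) : ℝ := a 0 * v 0 + a 1 * v 1 + a 2 * v 2

lemma grad_line (l : E8) (p d : E3) (s : ℝ) (i : Fin 3) :
    grad l (p + s • d) i = grad l p i + s * grad₁ l p d i + s ^ 2 * grad₂ l d i := by
  fin_cases i <;> simp [grad, grad₁, grad₂] <;> ring

lemma hasFDerivAt_F (l : E8) (p : E3) :
    HasFDerivAt (fun q : E3 => P82Def q l)
      (grad l p 0 • EuclideanSpace.proj (𝕜 := ℝ) 0 + grad l p 1 • EuclideanSpace.proj (𝕜 := ℝ) 1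
        + grad l p 2 • EuclideanSpace.proj (𝕜 := ℝ) 2 : E3 →L[ℝ] ℝ) p := by
  have h : ∀ i : Fin 3, HasFDerivAt (fun q : E3 => q i)
      (EuclideanSpace.proj (𝕜 := ℝ) i : E3 →L[ℝ] ℝ) p := fun i =>
    (EuclideanSpace.proj (𝕜 := ℝ) i : E3 →L[ℝ] ℝ).hasFDerivAt
  have h0 := h 0
  have h1 := h 1
  have h2 := h 2
  have := (((((((((((h0.pow 3).sub (((h0.mul h1).mul h2).const_mul 4)).add
    ((h1.pow 2).mul h2)).add (h1.mul (h2.pow 2))).add_const (l 0)).add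
    (h0.const_mul (l 1))).add (h1.const_mul (l 2))).add (h2.const_mul (l 3))).add
    ((h0.mul h1).const_mul (l 4))).add ((h0.mul h2).const_mul (l 5))).add
    ((h1.mul h2).const_mul (l 6))).add (((h0.mul h1).mul h2).const_mul (l 7))
  refine (this.congr_fderiv ?_)
  ext v
  simp [grad]
  ring

lemma fderiv_F_apply (l : E8) (p v : E3) :
    fderiv ℝ (fun q : E3 => P82Def q l) p v = dot (grad l p) v := by
  rw [(hasFDerivAt_F l p).fderiv]
  simp [dot]

lemma fderiv_F_eq_zero_iff (l : E8) (p : E3) :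
    fderiv ℝ (fun q : E3 => P82Def q l) p = 0 ↔ grad l p = 0 := by
  constructor
  · intro h
    funext i
    have := fderiv_F_apply l p (EuclideanSpace.single i 1)
    rw [h] at this
    fin_cases i <;> simpa [dot] using this.symm
  · intro h
    ext v
    rw [fderiv_F_apply, h]
    simp [dot]

lemma hasDerivAt_line (l : E8) (p v : E3) (s : ℝ) :
    HasDerivAt (fun s : ℝ => P82Def (p + s • v) l) (dot (grad l (p + s • v)) v) s := by
  have h1 : HasDerivAt (fun s : ℝ => p + s • v) v s := by
    simpa using ((hasDerivAt_id s).smul_const v).const_add p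
  have := (hasFDerivAt_F l (p + s • v)).comp_hasDerivAt s h1
  refine this.congr_deriv ?_
  simp [dot]

lemma continuous_F : Continuous (fun x : E8 × E3 => P82Def x.2 x.1) := by
  unfold P82Def; fun_prop

lemma continuous_F_right (l : E8) : Continuous (fun p : E3 => P82Def p l) := by
  unfold P82Def; fun_prop

lemma continuous_grad (i : Fin 3) : Continuous (fun x : E8 × E3 => grad x.1 x.2 i) := by
  fin_cases i <;> simp [grad] <;> fun_prop

/-! ### Quasi-homogeneity -/

/-- The quasi-homogeneous action on the parameters: if the variables are multiplied by `τ`, then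
`F(·, sc τ l)` is `τ³` times `F(·, l)`. For `τ = -1` this is the mirror symmetry
`F(p) ↦ -F(-p)`. -/
noncomputable def sc (τ : ℝ) (l : E8) : E8 :=
  !₂[τ ^ 3 * l 0, τ ^ 2 * l 1, τ ^ 2 * l 2, τ ^ 2 * l 3, τ * l 4, τ * l 5, τ * l 6, l 7]

lemma F_sc (τ : ℝ) (l : E8) (p : E3) : P82Def (τ • p) (sc τ l) = τ ^ 3 * P82Def p l := by
  simp [P82Def, sc]; ring

lemma grad_sc (τ : ℝ) (l : E8) (p : E3) (i : Fin 3) :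
    grad (sc τ l) (τ • p) i = τ ^ 2 * grad l p i := by
  fin_cases i <;> simp [grad, sc] <;> ring

lemma grad₁_sc (τ : ℝ) (l : E8) (p d : E3) (i : Fin 3) :
    grad₁ (sc τ l) (τ • p) d i = τ * grad₁ l p d i := by
  fin_cases i <;> simp [grad₁, sc] <;> ring

lemma grad₂_sc (τ : ℝ) (l : E8) (d : E3) (i : Fin 3) :
    grad₂ (sc τ l) d i = grad₂ l d i := by
  fin_cases i <;> simp [grad₂, sc]

lemma sc_sc (σ τ : ℝ) (l : E8) : sc σ (sc τ l) = sc (σ * τ) l := by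
  ext i; fin_cases i <;> simp [sc] <;> ring

lemma sc_one (l : E8) : sc 1 l = l := by
  ext i; fin_cases i <;> simp [sc]

lemma continuous_sc (τ : ℝ) : Continuous (sc τ) := by
  unfold sc; fun_prop

lemma norm_sc_le (τ C : ℝ) (hC : 1 ≤ C) (hτ : |τ| ^ 3 ≤ C) (h2 : |τ| ^ 2 ≤ C) (h1 : |τ| ≤ C)
    (l : E8) : ‖sc τ l‖ ≤ C * ‖l‖ := by
  have key : ∀ i, ‖sc τ l i‖ ≤ C * ‖l i‖ := by
    intro i
    have hn := norm_nonneg (l i)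
    fin_cases i <;> simp [sc, -Real.norm_eq_abs, norm_mul] <;> simp only [Real.norm_eq_abs] at *
    all_goals first | exact mul_le_mul_of_nonneg_right ‹_› (abs_nonneg _) | skip
    all_goals nlinarith [abs_nonneg (l 7), sq_abs τ, abs_nonneg (l 1), abs_nonneg (l 2), abs_nonneg (l 3)]
  have hC0 : 0 ≤ C := by linarith
  rw [EuclideanSpace.norm_eq, EuclideanSpace.norm_eq]
  rw [← Real.sqrt_sq hC0, ← Real.sqrt_mul (sq_nonneg C)]
  apply Real.sqrt_le_sqrt
  rw [Finset.mul_sum]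
  apply Finset.sum_le_sum
  intro i _
  rw [← mul_pow]
  exact pow_le_pow_left₀ (norm_nonneg _) (key i) 2

attribute [local irreducible] P82Def

/-! ### Behaviour near the unit sphere for small parameters -/

lemma norm_sq (p : E3) : ‖p‖ ^ 2 = p 0 ^ 2 + p 1 ^ 2 + p 2 ^ 2 := by
  rw [EuclideanSpace.real_norm_sq_eq, Fin.sum_univ_three]

/-- Squared length of a triple of reals. -/
noncomputable def nsq (a : Fin 3 → ℝ) : ℝ := a 0 ^ 2 + a 1 ^ 2 + a 2 ^ 2

lemma nsq_eq_zero {a : Fin 3 → ℝ} (h : nsq a = 0) : a = 0 := by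
  unfold nsq at h
  funext i
  fin_cases i <;> simp <;> nlinarith [sq_nonneg (a 0), sq_nonneg (a 1), sq_nonneg (a 2)]

lemma nsq_pos {a : Fin 3 → ℝ} (h : a ≠ 0) : 0 < nsq a := by
  refine lt_of_le_of_ne (by unfold nsq; positivity) fun h0 => h (nsq_eq_zero h0.symm)

lemma dot_sq_le (a : Fin 3 → ℝ) (p : E3) : dot a p ^ 2 ≤ nsq a * ‖p‖ ^ 2 := by
  rw [norm_sq]; unfold dot nsq
  nlinarith [sq_nonneg (a 0 * p 1 - a 1 * p 0), sq_nonneg (a 0 * p 2 - a 2 * p 0),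
    sq_nonneg (a 1 * p 2 - a 2 * p 1)]

lemma euler (u : E3) : dot (grad 0 u) u = 3 * P82Def u 0 := by
  simp [dot, grad, P82Def]; ring

lemma grad_zero_ne {u : E3} (hu : u ≠ 0) : grad 0 u ≠ 0 := by
  intro h
  have h0 := congrFun h 0
  have h1 := congrFun h 1
  have h2 := congrFun h 2
  simp [grad] at h0 h1 h2
  apply hu
  have key : u 0 = 0 ∧ u 1 = 0 ∧ u 2 = 0 := by
    generalize u 0 = x at *
    generalize u 1 = y at *
    generalize u 2 = z at *
    have hz : z * (z + 2 * y - 4 * x) = 0 := by linarith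
    have hy : y * (y + 2 * z - 4 * x) = 0 := by linarith
    rcases mul_eq_zero.1 hz with hz | hz
    · subst hz
      have hx : x = 0 := by nlinarith
      subst hx
      exact ⟨rfl, by nlinarith, rfl⟩
    · rcases mul_eq_zero.1 hy with hy | hy
      · subst hy
        have hx : x = 0 := by nlinarith
        exact ⟨hx, rfl, by linarith⟩
      · have : y = z := by linarith
        subst this
        have hx : x = 3 / 4 * y := by linarith
        subst hx
        have : y = 0 := by nlinarith
        subst this
        simp
  ext i
  fin_cases i
  · exact key.1
  · exact key.2.1
  · exact key.2.2

/-- The zero set of the cubic form contains no plane: in terms of an orthonormal pair `u, d`, the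
form does not vanish at all four points `u`, `u ± d`, `u + 2d`. -/
lemma no_plane (u d : E3) (hu : ‖u‖ ^ 2 = 1) (hd : ‖d‖ ^ 2 = 1) (hud : dot u d = 0)
    (h0 : P82Def u 0 = 0) (h1 : P82Def (u + d) 0 = 0) (h2 : P82Def (u - d) 0 = 0)
    (h3 : P82Def (u + (2 : ℝ) • d) 0 = 0) : False := by
  rw [norm_sq] at hu hd
  simp [P82Def] at h0 h1 h2 h3
  unfold dot at hud
  generalize u 0 = a at *
  generalize u 1 = b at *
  generalize u 2 = c at *
  generalize d 0 = x at *
  generalize d 1 = y at *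
  generalize d 2 = z at *
  -- the four coefficients in `s` of the form at `u + s d`, hence the form vanishes on the plane
  have c3 : x ^ 3 - 4 * (x * y * z) + y ^ 2 * z + y * z ^ 2 = 0 := by linarith
  have c2 : 3 * a * x ^ 2 - 4 * (a * y * z + x * b * z + x * y * c) + (2 * b * y * z + y ^ 2 * c)
      + (b * z ^ 2 + 2 * c * y * z) = 0 := by linarith
  have c1 : 3 * a ^ 2 * x - 4 * (a * b * z + a * y * c + x * b * c) + (b ^ 2 * z + 2 * b * c * y)
      + (2 * b * c * z + y * c ^ 2) = 0 := by linarith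
  have plane : ∀ s t : ℝ, (s * a + t * x) ^ 3 - 4 * ((s * a + t * x) * (s * b + t * y) *
      (s * c + t * z)) + (s * b + t * y) ^ 2 * (s * c + t * z)
      + (s * b + t * y) * (s * c + t * z) ^ 2 = 0 := by
    intro s t
    linear_combination s ^ 3 * h0 + s ^ 2 * t * c1 + s * t ^ 2 * c2 + t ^ 3 * c3
  have hy : y * a - b * x = 0 := by
    have := plane y (-b)
    have : (y * a - b * x) ^ 3 = 0 := by linear_combination this
    exact pow_eq_zero_iff (by norm_num) |>.1 this
  have hz : z * a - c * x = 0 := by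
    have := plane z (-c)
    have : (z * a - c * x) ^ 3 = 0 := by linear_combination this
    exact pow_eq_zero_iff (by norm_num) |>.1 this
  have hx2 : (b * z - c * y) ^ 2 = 1 := by
    have : (a * x + b * y + c * z) ^ 2 + (y * a - b * x) ^ 2 + (z * a - c * x) ^ 2
      + (b * z - c * y) ^ 2 = (a ^ 2 + b ^ 2 + c ^ 2) * (x ^ 2 + y ^ 2 + z ^ 2) := by ring
    rw [hud, hy, hz, hu, hd] at this
    linarith
  have hw : b * z - c * y ≠ 0 := fun h => by rw [h] at hx2; norm_num at hx2
  have ha : a = 0 := by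
    have : (b * z - c * y) * a = 0 := by linear_combination b * hz - c * hy
    exact (mul_eq_zero.1 this).resolve_left hw
  have hx : x = 0 := by
    have : (b * z - c * y) * x = 0 := by linear_combination y * hz - z * hy
    exact (mul_eq_zero.1 this).resolve_left hw
  subst ha hx
  have h := plane (z - y) (b - c)
  have h' : 2 * (b * z - c * y) ^ 3 = 0 := by linear_combination h
  exact hw (pow_eq_zero_iff (by norm_num) |>.1 (by linarith : (b * z - c * y) ^ 3 = 0))

/-- Base point in the region where the cubic form is negative and `x, y, z > 0`. -/
noncomputable def q₁ : E3 := !₂[2 / 5, 2 / 5, 3 / 5]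

/-- Base point in the other region where the cubic form is negative. -/
noncomputable def q₂ : E3 := !₂[-1, 0, 0]

lemma norm_q₁ : ‖q₁‖ ≤ 1 := by
  refine (sq_le_one_iff₀ (norm_nonneg _)).1 ?_
  rw [norm_sq]
  simp [q₁]
  norm_num

lemma norm_q₂ : ‖q₂‖ ≤ 1 := by
  refine (sq_le_one_iff₀ (norm_nonneg _)).1 ?_
  rw [norm_sq]
  simp [q₂]

/-- A parameter for which `F(·, l)` behaves as expected of a small nondiscriminant parameter:
`0` is a regular value, also of the restriction to the unit sphere, all lines in the zero level
meet the open unit ball, and the base points are in the negative region. -/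
structure Good (l : E8) : Prop where
  ns : ∀ p : E3, P82Def p l = 0 → grad l p ≠ 0
  lag : ∀ p : E3, ‖p‖ ≤ 1 → P82Def p l = 0 → dot (grad l p) p ^ 2 < nsq (grad l p)
  line : ∀ p d : E3, ‖d‖ = 1 → dot p d = 0 → (∀ s : ℝ, P82Def (p + s • d) l = 0) → ‖p‖ < 1
  g2 : ∀ d : E3, ‖d‖ = 1 → grad₂ l d ≠ 0
  neg1 : P82Def q₁ l < 0
  neg2 : P82Def q₂ l < 0
  small : |l 7| ≤ 1

lemma eventually_pos {X : Type*} [TopologicalSpace X] {C : Set X} (hC : IsCompact C)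
    {Φ : E8 × X → ℝ} (hΦ : Continuous Φ) {l : E8} (h : ∀ x ∈ C, 0 < Φ (l, x)) :
    ∀ᶠ m in 𝓝 l, ∀ x ∈ C, 0 < Φ (m, x) := by
  apply hC.eventually_forall_of_forall_eventually (P := fun m x => 0 < Φ (m, x))
  intro y hy
  exact hΦ.continuousAt.eventually (lt_mem_nhds (h y hy))

lemma continuous_nsq_grad : Continuous (fun x : E8 × E3 => nsq (grad x.1 x.2)) :=
  (((continuous_grad 0).pow 2).add ((continuous_grad 1).pow 2)).add ((continuous_grad 2).pow 2)

lemma continuous_coord (i : Fin 3) : Continuous (fun x : E8 × E3 => x.2 i) := by fun_prop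

lemma continuous_dot_grad : Continuous (fun x : E8 × E3 => dot (grad x.1 x.2) x.2) :=
  (((continuous_grad 0).mul (continuous_coord 0)).add
    ((continuous_grad 1).mul (continuous_coord 1))).add
    ((continuous_grad 2).mul (continuous_coord 2))

lemma base₁ : ∀ᶠ m in 𝓝 (0 : E8), ∀ u ∈ Metric.sphere (0 : E3) 1,
    0 < P82Def u m ^ 2 + (nsq (grad m u) - dot (grad m u) u ^ 2) := by
  apply eventually_pos (isCompact_sphere _ _)
    (Φ := fun x : E8 × E3 => P82Def x.2 x.1 ^ 2 + (nsq (grad x.1 x.2) - dot (grad x.1 x.2) x.2 ^ 2))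
    ((continuous_F.pow 2).add (continuous_nsq_grad.sub (continuous_dot_grad.pow 2)))
  intro u hu
  have hu : ‖u‖ = 1 := by simpa using hu
  have h1 := dot_sq_le (grad 0 u) u
  rw [hu] at h1
  have h2 : 0 < nsq (grad 0 u) := nsq_pos (grad_zero_ne (by rintro rfl; simp at hu))
  dsimp only
  by_cases h : P82Def u 0 = 0
  · rw [euler, h]
    norm_num
    exact h2
  · have : 0 < P82Def u 0 ^ 2 := by positivity
    linarith

lemma isCompact_orthonormal :
    IsCompact {x : E3 × E3 | ‖x.1‖ = 1 ∧ ‖x.2‖ = 1 ∧ dot x.1 x.2 = 0} := by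
  refine ((isCompact_sphere (0 : E3) 1).prod (isCompact_sphere (0 : E3) 1)).of_isClosed_subset
    ?_ ?_
  · refine (isClosed_eq (by fun_prop) (by fun_prop)).inter
      ((isClosed_eq (by fun_prop) (by fun_prop)).inter (isClosed_eq ?_ (by fun_prop)))
    unfold dot
    fun_prop
  · rintro ⟨u, d⟩ ⟨h1, h2, -⟩
    simp at h1 h2
    simp [h1, h2]

lemma continuous_F_lin (s : ℝ) :
    Continuous (fun x : E8 × E3 × E3 => P82Def (x.2.1 + s • x.2.2) x.1) := by
  unfold P82Def; fun_prop

lemma base₂ : ∀ᶠ m in 𝓝 (0 : E8), ∀ x ∈ {x : E3 × E3 | ‖x.1‖ = 1 ∧ ‖x.2‖ = 1 ∧ dot x.1 x.2 = 0},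
    0 < P82Def (x.1 + (0 : ℝ) • x.2) m ^ 2 + P82Def (x.1 + (1 : ℝ) • x.2) m ^ 2
      + P82Def (x.1 + (-1 : ℝ) • x.2) m ^ 2 + P82Def (x.1 + (2 : ℝ) • x.2) m ^ 2 := by
  apply eventually_pos isCompact_orthonormal (Φ := fun y : E8 × E3 × E3 =>
    P82Def (y.2.1 + (0 : ℝ) • y.2.2) y.1 ^ 2 + P82Def (y.2.1 + (1 : ℝ) • y.2.2) y.1 ^ 2
      + P82Def (y.2.1 + (-1 : ℝ) • y.2.2) y.1 ^ 2 + P82Def (y.2.1 + (2 : ℝ) • y.2.2) y.1 ^ 2)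
    (((((continuous_F_lin 0).pow 2).add ((continuous_F_lin 1).pow 2)).add
      ((continuous_F_lin (-1)).pow 2)).add ((continuous_F_lin 2).pow 2))
  rintro ⟨u, d⟩ ⟨h1, h2, h3⟩
  dsimp only at *
  by_contra! hcon
  refine no_plane u d (by rw [h1]; norm_num) (by rw [h2]; norm_num) h3 ?_ ?_ ?_ ?_
  · have : P82Def (u + (0 : ℝ) • d) 0 = 0 := by nlinarith
    simpa using this
  · have : P82Def (u + (1 : ℝ) • d) 0 = 0 := by nlinarith
    simpa using this
  · have : P82Def (u + (-1 : ℝ) • d) 0 = 0 := by nlinarith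
    simpa [sub_eq_add_neg] using this
  · nlinarith

lemma base₃ : ∀ᶠ m in 𝓝 (0 : E8), P82Def q₁ m < 0 ∧ P82Def q₂ m < 0 := by
  have h : ∀ q : E3, Continuous (fun m : E8 => P82Def q m) := fun q => by unfold P82Def; fun_prop
  refine ((h q₁).continuousAt.eventually (gt_mem_nhds ?_)).and
    ((h q₂).continuousAt.eventually (gt_mem_nhds ?_))
  · simp [P82Def, q₁]; norm_num
  · simp [P82Def, q₂]; norm_num

lemma grad₂_zero (d : E3) : grad₂ 0 d = grad 0 d := by
  funext i; fin_cases i <;> simp [grad, grad₂]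

lemma continuous_grad₂ (i : Fin 3) : Continuous (fun x : E8 × E3 => grad₂ x.1 x.2 i) := by
  fin_cases i <;> simp [grad₂] <;> fun_prop

lemma base₄ : ∀ᶠ m in 𝓝 (0 : E8), ∀ d ∈ Metric.sphere (0 : E3) 1, 0 < nsq (grad₂ m d) := by
  apply eventually_pos (isCompact_sphere _ _) (Φ := fun x : E8 × E3 => nsq (grad₂ x.1 x.2))
    ((((continuous_grad₂ 0).pow 2).add ((continuous_grad₂ 1).pow 2)).add
      ((continuous_grad₂ 2).pow 2))
  intro d hd
  dsimp only
  rw [grad₂_zero]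
  exact nsq_pos (grad_zero_ne (by rintro rfl; simp at hd))

lemma base₅ : ∀ᶠ m in 𝓝 (0 : E8), |m 7| ≤ 1 := by
  have h : Continuous (fun m : E8 => |m 7|) := by fun_prop
  have : ∀ᶠ m in 𝓝 (0 : E8), |m 7| < (1 : ℝ) := h.continuousAt.eventually (gt_mem_nhds (by simp))
  exact this.mono fun m hm => hm.le

lemma norm_sc_le_self {τ : ℝ} (hτ : |τ| ≤ 1) (l : E8) : ‖sc τ l‖ ≤ ‖l‖ := by
  have := norm_sc_le τ 1 le_rfl (pow_le_one₀ (abs_nonneg _) hτ) (pow_le_one₀ (abs_nonneg _) hτ) hτ l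
  linarith

lemma exists_good : ∃ η : ℝ, 0 < η ∧ ∀ l : E8, ‖l‖ < η → l ∉ P82Disc 1 η → Good l := by
  obtain ⟨η, hη, h⟩ := Metric.eventually_nhds_iff.1
    (base₁.and (base₂.and (base₃.and (base₄.and base₅))))
  refine ⟨η, hη, fun l hl hD => ?_⟩
  have hm : ∀ τ : ℝ, |τ| ≤ 1 → dist (sc τ l) 0 < η := fun τ hτ => by
    rw [dist_zero_right]
    exact (norm_sc_le_self hτ l).trans_lt hl
  have hl0 : dist l 0 < η := by rwa [dist_zero_right]
  have ns : ∀ p : E3, P82Def p l = 0 → grad l p ≠ 0 := by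
    intro p hp hg
    rcases le_or_gt ‖p‖ 1 with h1 | h1
    · exact hD ⟨hl, p, h1, hp, (fderiv_F_eq_zero_iff l p).2 hg⟩
    · have hinv : |‖p‖⁻¹| ≤ 1 := by
        rw [abs_of_pos (by positivity)]
        exact inv_le_one_of_one_le₀ h1.le
      have := (h (hm _ hinv)).1 (‖p‖⁻¹ • p) (by
        simp [norm_smul]
        exact inv_mul_cancel₀ (by positivity))
      rw [F_sc, hp] at this
      have hz : grad (sc ‖p‖⁻¹ l) (‖p‖⁻¹ • p) = 0 := by
        funext i
        rw [grad_sc, hg]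
        simp
      rw [hz] at this
      simp [nsq, dot] at this
  refine ⟨ns, ?_, ?_, ?_, (h hl0).2.2.1.1, (h hl0).2.2.1.2,
    (h hl0).2.2.2.2⟩
  · intro p hp hF
    rcases hp.lt_or_eq with h1 | h1
    · have h2 := dot_sq_le (grad l p) p
      have h3 := nsq_pos (ns p hF)
      have : ‖p‖ ^ 2 < 1 := by nlinarith [norm_nonneg p]
      nlinarith
    · have := (h hl0).1 p (by simpa using h1)
      rw [hF] at this
      linarith
  · intro p d hd hpd hs
    by_contra! h1
    have hp : 0 < ‖p‖ := by linarith
    have hinv : |‖p‖⁻¹| ≤ 1 := by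
      rw [abs_of_pos (by positivity)]
      exact inv_le_one_of_one_le₀ h1
    have hk : ∀ s : ℝ, P82Def (‖p‖⁻¹ • p + s • d) (sc ‖p‖⁻¹ l) = 0 := by
      intro s
      have := F_sc ‖p‖⁻¹ l (p + (‖p‖ * s) • d)
      rw [hs, mul_zero, smul_add, smul_smul, inv_mul_cancel_left₀ hp.ne'] at this
      exact this
    have := (h (hm _ hinv)).2.1 (‖p‖⁻¹ • p, d) ⟨by
        simp [norm_smul]
        exact inv_mul_cancel₀ (by positivity), hd, by
        simp [dot] at hpd ⊢
        linear_combination ‖p‖⁻¹ * hpd⟩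
    dsimp only at this
    rw [hk, hk, hk, hk] at this
    norm_num at this
  · intro d hd h0
    have := (h hl0).2.2.2.1 d (by simpa using hd)
    rw [h0] at this
    simp [nsq] at this

/-! ### Path components of the negative region -/

/-- The negative region in the closed unit ball. -/
def neg (l : E8) : Set E3 := {p | ‖p‖ ≤ 1 ∧ P82Def p l < 0}

lemma continuous_segDeriv (q₀ : E3) : Continuous (fun x : (E8 × E3) × ℝ =>
    dot (grad x.1.1 (x.1.2 + x.2 • (q₀ - x.1.2))) (q₀ - x.1.2)) := by
  have hg : ∀ i, Continuous (fun x : (E8 × E3) × ℝ => grad x.1.1 (x.1.2 + x.2 • (q₀ - x.1.2)) i) :=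
    fun i => (continuous_grad i).comp (f := fun x : (E8 × E3) × ℝ =>
      (x.1.1, x.1.2 + x.2 • (q₀ - x.1.2))) (by fun_prop)
  have hc : ∀ i, Continuous (fun x : (E8 × E3) × ℝ => (q₀ - x.1.2) i) := fun i => by fun_prop
  exact (((hg 0).mul (hc 0)).add ((hg 1).mul (hc 1))).add ((hg 2).mul (hc 2))

lemma eventually_segDeriv {l : E8} {p q₀ : E3}
    (h : ∀ s ∈ Icc (0 : ℝ) 1, dot (grad l (p + s • (q₀ - p))) (q₀ - p) < 0) :
    ∀ᶠ x in 𝓝 (l, p), ∀ s ∈ Icc (0 : ℝ) 1,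
      dot (grad x.1 (x.2 + s • (q₀ - x.2))) (q₀ - x.2) < 0 := by
  apply isCompact_Icc.eventually_forall_of_forall_eventually
    (P := fun (x : E8 × E3) (s : ℝ) => dot (grad x.1 (x.2 + s • (q₀ - x.2))) (q₀ - x.2) < 0)
  intro s hs
  have := (continuous_segDeriv q₀).continuousAt (x := ((l, p), s))
  exact this.eventually (gt_mem_nhds (h s hs))

lemma segment_neg {l : E8} {q q₀ : E3} (hq : ‖q‖ ≤ 1) (hq₀ : ‖q₀‖ ≤ 1)
    (h : ∀ s ∈ Icc (0 : ℝ) 1, dot (grad l (q + s • (q₀ - q))) (q₀ - q) < 0) :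
    ∀ s ∈ Ioc (0 : ℝ) 1, ‖q + s • (q₀ - q)‖ ≤ 1 ∧ P82Def (q + s • (q₀ - q)) l < P82Def q l := by
  have hcont : Continuous (fun s : ℝ => P82Def (q + s • (q₀ - q)) l) :=
    continuous_iff_continuousAt.2 fun s => (hasDerivAt_line l q (q₀ - q) s).continuousAt
  have anti : StrictAntiOn (fun s : ℝ => P82Def (q + s • (q₀ - q)) l) (Icc 0 1) := by
    apply strictAntiOn_of_deriv_neg (convex_Icc 0 1) hcont.continuousOn
    intro s hs
    rw [(hasDerivAt_line l q (q₀ - q) s).deriv]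
    exact h s (interior_subset hs)
  intro s hs
  constructor
  · have := (convex_closedBall (0 : E3) 1).add_smul_sub_mem (x := q) (y := q₀) (by simpa using hq)
      (by simpa using hq₀) ⟨hs.1.le, hs.2⟩
    simpa using this
  · have := anti (left_mem_Icc.2 zero_le_one) ⟨hs.1.le, hs.2⟩ hs.1
    simpa using this

/-- Near every point `p` of the closed region `F ≤ 0` of the ball there is a point `q₀` of the
negative region to which all nearby negative points are joined by segments in the negative region,
uniformly for nearby parameters. -/
lemma local_join {l : E8} (hl : Good l) {p : E3} (hp : ‖p‖ ≤ 1) (hF : P82Def p l ≤ 0) :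
    ∃ q₀ ∈ neg l, (∀ᶠ x in 𝓝 (l, p), x.2 ∈ neg x.1 → JoinedIn (neg x.1) x.2 q₀) ∧
      p ∈ closure (neg l) := by
  rcases hF.lt_or_eq with hF | hF
  · refine ⟨p, ⟨hp, hF⟩, ?_, subset_closure ⟨hp, hF⟩⟩
    have h1 : ∀ᶠ x in 𝓝 (l, p), P82Def x.2 x.1 < 0 :=
      continuous_F.continuousAt.eventually (gt_mem_nhds hF)
    obtain ⟨A, hA, B, hB, hAB⟩ := mem_nhds_prod_iff.1 h1
    obtain ⟨r, hr, hrB⟩ := Metric.mem_nhds_iff.1 hB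
    filter_upwards [prod_mem_nhds hA (Metric.ball_mem_nhds p hr)] with x hx hxn
    apply JoinedIn.of_segment_subset
    intro y hy
    refine ⟨?_, hAB (show (x.1, y) ∈ A ×ˢ B from ⟨hx.1, hrB ?_⟩)⟩
    · have := (convex_closedBall (0 : E3) 1).segment_subset (x := x.2) (y := p)
        (by simpa using hxn.1) (by simpa using hp) hy
      simpa using this
    · exact (convex_ball p r).segment_subset hx.2 (Metric.mem_ball_self hr) hy
  · have hlag := hl.lag p hp hF
    set g := grad l p with hg
    have hpos : 0 < nsq g := lt_of_le_of_lt (sq_nonneg _) hlag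
    set r := Real.sqrt (nsq g) with hr
    have hr0 : 0 < r := Real.sqrt_pos.2 hpos
    have hrr : r ^ 2 = nsq g := Real.sq_sqrt hpos.le
    -- the unit vector opposite to the gradient
    set k : E3 := !₂[-(g 0) / r, -(g 1) / r, -(g 2) / r] with hk
    have hkn : ‖k‖ ≤ 1 := by
      refine (sq_le_one_iff₀ (norm_nonneg _)).1 (le_of_eq ?_)
      rw [norm_sq]
      simp only [hk]
      simp [div_pow]
      rw [hrr]
      unfold nsq
      unfold nsq at hpos
      field_simp
    have hdk : dot g (k - p) < 0 := by
      have h1 : dot g k = -r := by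
        simp only [hk, dot]
        simp
        field_simp
        rw [hrr]; unfold nsq; ring
      have h2 : dot g (k - p) = dot g k - dot g p := by simp [dot]; ring
      have h3 : |dot g p| < r := by
        rw [← hrr] at hlag
        exact abs_lt_of_sq_lt_sq hlag hr0.le
      rw [h2, h1]
      linarith [(abs_lt.1 h3).1]
    have hc : ∀ᶠ s : ℝ in 𝓝 0, dot (grad l (p + s • (k - p))) (k - p) < 0 := by
      have := ((continuous_segDeriv k).comp (f := fun s : ℝ => ((l, p), s)) (by fun_prop))
      refine (this.continuousAt (x := 0)).eventually (gt_mem_nhds ?_)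
      simpa using hdk
    obtain ⟨s₁, hs₁, hs⟩ := Metric.eventually_nhds_iff.1 hc
    set s₀ := min (s₁ / 2) 1 with hs₀
    have hs₀p : 0 < s₀ := by positivity
    have hs₀1 : s₀ ≤ 1 := min_le_right _ _
    have hs₀2 : s₀ < s₁ := (min_le_left _ _).trans_lt (by linarith)
    set q₀ : E3 := p + s₀ • (k - p) with hq₀
    have hqp : q₀ - p = s₀ • (k - p) := by simp [hq₀]
    have hq₀n : ‖q₀‖ ≤ 1 := by
      have := (convex_closedBall (0 : E3) 1).add_smul_sub_mem (x := p) (y := k) (by simpa using hp)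
        (by simpa using hkn) ⟨hs₀p.le, hs₀1⟩
      simpa using this
    have hneg : ∀ s ∈ Icc (0 : ℝ) 1, dot (grad l (p + s • (q₀ - p))) (q₀ - p) < 0 := by
      intro s hs'
      rw [hqp, smul_smul]
      have h1 := hs (y := s * s₀) (by
        rw [dist_zero_right, Real.norm_of_nonneg (mul_nonneg hs'.1 hs₀p.le)]
        nlinarith [hs'.2])
      have h2 : dot (grad l (p + (s * s₀) • (k - p))) (s₀ • (k - p))
        = s₀ * dot (grad l (p + (s * s₀) • (k - p))) (k - p) := by simp [dot]; ring
      rw [h2]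
      exact mul_neg_of_pos_of_neg hs₀p h1
    have hsp := segment_neg hp hq₀n hneg
    rw [hF] at hsp
    have hq₀neg : ‖q₀‖ ≤ 1 ∧ P82Def q₀ l < 0 := by simpa using hsp 1 ⟨one_pos, le_rfl⟩
    refine ⟨q₀, hq₀neg, ?_, ?_⟩
    · have hev := eventually_segDeriv hneg
      filter_upwards [hev] with x hx hxn
      apply JoinedIn.of_segment_subset
      rw [segment_eq_image']
      rintro _ ⟨s, hs', rfl⟩
      rcases hs'.1.eq_or_lt with h0 | h0
      · rw [← h0]
        simpa using hxn
      · have := segment_neg hxn.1 hq₀n hx s ⟨h0, hs'.2⟩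
        exact ⟨this.1, this.2.trans hxn.2⟩
    · have ht : Tendsto (fun s : ℝ => p + s • (q₀ - p)) (𝓝[>] 0) (𝓝 p) := by
        have : Continuous (fun s : ℝ => p + s • (q₀ - p)) := by fun_prop
        have h := this.tendsto 0
        simp only [zero_smul, add_zero] at h
        exact h.mono_left nhdsWithin_le_nhds
      refine mem_closure_of_tendsto ht ?_
      filter_upwards [Ioc_mem_nhdsGT (zero_lt_one' ℝ)] with s hs'
      exact hsp s hs'

lemma not_joinedIn_of_sep {N W W' : Set E3} (hW : IsOpen W) (hW' : IsOpen W')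
    (hd : Disjoint W W') (hN : N ⊆ W ∪ W') {x y : E3} (hx : x ∈ W) (hy : y ∈ W') :
    ¬ JoinedIn N x y := by
  rintro ⟨γ, hγ⟩
  have hpre : IsPreconnected (range γ) := isPreconnected_range γ.continuous
  obtain ⟨z, -, hz⟩ := hpre W W' hW hW' (by rintro _ ⟨t, rfl⟩; exact hN (hγ t))
    ⟨x, ⟨0, γ.source⟩, hx⟩ ⟨y, ⟨1, γ.target⟩, hy⟩
  exact disjoint_left.1 hd hz.1 hz.2

lemma eventually_joinedIn {l : E8} {x y : E3} (h : JoinedIn (neg l) x y) :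
    ∀ᶠ m in 𝓝 l, JoinedIn (neg m) x y := by
  obtain ⟨γ, hγ⟩ := h
  have := eventually_pos (isCompact_range γ.continuous) (Φ := fun x : E8 × E3 => -P82Def x.2 x.1)
    continuous_F.neg (l := l) (by
      rintro _ ⟨t, rfl⟩
      simpa using (hγ t).2)
  filter_upwards [this] with m hm
  refine ⟨γ, fun t => ⟨(hγ t).1, ?_⟩⟩
  simpa using hm _ ⟨t, rfl⟩

/-- The path component of `q` in the negative region. -/
def cls (l : E8) (q : E3) : Set E3 := {p | JoinedIn (neg l) q p}

lemma closure_neg_subset (l : E8) : closure (neg l) ⊆ {p | ‖p‖ ≤ 1 ∧ P82Def p l ≤ 0} := by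
  apply closure_minimal
  · exact fun p hp => ⟨hp.1, hp.2.le⟩
  · exact (isClosed_le continuous_norm continuous_const).inter
      (isClosed_le (continuous_F_right l) continuous_const)

lemma cls_subset (l : E8) (q : E3) : cls l q ⊆ neg l := fun _ h => h.target_mem

lemma disjoint_closure {l : E8} (hl : Good l) (q : E3) :
    Disjoint (closure (cls l q)) (closure (neg l \ cls l q)) := by
  rw [disjoint_left]
  intro p hp hp'
  have h0 := closure_neg_subset l (closure_mono (cls_subset l q) hp)
  obtain ⟨q₀, -, h, -⟩ := local_join hl h0.1 h0.2
  have h' : ∀ᶠ y in 𝓝 p, y ∈ neg l → JoinedIn (neg l) y q₀ :=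
    (Continuous.prodMk_right l).continuousAt.eventually h
  obtain ⟨y, hy, hyc⟩ := (mem_closure_iff_frequently.1 hp).and_eventually h' |>.exists
  obtain ⟨y', hy', hyc'⟩ := (mem_closure_iff_frequently.1 hp').and_eventually h' |>.exists
  exact hy'.2 ((hy.trans (hyc (cls_subset l q hy))).trans (hyc' hy'.1).symm)

lemma mem_closure_or {l : E8} (hl : Good l) (q : E3) {p : E3} (hp : ‖p‖ ≤ 1)
    (hF : P82Def p l ≤ 0) : p ∈ closure (cls l q) ∨ p ∈ closure (neg l \ cls l q) := by
  obtain ⟨-, -, -, h⟩ := local_join hl hp hF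
  rw [← mem_union, ← closure_union, union_sdiff_cancel (cls_subset l q)]
  exact h

lemma isCompact_closure_of_subset_neg {l : E8} {A : Set E3} (h : A ⊆ neg l) :
    IsCompact (closure A) :=
  (isCompact_closedBall (0 : E3) 1).of_isClosed_subset isClosed_closure fun p hp => by
    simpa using (closure_neg_subset l (closure_mono h hp)).1

/-- The two base points lie in the same path component of the negative region. -/
def Conn (l : E8) : Prop := JoinedIn (neg l) q₁ q₂

lemma conn_locally_const {l : E8} (hl : Good l) : ∀ᶠ m in 𝓝 l, (Conn m ↔ Conn l) := by
  by_cases hc : Conn l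
  · filter_upwards [eventually_joinedIn hc] with m hm
    exact ⟨fun _ => hc, fun _ => hm⟩
  · have hq1 : q₁ ∈ neg l := ⟨norm_q₁, hl.neg1⟩
    have hq2 : q₂ ∈ neg l := ⟨norm_q₂, hl.neg2⟩
    obtain ⟨W, W', hW, hW', hAW, hBW, hd⟩ := SeparatedNhds.of_isCompact_isCompact
      (isCompact_closure_of_subset_neg (cls_subset l q₁))
      (isCompact_closure_of_subset_neg (sdiff_subset : neg l \ cls l q₁ ⊆ neg l))
      (disjoint_closure hl q₁)
    have hK : IsCompact (Metric.closedBall (0 : E3) 1 \ (W ∪ W')) :=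
      (isCompact_closedBall _ _).diff (hW.union hW')
    have := eventually_pos hK (Φ := fun x : E8 × E3 => P82Def x.2 x.1) continuous_F (l := l) (by
      rintro p ⟨hp, hpW⟩
      by_contra! hF
      rcases mem_closure_or hl q₁ (by simpa using hp) hF with h | h
      · exact hpW (Or.inl (hAW h))
      · exact hpW (Or.inr (hBW h)))
    filter_upwards [this] with m hm
    refine ⟨fun hcm => absurd hcm ?_, fun h => absurd h hc⟩
    refine not_joinedIn_of_sep hW hW' hd ?_ (hAW (subset_closure (JoinedIn.refl hq1)))
      (hBW (subset_closure ⟨hq2, hc⟩))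
    intro p hp
    by_contra hpW
    exact absurd hp.2 (not_lt.2 (hm p ⟨by simpa using hp.1, hpW⟩).le)

/-- The negative region has a component compactly contained in the open unit ball. -/
def Sph (l : E8) : Prop := ∃ W : Set E3, IsOpen W ∧ closure W ⊆ Metric.ball 0 1 ∧
  (∀ p ∈ frontier W, 0 < P82Def p l) ∧ ∃ q ∈ W, P82Def q l < 0

/-- A zero of `F` on the unit sphere is a limit of negative points of the sphere. -/
lemma sphere_approx {l : E8} (hl : Good l) {p : E3} (hp : ‖p‖ = 1) (hF : P82Def p l = 0) :
    ∃ᶠ y in 𝓝 p, y ∈ neg l ∧ ‖y‖ = 1 := by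
  have hlag := hl.lag p hp.le hF
  set g := grad l p with hg
  -- the negative of the tangential part of the gradient
  set w : E3 := !₂[dot g p * p 0 - g 0, dot g p * p 1 - g 1, dot g p * p 2 - g 2] with hw
  have hp2 : p 0 ^ 2 + p 1 ^ 2 + p 2 ^ 2 = 1 := by rw [← norm_sq, hp]; norm_num
  have hgw : dot g w < 0 := by
    have : dot g w = dot g p ^ 2 - nsq g := by
      simp [dot, nsq, hw]; ring
    rw [this]; linarith
  have hpw : dot p w = 0 := by
    have : dot p w = dot g p * (p 0 ^ 2 + p 1 ^ 2 + p 2 ^ 2) - dot g p := by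
      simp [dot, hw]; ring
    rw [this, hp2]; ring
  -- move along the sphere
  set c : ℝ → E3 := fun s => (Real.sqrt (1 + s ^ 2 * ‖w‖ ^ 2))⁻¹ • (p + s • w) with hcdef
  have hcn : ∀ s, ‖c s‖ = 1 := by
    intro s
    have h1 : ‖p + s • w‖ ^ 2 = 1 + s ^ 2 * ‖w‖ ^ 2 := by
      rw [norm_sq, norm_sq]
      unfold dot at hpw
      simp
      linear_combination hp2 + 2 * s * hpw
    have h2 : ‖p + s • w‖ = Real.sqrt (1 + s ^ 2 * ‖w‖ ^ 2) := by
      rw [← h1, Real.sqrt_sq (norm_nonneg _)]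
    have h3 : 0 < Real.sqrt (1 + s ^ 2 * ‖w‖ ^ 2) := Real.sqrt_pos.2 (by positivity)
    rw [hcdef]
    simp only [norm_smul, h2, norm_inv, Real.norm_of_nonneg h3.le]
    exact inv_mul_cancel₀ h3.ne'
  have hcd : HasDerivAt c w 0 := by
    have hs : HasDerivAt (fun s : ℝ => (Real.sqrt (1 + s ^ 2 * ‖w‖ ^ 2))⁻¹) 0 0 := by
      have h1 : HasDerivAt (fun s : ℝ => 1 + s ^ 2 * ‖w‖ ^ 2) 0 0 := by
        have := (((hasDerivAt_id (0 : ℝ)).pow 2).mul_const (‖w‖ ^ 2)).const_add 1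
        simpa using this
      exact ((h1.sqrt (by norm_num)).inv (by norm_num)).congr_deriv (by simp)
    have h3 : HasDerivAt (fun s : ℝ => p + s • w) w 0 := by
      simpa using ((hasDerivAt_id (0 : ℝ)).smul_const w).const_add p
    exact (hs.smul h3).congr_deriv (by simp)
  have hc0 : c 0 = p := by simp [hcdef]
  have hFd : HasDerivAt (fun s => P82Def (c s) l) (dot g w) 0 := by
    have h1 := hasFDerivAt_F l (c 0)
    have := h1.comp_hasDerivAt 0 hcd
    refine this.congr_deriv ?_
    rw [hc0]
    simp [dot, hg]
  have hev : ∀ᶠ s in 𝓝[>] (0 : ℝ), P82Def (c s) l < 0 := by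
    have := (hasDerivAt_iff_tendsto_slope_zero.1 hFd).mono_left
      (nhdsWithin_mono 0 (fun x (hx : x ∈ Ioi (0 : ℝ)) => ne_of_gt hx))
    filter_upwards [this.eventually (gt_mem_nhds hgw), self_mem_nhdsWithin] with s hs hs0
    simp only [zero_add, hc0, hF, sub_zero, smul_eq_mul] at hs
    have hs0 : 0 < s := hs0
    by_contra! hcon
    have : 0 ≤ s⁻¹ * P82Def (c s) l := mul_nonneg (by positivity) hcon
    linarith
  have ht : Tendsto c (𝓝[>] 0) (𝓝 p) := by
    have := hcd.continuousAt.tendsto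
    rw [hc0] at this
    exact this.mono_left nhdsWithin_le_nhds
  exact ht.frequently (hev.mono fun s hs => ⟨⟨(hcn s).le, hs⟩, hcn s⟩).frequently

lemma reach_sphere {l : E8} (hl : Good l) (hS : ¬ Sph l) {q : E3} (hq : q ∈ neg l) :
    ∃ y, ‖y‖ = 1 ∧ JoinedIn (neg l) q y := by
  by_contra! hcon
  have hA : closure (cls l q) ⊆ Metric.ball 0 1 \ closure (neg l \ cls l q) := by
    intro p hp
    refine ⟨?_, disjoint_left.1 (disjoint_closure hl q) hp⟩
    have h0 := closure_neg_subset l (closure_mono (cls_subset l q) hp)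
    rw [mem_ball_zero_iff]
    refine lt_of_le_of_ne h0.1 fun h1 => ?_
    obtain ⟨q₀, -, h, -⟩ := local_join hl h0.1 h0.2
    have h' : ∀ᶠ y in 𝓝 p, y ∈ neg l → JoinedIn (neg l) y q₀ :=
      (Continuous.prodMk_right l).continuousAt.eventually h
    obtain ⟨y, hy, hyc⟩ := (mem_closure_iff_frequently.1 hp).and_eventually h' |>.exists
    have hqq₀ : JoinedIn (neg l) q q₀ := hy.trans (hyc (cls_subset l q hy))
    rcases h0.2.lt_or_eq with hF | hF
    · exact hcon p h1 (hqq₀.trans (h'.self_of_nhds ⟨h0.1, hF⟩).symm)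
    · obtain ⟨y', hy', hyc'⟩ := (sphere_approx hl h1 hF).and_eventually h' |>.exists
      exact hcon y' hy'.2 (hqq₀.trans (hyc' hy'.1).symm)
  obtain ⟨W, hW, hAW, hWO, -⟩ := exists_open_between_and_isCompact_closure
    (isCompact_closure_of_subset_neg (cls_subset l q))
    (Metric.isOpen_ball.sdiff isClosed_closure) hA
  refine hS ⟨W, hW, fun p hp => (hWO hp).1, ?_, q, hAW (subset_closure (JoinedIn.refl hq)), hq.2⟩
  intro p hp
  by_contra! hF
  rw [hW.frontier_eq] at hp
  have hp1 := hWO hp.1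
  rcases mem_closure_or hl q (by simpa using (mem_ball_zero_iff.1 hp1.1).le) hF with h | h
  · exact hp.2 (hAW h)
  · exact hp1.2 h

lemma not_reach_of_sph {l : E8} {W : Set E3} (hW : IsOpen W) (hWb : closure W ⊆ Metric.ball 0 1)
    (hWf : ∀ p ∈ frontier W, 0 < P82Def p l) {q : E3} (hq : q ∈ W) {y : E3} (hy : ‖y‖ = 1) :
    ¬ JoinedIn (neg l) q y := by
  refine not_joinedIn_of_sep hW isClosed_closure.isOpen_compl (disjoint_compl_right.mono_left
    subset_closure) ?_ hq (fun h => ?_)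
  · intro p hp
    by_cases hpW : p ∈ W
    · exact Or.inl hpW
    · refine Or.inr fun h => ?_
      have := hWf p (by rw [hW.frontier_eq]; exact ⟨h, hpW⟩)
      exact absurd hp.2 (not_lt.2 this.le)
  · have := hWb h
    rw [mem_ball_zero_iff, hy] at this
    exact lt_irrefl _ this

lemma sph_locally_const {l : E8} (hl : Good l) : ∀ᶠ m in 𝓝 l, (Sph m ↔ Sph l) := by
  by_cases hS : Sph l
  · obtain ⟨W, hW, hWb, hWf, q, hq, hqF⟩ := id hS
    have hfc : IsCompact (frontier W) :=
      (isCompact_closedBall (0 : E3) 1).of_isClosed_subset isClosed_frontier fun p hp =>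
        Metric.ball_subset_closedBall (hWb (frontier_subset_closure hp))
    have h1 := eventually_pos hfc (Φ := fun x : E8 × E3 => P82Def x.2 x.1) continuous_F hWf
    have h2 := eventually_pos (isCompact_singleton (x := q))
      (Φ := fun x : E8 × E3 => -P82Def x.2 x.1) continuous_F.neg (l := l) (by simpa using hqF)
    filter_upwards [h1, h2] with m hm hm2
    exact ⟨fun _ => hS, fun _ => ⟨W, hW, hWb, hm, q, hq, by simpa using hm2⟩⟩
  · have key : ∀ᶠ m in 𝓝 l, ∀ p ∈ Metric.closedBall (0 : E3) 1,
        p ∈ neg m → ∃ y, ‖y‖ = 1 ∧ JoinedIn (neg m) p y := by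
      apply (isCompact_closedBall (0 : E3) 1).eventually_forall_of_forall_eventually
        (P := fun (m : E8) (p : E3) => p ∈ neg m → ∃ y, ‖y‖ = 1 ∧ JoinedIn (neg m) p y)
      intro p hp
      rcases lt_or_ge 0 (P82Def p l) with hF | hF
      · have : ∀ᶠ x in 𝓝 (l, p), 0 < P82Def x.2 x.1 :=
          continuous_F.continuousAt.eventually (lt_mem_nhds hF)
        filter_upwards [this] with x hx hxn
        exact absurd hxn.2 (not_lt.2 hx.le)
      · obtain ⟨q₀, hq₀, h, -⟩ := local_join hl (by simpa using hp) hF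
        obtain ⟨y, hy, hqy⟩ := reach_sphere hl hS hq₀
        have h2 : ∀ᶠ x in 𝓝 (l, p), JoinedIn (neg x.1) q₀ y :=
          continuousAt_fst.eventually (eventually_joinedIn hqy)
        filter_upwards [h, h2] with x hx hx2 hxn
        exact ⟨y, hy, (hx hxn).trans hx2⟩
    filter_upwards [key] with m hm
    refine ⟨?_, fun h => absurd h hS⟩
    rintro ⟨W, hW, hWb, hWf, q, hq, hqF⟩
    have hq1 := hWb (subset_closure hq)
    obtain ⟨y, hy, hqy⟩ := hm q (Metric.ball_subset_closedBall hq1)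
      ⟨(mem_ball_zero_iff.1 hq1).le, hqF⟩
    exact absurd hqy (not_reach_of_sph hW hWb hWf hq hy)

/-! ### Counting isolated solutions -/

/-- A family of closed sets in a fixed compact set all of whose points are isolated and continue
uniquely along the parameter has locally constant cardinality. -/
lemma encard_locally_const {X Y : Type*} [TopologicalSpace X] [TopologicalSpace Y] [T2Space Y]
    {U : Set X} {C : Set Y} (hC : IsCompact C) {Z : X → Set Y} {u : X} (hu : u ∈ U)
    (hZC : ∀ x ∈ U, Z x ⊆ C)
    (hcl : ∀ y ∉ Z u, ∀ᶠ v in 𝓝 (u, y), v.1 ∈ U → v.2 ∉ Z v.1)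
    (hloc : ∀ y ∈ Z u, ∃ g : X → Y, Tendsto g (𝓝 u) (𝓝 y) ∧
      ∀ᶠ v in 𝓝 (u, y), (v.2 ∈ Z v.1 ↔ g v.1 = v.2)) :
    ∀ᶠ x in 𝓝[U] u, (Z x).encard = (Z u).encard := by
  have hslice : ∀ {P : X × Y → Prop} (y : Y), (∀ᶠ v in 𝓝 (u, y), P v) → ∀ᶠ y' in 𝓝 y, P (u, y') :=
    fun y h => (Continuous.prodMk_right u).continuousAt.eventually h
  have hfin : (Z u).Finite := by
    have : (Z u ∩ C).Finite := by
      refine hC.induction_on (p := fun s => (Z u ∩ s).Finite) (by simp)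
        (fun s t hst ht => ht.subset (inter_subset_inter_right _ hst))
        (fun s t hs ht => by rw [inter_union_distrib_left]; exact hs.union ht) ?_
      intro y _
      by_cases hy : y ∈ Z u
      · obtain ⟨g, -, hg⟩ := hloc y hy
        refine ⟨{y' | y' ∈ Z u ↔ g u = y'}, mem_nhdsWithin_of_mem_nhds (hslice y hg), ?_⟩
        refine (finite_singleton (g u)).subset ?_
        rintro y' ⟨h1, h2⟩
        exact (h2.1 h1).symm
      · refine ⟨{y' | u ∈ U → y' ∉ Z u}, mem_nhdsWithin_of_mem_nhds (hslice y (hcl y hy)), ?_⟩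
        refine finite_empty.subset ?_
        rintro y' ⟨h1, h2⟩
        exact h2 hu h1
    rwa [inter_eq_left.2 (hZC u hu)] at this
  have hloc' : ∀ y, ∃ g : X → Y, y ∈ Z u → (Tendsto g (𝓝 u) (𝓝 y) ∧
      ∀ᶠ v in 𝓝 (u, y), (v.2 ∈ Z v.1 ↔ g v.1 = v.2)) := by
    intro y
    by_cases hy : y ∈ Z u
    · obtain ⟨g, hg⟩ := hloc y hy
      exact ⟨g, fun _ => hg⟩
    · exact ⟨fun _ => y, fun h => absurd h hy⟩
  choose g hgg using hloc'
  have hgt := fun y hy => (hgg y hy).1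
  have hg := fun y hy => (hgg y hy).2
  have h1 : ∀ᶠ x in 𝓝 u, ∀ y ∈ Z u, g y x ∈ Z x := by
    rw [eventually_all_finite hfin]
    intro y hy
    have : Tendsto (fun x => (x, g y x)) (𝓝 u) (𝓝 (u, y)) := by
      rw [nhds_prod_eq]; exact tendsto_id.prodMk (hgt y hy)
    filter_upwards [this.eventually (hg y hy)] with x hx
    exact hx.2 rfl
  have h2 : ∀ᶠ x in 𝓝 u, ∀ y ∈ Z u, ∀ y' ∈ Z u, y ≠ y' → g y x ≠ g y' x := by
    rw [eventually_all_finite hfin]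
    intro y hy
    rw [eventually_all_finite hfin]
    intro y' hy'
    by_cases hne : y = y'
    · exact Eventually.of_forall fun x h => absurd hne h
    · exact (((hgt y hy).prodMk_nhds (hgt y' hy')).eventually
        (isClosed_diagonal.isOpen_compl.mem_nhds hne)).mono fun x hx _ => hx
  have h3 : ∀ᶠ x in 𝓝 u, ∀ c ∈ C, x ∈ U → c ∈ Z x → ∃ y ∈ Z u, g y x = c := by
    apply hC.eventually_forall_of_forall_eventually
      (P := fun x c => x ∈ U → c ∈ Z x → ∃ y ∈ Z u, g y x = c)
    intro y _
    by_cases hy : y ∈ Z u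
    · filter_upwards [hg y hy] with v hv _ hvZ
      exact ⟨y, hy, hv.1 hvZ⟩
    · filter_upwards [hcl y hy] with v hv hvU hvZ
      exact absurd hvZ (hv hvU)
  filter_upwards [h1.filter_mono nhdsWithin_le_nhds, h2.filter_mono nhdsWithin_le_nhds,
    h3.filter_mono nhdsWithin_le_nhds, self_mem_nhdsWithin] with x hx1 hx2 hx3 hxU
  have : Z x = (fun y => g y x) '' Z u := by
    ext c
    constructor
    · intro hc
      exact hx3 c (hZC x hxU hc) hxU hc
    · rintro ⟨y, hy, rfl⟩
      exact hx1 y hy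
  rw [this]
  exact InjOn.encard_image fun y hy y' hy' h => by
    by_contra hne
    exact hx2 y hy y' hy' hne h

/-! ### Lines in the zero level and their elliptic type -/

/-- The determinant of the vectors `d, a, b`. -/
noncomputable def br (d : E3) (a b : Fin 3 → ℝ) : ℝ :=
  d 0 * (a 1 * b 2 - a 2 * b 1) + d 1 * (a 2 * b 0 - a 0 * b 2) + d 2 * (a 0 * b 1 - a 1 * b 0)

/-- The (unit speed, based at the foot of the perpendicular from the origin) line `p + ℝd` lies in
the zero level of `F(·, l)`. -/
def IsLine (l : E8) (x : E3 × E3) : Prop :=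
  ‖x.2‖ = 1 ∧ dot x.1 x.2 = 0 ∧ ∀ s : ℝ, P82Def (x.1 + s • x.2) l = 0

/-- The resultant of the two quadratic polynomials which are the components, in the plane
orthogonal to `d`, of the gradient along the line `p + sd`. A line is elliptic in Segre's sense
when it is negative. -/
noncomputable def Res (l : E8) (p d : E3) : ℝ :=
  br d (grad l p) (grad₂ l d) ^ 2
    - br d (grad l p) (grad₁ l p d) * br d (grad₁ l p d) (grad₂ l d)

/-- The oriented elliptic lines. -/
def Ell (l : E8) : Set (E3 × E3) := {x | IsLine l x ∧ Res l x.1 x.2 < 0}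

/-- The oriented elliptic lines whose direction is on the oval of the cubic curve at infinity. -/
def EllO (l : E8) : Set (E3 × E3) :=
  {x | IsLine l x ∧ Res l x.1 x.2 < 0 ∧ 0 < x.2 0 * x.2 1 ∧ 0 < x.2 0 * x.2 2}

lemma F_line (l : E8) (p d : E3) (s : ℝ) : P82Def (p + s • d) l =
    (s - 1) * (s + 1) * (s - 2) / 2 * P82Def (p + (0 : ℝ) • d) l
      - s * (s + 1) * (s - 2) / 2 * P82Def (p + (1 : ℝ) • d) l
      - s * (s - 1) * (s - 2) / 6 * P82Def (p + (-1 : ℝ) • d) l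
      + s * (s - 1) * (s + 1) / 6 * P82Def (p + (2 : ℝ) • d) l := by
  simp [P82Def]; ring

lemma line_dot {l : E8} {x : E3 × E3} (h : IsLine l x) :
    dot (grad l x.1) x.2 = 0 ∧ dot (grad₁ l x.1 x.2) x.2 = 0 ∧ dot (grad₂ l x.2) x.2 = 0 := by
  obtain ⟨p, d⟩ := x
  have key : ∀ s : ℝ, dot (grad l p) d + s * dot (grad₁ l p d) d + s ^ 2 * dot (grad₂ l d) d = 0 := by
    intro s
    have h1 := hasDerivAt_line l p d s
    have h2 : (fun s : ℝ => P82Def (p + s • d) l) = fun _ => 0 := funext h.2.2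
    rw [h2] at h1
    have h3 := h1.unique (hasDerivAt_const s (0 : ℝ))
    simp only [dot, grad_line] at h3 ⊢
    linear_combination h3
  have h0 := key 0
  have h1 := key 1
  have h2 := key (-1)
  refine ⟨by linarith, ?_, ?_⟩ <;> dsimp only <;> linarith

/-- Expansion of a scalar product in the orthogonal frame `b, d × b, d`. -/
lemma orth_expand {d : E3} (hd : ‖d‖ = 1) {b : Fin 3 → ℝ} (hb : dot b d = 0) (a : Fin 3 → ℝ)
    (v : E3) : nsq b * dot a v = (a 0 * b 0 + a 1 * b 1 + a 2 * b 2) * dot b v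
      + br d b a * br d b v + nsq b * dot a d * dot v d := by
  have h1 : d 0 ^ 2 + d 1 ^ 2 + d 2 ^ 2 = 1 := by rw [← norm_sq, hd]; norm_num
  have : (nsq b * (d 0 ^ 2 + d 1 ^ 2 + d 2 ^ 2) - dot b d ^ 2) * dot a v
      = (a 0 * b 0 + a 1 * b 1 + a 2 * b 2) * dot b v * (d 0 ^ 2 + d 1 ^ 2 + d 2 ^ 2)
      + nsq b * dot a d * dot v d
      - dot b d * ((a 0 * b 0 + a 1 * b 1 + a 2 * b 2) * dot v d + dot a d * dot b v)
      + br d b a * br d b v := by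
    simp only [nsq, dot, br]; ring
  rw [h1, hb] at this
  linarith

lemma orth_zero {d : E3} (hd : ‖d‖ = 1) {b : Fin 3 → ℝ} (hb : dot b d = 0) (hb0 : b ≠ 0)
    {v : E3} (h1 : dot b v = 0) (h2 : br d b v = 0) (h3 : dot v d = 0) : v = 0 := by
  have := orth_expand hd hb v v
  rw [h1, h2, h3] at this
  have h4 : dot v v = 0 := by
    have := nsq_pos hb0
    nlinarith
  have h5 : ‖v‖ ^ 2 = 0 := by rw [norm_sq]; unfold dot at h4; linarith
  simpa using h5

/-- The discriminant of the quadratic polynomial `⟨grad (p + sd), grad₂⟩` in `s`. -/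
noncomputable def dsc (l : E8) (p d : E3) : ℝ :=
  (grad₁ l p d 0 * grad₂ l d 0 + grad₁ l p d 1 * grad₂ l d 1 + grad₁ l p d 2 * grad₂ l d 2) ^ 2
    - 4 * (grad l p 0 * grad₂ l d 0 + grad l p 1 * grad₂ l d 1 + grad l p 2 * grad₂ l d 2)
      * nsq (grad₂ l d)

/-- Expression of the resultant through the components along `c` and `d × c`. -/
lemma res_expand (d : E3) (a b c : Fin 3 → ℝ) (hc : dot c d = 0) :
    nsq c * (br d a c ^ 2 - br d a b * br d b c) = nsq c * br d c a ^ 2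
      - (b 0 * c 0 + b 1 * c 1 + b 2 * c 2) * br d c a * br d c b
      + (a 0 * c 0 + a 1 * c 1 + a 2 * c 2) * br d c b ^ 2 := by
  have h1 : (a 0 * c 0 + a 1 * c 1 + a 2 * c 2) * br d c b
      - (b 0 * c 0 + b 1 * c 1 + b 2 * c 2) * br d c a = nsq c * br d a b
        - dot c d * (a 0 * (b 1 * c 2 - b 2 * c 1) + a 1 * (b 2 * c 0 - b 0 * c 2)
          + a 2 * (b 0 * c 1 - b 1 * c 0)) := by
    simp only [nsq, br, dot]; ring
  rw [hc] at h1
  have h2 : br d a c = - br d c a := by simp only [br]; ring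
  have h3 : br d b c = - br d c b := by simp only [br]; ring
  rw [h2, h3]
  linear_combination -br d c b * h1

lemma dsc_nonneg {l : E8} {x : E3 × E3} (h : IsLine l x) (hR : Res l x.1 x.2 < 0) :
    0 ≤ dsc l x.1 x.2 := by
  obtain ⟨p, d⟩ := x
  have h1 := res_expand d (grad l p) (grad₁ l p d) (grad₂ l d) (line_dot h).2.2
  simp only [Res] at hR
  by_contra! hneg
  simp only [dsc] at hneg
  have hn : 0 ≤ nsq (grad₂ l d) := by unfold nsq; positivity
  have hn' : 0 < nsq (grad₂ l d) := by
    refine lt_of_le_of_ne hn fun h0 => ?_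
    rw [← h0] at hneg
    nlinarith [sq_nonneg (grad₁ l p d 0 * grad₂ l d 0 + grad₁ l p d 1 * grad₂ l d 1
      + grad₁ l p d 2 * grad₂ l d 2)]
  have h2 : nsq (grad₂ l d) * (br d (grad l p) (grad₂ l d) ^ 2
    - br d (grad l p) (grad₁ l p d) * br d (grad₁ l p d) (grad₂ l d)) < 0 :=
    mul_neg_of_pos_of_neg hn' hR
  rw [h1] at h2
  generalize nsq (grad₂ l d) = N at *
  generalize br d (grad₂ l d) (grad l p) = B0 at *
  generalize br d (grad₂ l d) (grad₁ l p d) = B1 at *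
  generalize grad₁ l p d 0 * grad₂ l d 0 + grad₁ l p d 1 * grad₂ l d 1
      + grad₁ l p d 2 * grad₂ l d 2 = A1 at *
  generalize grad l p 0 * grad₂ l d 0 + grad l p 1 * grad₂ l d 1
      + grad l p 2 * grad₂ l d 2 = A0 at *
  have h3 : 4 * N * (N * B0 ^ 2 - A1 * B0 * B1 + A0 * B1 ^ 2)
    = (2 * N * B0 - A1 * B1) ^ 2 + (4 * A0 * N - A1 ^ 2) * B1 ^ 2 := by ring
  have h4 : 4 * N * (N * B0 ^ 2 - A1 * B0 * B1 + A0 * B1 ^ 2) < 0 :=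
    mul_neg_of_pos_of_neg (by linarith) h2
  rw [h3] at h4
  nlinarith [sq_nonneg (2 * N * B0 - A1 * B1), mul_nonneg (by linarith : 0 ≤ 4 * A0 * N - A1 ^ 2)
    (sq_nonneg B1)]

/-- A degenerate limit of elliptic lines would carry a singular point. -/
lemma res_ne_zero {l : E8} (hl : Good l) {x : E3 × E3} (h : IsLine l x)
    (hD : 0 ≤ dsc l x.1 x.2) : Res l x.1 x.2 ≠ 0 := by
  obtain ⟨p, d⟩ := x
  intro hR
  obtain ⟨e0, e1, e2⟩ := line_dot h
  have h1 := res_expand d (grad l p) (grad₁ l p d) (grad₂ l d) e2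
  simp only [Res] at hR
  rw [hR, mul_zero] at h1
  have hg2 := hl.g2 d h.1
  have hn' : 0 < nsq (grad₂ l d) := nsq_pos hg2
  simp only [dsc] at hD
  -- no real zero of the gradient along the line
  have hno : ∀ s : ℝ, ¬ (nsq (grad₂ l d) * s ^ 2 + (grad₁ l p d 0 * grad₂ l d 0
      + grad₁ l p d 1 * grad₂ l d 1 + grad₁ l p d 2 * grad₂ l d 2) * s
      + (grad l p 0 * grad₂ l d 0 + grad l p 1 * grad₂ l d 1 + grad l p 2 * grad₂ l d 2) = 0 ∧
      br d (grad₂ l d) (grad l p) + s * br d (grad₂ l d) (grad₁ l p d) = 0) := by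
    rintro s ⟨hA, hB⟩
    apply hl.ns (p + s • d) (h.2.2 s)
    set v : E3 := WithLp.toLp 2 (grad l (p + s • d)) with hv
    have hv0 : v = 0 := by
      apply orth_zero h.1 e2 hg2
      · simp only [dot, hv, grad_line]
        unfold nsq at hA
        linear_combination hA
      · simp only [br, hv, grad_line]
        simp only [br] at hB
        linear_combination hB
      · simp only [dot, hv, grad_line]
        simp only [dot] at e0 e1 e2
        linear_combination e0 + s * e1 + s ^ 2 * e2
    funext i
    have := congrArg (fun w : E3 => w i) hv0
    simpa [hv] using this
  generalize nsq (grad₂ l d) = N at *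
  generalize br d (grad₂ l d) (grad l p) = B0 at *
  generalize br d (grad₂ l d) (grad₁ l p d) = B1 at *
  generalize grad₁ l p d 0 * grad₂ l d 0 + grad₁ l p d 1 * grad₂ l d 1
      + grad₁ l p d 2 * grad₂ l d 2 = A1 at *
  generalize grad l p 0 * grad₂ l d 0 + grad l p 1 * grad₂ l d 1
      + grad l p 2 * grad₂ l d 2 = A0 at *
  by_cases hB1 : B1 = 0
  · subst hB1
    have hB0 : B0 = 0 := by
      have : N * B0 ^ 2 = 0 := by linarith
      rcases mul_eq_zero.1 this with h0 | h0
      · exact absurd h0 hn'.ne'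
      · exact pow_eq_zero_iff (by norm_num) |>.1 h0
    obtain ⟨s, hs⟩ := exists_quadratic_eq_zero (a := N) (b := A1) (c := A0) hn'.ne'
      ⟨Real.sqrt (A1 ^ 2 - 4 * A0 * N), by
        rw [Real.mul_self_sqrt hD, discrim]; ring⟩
    exact hno s ⟨by linarith, by rw [hB0]; ring⟩
  · refine hno (-B0 / B1) ⟨?_, by field_simp; ring⟩
    field_simp
    linarith

/-! ### Continuation of elliptic lines along the parameter -/

/-- The six equations defining a line of the zero level. -/
noncomputable def Phi (v : E8 × (E3 × E3)) : Fin 6 → ℝ :=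
  ![P82Def (v.2.1 + (0 : ℝ) • v.2.2) v.1, P82Def (v.2.1 + (1 : ℝ) • v.2.2) v.1,
    P82Def (v.2.1 + (-1 : ℝ) • v.2.2) v.1, P82Def (v.2.1 + (2 : ℝ) • v.2.2) v.1,
    v.2.2 0 ^ 2 + v.2.2 1 ^ 2 + v.2.2 2 ^ 2 - 1, dot v.2.1 v.2.2]

lemma norm_eq_one_iff (d : E3) : ‖d‖ = 1 ↔ d 0 ^ 2 + d 1 ^ 2 + d 2 ^ 2 - 1 = 0 := by
  rw [← norm_sq]
  constructor
  · intro h; rw [h]; norm_num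
  · intro h
    exact (pow_eq_one_iff_of_nonneg (norm_nonneg d) (by norm_num)).1 (by linarith : ‖d‖ ^ 2 = 1)

lemma Phi_eq_zero_iff (v : E8 × (E3 × E3)) : Phi v = 0 ↔ IsLine v.1 v.2 := by
  obtain ⟨l, p, d⟩ := v
  constructor
  · intro h
    have h0 := congrFun h 0
    have h1 := congrFun h 1
    have h2 := congrFun h 2
    have h3 := congrFun h 3
    have h4 := congrFun h 4
    have h5 := congrFun h 5
    simp only [Phi, Matrix.cons_val, Pi.zero_apply] at h0 h1 h2 h3 h4 h5
    refine ⟨(norm_eq_one_iff d).2 h4, h5, fun s => ?_⟩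
    dsimp only
    rw [F_line, h0, h1, h2, h3]
    ring
  · rintro ⟨h4, h5, h⟩
    have h4 := (norm_eq_one_iff d).1 h4
    dsimp only at h h5
    funext i
    fin_cases i
    · exact h 0
    · exact h 1
    · exact h (-1)
    · exact h 2
    · exact h4
    · exact h5

lemma contDiff_Phi : ContDiff ℝ 1 Phi := by
  rw [contDiff_pi]
  intro i
  have hF : ∀ s : ℝ, ContDiff ℝ 1 (fun v : E8 × (E3 × E3) => P82Def (v.2.1 + s • v.2.2) v.1) := by
    intro s
    unfold P82Def
    simp only [PiLp.add_apply, PiLp.smul_apply]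
    fun_prop
  fin_cases i
  · exact hF 0
  · exact hF 1
  · exact hF (-1)
  · exact hF 2
  · show ContDiff ℝ 1 (fun v : E8 × (E3 × E3) => v.2.2 0 ^ 2 + v.2.2 1 ^ 2 + v.2.2 2 ^ 2 - 1)
    fun_prop
  · show ContDiff ℝ 1 (fun v : E8 × (E3 × E3) =>
      v.2.1 0 * v.2.2 0 + v.2.1 1 * v.2.2 1 + v.2.1 2 * v.2.2 2)
    fun_prop

lemma line_curve (p d p' d' : E3) (s t : ℝ) :
    p + t • p' + s • (d + t • d') = p + s • d + t • (p' + s • d') := by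
  ext i
  simp
  ring

/-- Linearisation of the line equations. -/
lemma Phi_kernel {l : E8} {p d p' d' : E3}
    (h : fderiv ℝ Phi (l, (p, d)) (0, (p', d')) = 0) :
    (∀ s ∈ ({0, 1, -1, 2} : Set ℝ), dot (grad l (p + s • d)) (p' + s • d') = 0) ∧
      d 0 * d' 0 + d 1 * d' 1 + d 2 * d' 2 = 0 ∧
      dot p d' + dot p' d = 0 := by
  have h1 : HasDerivAt (fun t : ℝ => ((l, (p, d)) : E8 × (E3 × E3)) + t • (0, (p', d')))
      ((0, (p', d')) : E8 × (E3 × E3)) 0 := by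
    have := ((hasDerivAt_id (0 : ℝ)).smul_const ((0, (p', d')) : E8 × (E3 × E3))).const_add (l, (p, d))
    exact this.congr_deriv (by simp)
  have h2 : HasFDerivAt Phi (fderiv ℝ Phi (l, (p, d)))
      (((l, (p, d)) : E8 × (E3 × E3)) + (0 : ℝ) • (0, (p', d'))) := by
    rw [zero_smul, add_zero]
    exact (contDiff_Phi.differentiable (by norm_num) _).hasFDerivAt
  have h3 := h2.comp_hasDerivAt (0 : ℝ) h1
  rw [h] at h3
  have h4 := fun i => (hasDerivAt_pi.1 h3) i
  have hF : ∀ s : ℝ, HasDerivAt (fun t : ℝ => P82Def (p + t • p' + s • (d + t • d')) l) 0 0 →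
      dot (grad l (p + s • d)) (p' + s • d') = 0 := by
    intro s hs
    have h5 := hasDerivAt_line l (p + s • d) (p' + s • d') 0
    rw [zero_smul, add_zero] at h5
    have e : (fun t : ℝ => P82Def (p + t • p' + s • (d + t • d')) l)
        = fun t : ℝ => P82Def (p + s • d + t • (p' + s • d')) l :=
      funext fun t => by rw [line_curve p d p' d' s t]
    rw [e] at hs
    exact h5.unique hs
  have e : ∀ t : ℝ, ((l, (p, d)) : E8 × (E3 × E3)) + t • (0, (p', d'))
      = (l, (p + t • p', d + t • d')) := fun t => by simp
  simp only [Function.comp_def, e] at h4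
  refine ⟨?_, ?_, ?_⟩
  · intro s hs
    rcases hs with rfl | rfl | rfl | rfl
    · exact hF _ (h4 0)
    · exact hF _ (h4 1)
    · exact hF _ (h4 2)
    · exact hF _ (h4 3)
  · have h5 : HasDerivAt (fun t : ℝ => (d 0 + t * d' 0) ^ 2 + (d 1 + t * d' 1) ^ 2
        + (d 2 + t * d' 2) ^ 2 - 1) 0 0 := by simpa [Phi] using h4 4
    have hx : ∀ a b : ℝ, HasDerivAt (fun t : ℝ => (a + t * b) ^ 2) (2 * a * b) 0 := by
      intro a b
      exact ((((hasDerivAt_id (0 : ℝ)).mul_const b).const_add a).pow 2).congr_deriv (by simp)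
    have h6 := (((hx (d 0) (d' 0)).add (hx (d 1) (d' 1))).add (hx (d 2) (d' 2))).sub_const 1
    have := h6.unique h5
    linarith
  · have h5 : HasDerivAt (fun t : ℝ => (p 0 + t * p' 0) * (d 0 + t * d' 0)
        + (p 1 + t * p' 1) * (d 1 + t * d' 1) + (p 2 + t * p' 2) * (d 2 + t * d' 2)) 0 0 := by
      simpa [Phi, dot] using h4 5
    have hx : ∀ a b a' b' : ℝ, HasDerivAt (fun t : ℝ => (a + t * b) * (a' + t * b'))
        (a * b' + b * a') 0 := by
      intro a b a' b'
      exact ((((hasDerivAt_id (0 : ℝ)).mul_const b).const_add a).mul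
        (((hasDerivAt_id (0 : ℝ)).mul_const b').const_add a')).congr_deriv (by simp; ring)
    have h6 := ((hx (p 0) (p' 0) (d 0) (d' 0)).add (hx (p 1) (p' 1) (d 1) (d' 1))).add
      (hx (p 2) (p' 2) (d 2) (d' 2))
    have := h6.unique h5
    simp only [dot]
    linarith

lemma Phi_injective {l : E8} {p d p' d' : E3} (hL : IsLine l (p, d)) (hR : Res l p d ≠ 0)
    (hg : grad₂ l d ≠ 0) (h : fderiv ℝ Phi (l, (p, d)) (0, (p', d')) = 0) :
    p' = 0 ∧ d' = 0 := by
  obtain ⟨h1, h2, h3⟩ := Phi_kernel h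
  have k0 := h1 0 (by simp)
  have k1 := h1 1 (by simp)
  have k2 := h1 (-1) (by simp)
  have k3 := h1 2 (by simp)
  obtain ⟨e0, e1, e2⟩ := line_dot hL
  have hd := hL.1
  have hn := nsq_pos hg
  dsimp only at e0 e1 e2 hd
  have ex : ∀ s : ℝ, dot (grad l (p + s • d)) (p' + s • d') = dot (grad l p) p'
      + s * (dot (grad₁ l p d) p' + dot (grad l p) d') + s ^ 2 * (dot (grad₂ l d) p'
      + dot (grad₁ l p d) d') + s ^ 3 * dot (grad₂ l d) d' := by
    intro s
    simp only [dot, grad_line, PiLp.add_apply, PiLp.smul_apply, smul_eq_mul]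
    ring
  rw [ex] at k0 k1 k2 k3
  have m0 : dot (grad l p) p' = 0 := by linarith
  have m1 : dot (grad₁ l p d) p' + dot (grad l p) d' = 0 := by linarith
  have m2 : dot (grad₂ l d) p' + dot (grad₁ l p d) d' = 0 := by linarith
  have m3 : dot (grad₂ l d) d' = 0 := by linarith
  have x0p := orth_expand hd e2 (grad l p) p'
  have x0d := orth_expand hd e2 (grad l p) d'
  have x1p := orth_expand hd e2 (grad₁ l p d) p'
  have x1d := orth_expand hd e2 (grad₁ l p d) d'
  have hres := res_expand d (grad l p) (grad₁ l p d) (grad₂ l d) e2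
  rw [e0] at x0p x0d
  rw [e1] at x1p x1d
  rw [m3] at x0d x1d
  have hR' : br d (grad l p) (grad₂ l d) ^ 2
    - br d (grad l p) (grad₁ l p d) * br d (grad₁ l p d) (grad₂ l d) ≠ 0 := hR
  have key : dot (grad₂ l d) p' = 0 ∧ br d (grad₂ l d) p' = 0 ∧ br d (grad₂ l d) d' = 0 := by
    generalize nsq (grad₂ l d) = N at *
    generalize br d (grad₂ l d) (grad l p) = B0 at *
    generalize br d (grad₂ l d) (grad₁ l p d) = B1 at *
    generalize grad₁ l p d 0 * grad₂ l d 0 + grad₁ l p d 1 * grad₂ l d 1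
        + grad₁ l p d 2 * grad₂ l d 2 = A1 at *
    generalize grad l p 0 * grad₂ l d 0 + grad l p 1 * grad₂ l d 1
        + grad l p 2 * grad₂ l d 2 = A0 at *
    generalize br d (grad l p) (grad₂ l d) ^ 2
      - br d (grad l p) (grad₁ l p d) * br d (grad₁ l p d) (grad₂ l d) = R at *
    generalize br d (grad₂ l d) p' = P2 at *
    generalize br d (grad₂ l d) d' = D2 at *
    generalize dot (grad₂ l d) p' = P1 at *
    generalize dot (grad l p) p' = u1 at *
    generalize dot (grad l p) d' = u2 at *
    generalize dot (grad₁ l p d) p' = u3 at *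
    generalize dot (grad₁ l p d) d' = u4 at *
    have n0 : A0 * P1 + B0 * P2 = 0 := by linear_combination N * m0 - x0p
    have n1 : A1 * P1 + B1 * P2 + B0 * D2 = 0 := by linear_combination N * m1 - x1p - x0d
    have n2 : N * P1 + B1 * D2 = 0 := by linear_combination N * m2 - x1d
    have hNR : N * R ≠ 0 := mul_ne_zero hn.ne' hR'
    have hD2 : (N * R) * D2 = 0 := by
      rw [hres]
      linear_combination B0 * (N * n1 - A1 * n2) - N * B1 * n0 + A0 * B1 * n2
    have hD2 : D2 = 0 := (mul_eq_zero.1 hD2).resolve_left hNR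
    have hP1 : P1 = 0 := by
      rw [hD2, mul_zero, add_zero] at n2
      exact (mul_eq_zero.1 n2).resolve_left hn.ne'
    rw [hP1, hD2] at n1
    rw [hP1] at n0
    refine ⟨hP1, ?_, hD2⟩
    by_contra hP2
    have hB0 : B0 = 0 := by
      have : B0 * P2 = 0 := by linarith
      exact (mul_eq_zero.1 this).resolve_right hP2
    have hB1 : B1 = 0 := by
      have : B1 * P2 = 0 := by linarith
      exact (mul_eq_zero.1 this).resolve_right hP2
    apply hNR
    rw [hres, hB0, hB1]
    ring
  have hd' : d' = 0 := orth_zero hd e2 hg m3 key.2.2 (by simp only [dot]; linarith)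
  have hp' : p' = 0 := orth_zero hd e2 hg key.1 key.2.1 (by
    rw [hd'] at h3
    simp only [dot] at h3 ⊢
    simp at h3
    linarith)
  exact ⟨hp', hd'⟩

lemma Phi_invertible {l : E8} {x : E3 × E3} (hL : IsLine l x) (hR : Res l x.1 x.2 ≠ 0)
    (hg : grad₂ l x.2 ≠ 0) :
    (fderiv ℝ Phi (l, x) ∘L .inr ℝ E8 (E3 × E3)).IsInvertible := by
  obtain ⟨p, d⟩ := x
  set A := fderiv ℝ Phi (l, (p, d)) ∘L .inr ℝ E8 (E3 × E3) with hA
  have hinj : Function.Injective (A : E3 × E3 →ₗ[ℝ] (Fin 6 → ℝ)) := by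
    rw [← LinearMap.ker_eq_bot, LinearMap.ker_eq_bot']
    rintro ⟨p', d'⟩ h
    have h' : fderiv ℝ Phi (l, (p, d)) (0, (p', d')) = 0 := h
    obtain ⟨h1, h2⟩ := Phi_injective hL hR hg h'
    rw [h1, h2]
    rfl
  have hfr : Module.finrank ℝ (E3 × E3) = Module.finrank ℝ (Fin 6 → ℝ) := by
    rw [Module.finrank_prod]; simp
  refine ⟨(LinearEquiv.ofInjectiveOfFinrankEq (A : E3 × E3 →ₗ[ℝ] (Fin 6 → ℝ)) hinj hfr).toContinuousLinearEquiv, ?_⟩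
  exact ContinuousLinearMap.ext fun v => rfl

/-- A nondegenerate line continues uniquely along the parameter. -/
lemma line_continue {l : E8} {x : E3 × E3} (hL : IsLine l x) (hR : Res l x.1 x.2 ≠ 0)
    (hg : grad₂ l x.2 ≠ 0) : ∃ g : E8 → E3 × E3, Tendsto g (𝓝 l) (𝓝 x) ∧
      ∀ᶠ v in 𝓝 (l, x), (IsLine v.1 v.2 ↔ g v.1 = v.2) := by
  have cd : ContDiffAt ℝ 1 Phi (l, x) := contDiff_Phi.contDiffAt
  have hi := Phi_invertible hL hR hg
  have sd := cd.hasStrictFDerivAt (by norm_num)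
  refine ⟨_, sd.tendsto_implicitFunctionOfProdDomain hi, ?_⟩
  filter_upwards [sd.eventually_apply_eq_iff_implicitFunctionOfProdDomain hi] with v hv
  rw [← hv, ← Phi_eq_zero_iff v, (Phi_eq_zero_iff (l, x)).2 hL]

lemma isClosed_isLine : IsClosed {v : E8 × (E3 × E3) | IsLine v.1 v.2} := by
  have : {v : E8 × (E3 × E3) | IsLine v.1 v.2} = Phi ⁻¹' {0} := by
    ext v
    exact (Phi_eq_zero_iff v).symm
  rw [this]
  exact isClosed_singleton.preimage contDiff_Phi.continuous

lemma continuous_Res : Continuous (fun v : E8 × (E3 × E3) => Res v.1 v.2.1 v.2.2) := by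
  simp only [Res, br, grad, grad₁, grad₂, Matrix.cons_val]
  fun_prop

lemma continuous_dsc : Continuous (fun v : E8 × (E3 × E3) => dsc v.1 v.2.1 v.2.2) := by
  simp only [dsc, nsq, grad, grad₁, grad₂, Matrix.cons_val]
  fun_prop

lemma le_of_frequently {X : Type*} [TopologicalSpace X] {f g : X → ℝ} (hf : Continuous f)
    (hg : Continuous g) {a : X} (h : ∃ᶠ v in 𝓝 a, f v ≤ g v) : f a ≤ g a :=
  (isClosed_le hf hg).closure_subset (mem_closure_iff_frequently.2 h)

section

attribute [local irreducible] Res dsc IsLine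

lemma ell_closed {l : E8} (hl : Good l) {x : E3 × E3} (hx : x ∉ Ell l) :
    ∀ᶠ v in 𝓝 (l, x), v.2 ∉ Ell v.1 := by
  by_contra hcon
  rw [not_eventually] at hcon
  have hcon : ∃ᶠ v in 𝓝 (l, x), v.2 ∈ Ell v.1 := hcon.mono fun v hv => not_not.1 hv
  have h1 : IsLine l x := isClosed_isLine.closure_subset
    (mem_closure_iff_frequently.2 (hcon.mono fun v hv => hv.1))
  have h2 : Res l x.1 x.2 ≤ 0 :=
    le_of_frequently continuous_Res (continuous_const (y := 0)) (hcon.mono fun v hv => hv.2.le)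
  have h3 : 0 ≤ dsc l x.1 x.2 :=
    le_of_frequently (continuous_const (y := 0)) continuous_dsc
      (hcon.mono fun v hv => dsc_nonneg hv.1 hv.2)
  exact hx ⟨h1, lt_of_le_of_ne h2 (res_ne_zero hl h1 h3)⟩

end

lemma line_cubic {l : E8} {x : E3 × E3} (h : IsLine l x) :
    x.2 0 ^ 3 + (l 7 - 4) * (x.2 0 * x.2 1 * x.2 2) + x.2 1 ^ 2 * x.2 2 + x.2 1 * x.2 2 ^ 2 = 0 := by
  have := (line_dot h).2.2
  simp only [dot, grad₂, Matrix.cons_val] at this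
  linarith

/-- Directions on the oval stay away from the coordinate planes. -/
lemma oval_bound {x y z a : ℝ} (ha : |a| ≤ 1)
    (h : x ^ 3 + (a - 4) * (x * y * z) + y ^ 2 * z + y * z ^ 2 = 0) (hxy : 0 < x * y)
    (hxz : 0 < x * z) : (y + z) ^ 2 ≤ 25 * x ^ 2 ∧ 0 ≤ y * z := by
  obtain ⟨ha1, ha2⟩ := abs_le.1 ha
  have hx : x ≠ 0 := by rintro rfl; simp at hxy
  have hx2 : 0 < x ^ 2 := by positivity
  have hyz : 0 < y * z := by
    have : 0 < x ^ 2 * (y * z) := by nlinarith [mul_pos hxy hxz]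
    exact (mul_pos_iff_of_pos_left hx2).1 this
  refine ⟨?_, hyz.le⟩
  have hs : 0 < x * (y + z) := by nlinarith
  have h1 : x * (y + z) * (y * z) = (4 - a) * x ^ 2 * (y * z) - x ^ 4 := by
    linear_combination x * h
  have h2 : x * (y + z) * (y * z) ≤ 5 * x ^ 2 * (y * z) := by
    nlinarith [mul_pos hx2 hyz, sq_nonneg (x ^ 2)]
  have h3 : x * (y + z) ≤ 5 * x ^ 2 := le_of_mul_le_mul_right h2 hyz
  have h4 : (x * (y + z)) ^ 2 ≤ (5 * x ^ 2) ^ 2 := pow_le_pow_left₀ hs.le h3 2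
  have h5 : x ^ 2 * (y + z) ^ 2 ≤ x ^ 2 * (25 * x ^ 2) := by nlinarith
  exact le_of_mul_le_mul_left h5 hx2

lemma ellO_closed {l : E8} (hl : Good l) {x : E3 × E3} (hx : x ∉ EllO l) :
    ∀ᶠ v in 𝓝 (l, x), Good v.1 → v.2 ∉ EllO v.1 := by
  by_contra hcon
  rw [not_eventually] at hcon
  push Not at hcon
  have hE : x ∈ Ell l := by
    by_contra hne
    obtain ⟨v, ⟨-, h1⟩, h2⟩ := (hcon.and_eventually (ell_closed hl hne)).exists
    exact h2 ⟨h1.1, h1.2.1⟩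
  have hc : ∀ {f g : E8 × (E3 × E3) → ℝ}, Continuous f → Continuous g →
      (∀ v : E8 × (E3 × E3), Good v.1 → v.2 ∈ EllO v.1 → f v ≤ g v) → f (l, x) ≤ g (l, x) := by
    intro f g hf hg h
    exact le_of_frequently hf hg (hcon.mono fun v hv => h v hv.1 hv.2)
  have b1 : 0 ≤ x.2 0 * x.2 1 := hc (f := fun _ => 0) (g := fun v => v.2.2 0 * v.2.2 1)
    (by fun_prop) (by fun_prop) fun v _ hv => hv.2.2.1.le
  have b2 : 0 ≤ x.2 0 * x.2 2 := hc (f := fun _ => 0) (g := fun v => v.2.2 0 * v.2.2 2)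
    (by fun_prop) (by fun_prop) fun v _ hv => hv.2.2.2.le
  have b3 : 0 ≤ x.2 1 * x.2 2 := hc (f := fun _ => 0) (g := fun v => v.2.2 1 * v.2.2 2)
    (by fun_prop) (by fun_prop) fun v hg hv =>
      (oval_bound hg.small (line_cubic hv.1) hv.2.2.1 hv.2.2.2).2
  have b4 : (x.2 1 + x.2 2) ^ 2 ≤ 25 * x.2 0 ^ 2 := hc
    (f := fun v => (v.2.2 1 + v.2.2 2) ^ 2) (g := fun v => 25 * v.2.2 0 ^ 2)
    (by fun_prop) (by fun_prop) fun v hg hv =>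
      (oval_bound hg.small (line_cubic hv.1) hv.2.2.1 hv.2.2.2).1
  have hcub := line_cubic hE.1
  have hnorm := (norm_eq_one_iff _).1 hE.1.1
  have hx0 : x.2 0 ≠ 0 := by
    intro h0
    rw [h0] at b4 hnorm
    nlinarith [sq_nonneg (x.2 1), sq_nonneg (x.2 2)]
  have hx3 : x.2 0 ^ 3 ≠ 0 := pow_ne_zero _ hx0
  have hy0 : x.2 1 ≠ 0 := by
    intro h0
    rw [h0] at hcub
    apply hx3; linarith
  have hz0 : x.2 2 ≠ 0 := by
    intro h0
    rw [h0] at hcub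
    apply hx3; linarith
  exact hx ⟨hE.1, hE.2, lt_of_le_of_ne b1 (mul_ne_zero hx0 hy0).symm,
    lt_of_le_of_ne b2 (mul_ne_zero hx0 hz0).symm⟩

lemma ell_subset {l : E8} (hl : Good l) :
    Ell l ⊆ Metric.closedBall (0 : E3) 1 ×ˢ Metric.sphere (0 : E3) 1 := by
  rintro ⟨p, d⟩ ⟨⟨h1, h2, h3⟩, -⟩
  refine ⟨?_, ?_⟩
  · simpa using (hl.line p d h1 h2 h3).le
  · simpa using h1

lemma isCompact_ball_sphere :
    IsCompact (Metric.closedBall (0 : E3) 1 ×ˢ Metric.sphere (0 : E3) 1) :=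
  (isCompact_closedBall _ _).prod (isCompact_sphere _ _)

lemma ell_locally_const {l : E8} (hl : Good l) :
    ∀ᶠ m in 𝓝[{m | Good m}] l, (Ell m).encard = (Ell l).encard := by
  refine encard_locally_const isCompact_ball_sphere hl (fun m hm => ell_subset hm)
    (fun y hy => (ell_closed hl hy).mono fun v hv _ => hv) ?_
  intro y hy
  obtain ⟨g, hg, h⟩ := line_continue hy.1 hy.2.ne (hl.g2 _ hy.1.1)
  refine ⟨g, hg, ?_⟩
  filter_upwards [h, continuous_Res.continuousAt.eventually (gt_mem_nhds hy.2)] with v h1 h2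
  rw [← h1]
  exact ⟨fun h => h.1, fun h => ⟨h, h2⟩⟩

lemma ellO_locally_const {l : E8} (hl : Good l) :
    ∀ᶠ m in 𝓝[{m | Good m}] l, (EllO m).encard = (EllO l).encard := by
  refine encard_locally_const isCompact_ball_sphere hl
    (fun m hm x hx => ell_subset hm ⟨hx.1, hx.2.1⟩)
    (fun y hy => ellO_closed hl hy) ?_
  intro y hy
  obtain ⟨g, hg, h⟩ := line_continue hy.1 hy.2.1.ne (hl.g2 _ hy.1.1)
  refine ⟨g, hg, ?_⟩
  have c1 : Continuous (fun v : E8 × (E3 × E3) => v.2.2 0 * v.2.2 1) := by fun_prop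
  have c2 : Continuous (fun v : E8 × (E3 × E3) => v.2.2 0 * v.2.2 2) := by fun_prop
  filter_upwards [h, continuous_Res.continuousAt.eventually (gt_mem_nhds hy.2.1),
    c1.continuousAt.eventually (lt_mem_nhds hy.2.2.1),
    c2.continuousAt.eventually (lt_mem_nhds hy.2.2.2)] with v h1 h2 h3 h4
  rw [← h1]
  exact ⟨fun h => h.1, fun h => ⟨h, h2, h3, h4⟩⟩

/-! ### Lines for a five-parameter subfamily -/

/-- The parameters for which
`F = x³ + u x + k + y (z² + z (y - 4 x + c) + d x + e)`. -/
noncomputable def fam (k u c d e : ℝ) : E8 := !₂[k, u, e, 0, d, 0, c, 0]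

lemma F_fam (k u c d e : ℝ) (p : E3) : P82Def p (fam k u c d e) =
    p 0 ^ 3 + u * p 0 + k + p 1 * (p 2 ^ 2 + p 2 * (p 1 - 4 * p 0 + c) + d * p 0 + e) := by
  simp [P82Def, fam]; ring

lemma grad_fam (k u c d e : ℝ) (p : E3) : grad (fam k u c d e) p =
    ![3 * p 0 ^ 2 + u + p 1 * (d - 4 * p 2),
      p 2 ^ 2 + p 2 * (p 1 - 4 * p 0 + c) + d * p 0 + e + p 1 * p 2,
      p 1 * (2 * p 2 + (p 1 - 4 * p 0 + c))] := by
  funext i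
  fin_cases i <;> simp [grad, fam] <;> ring

/-- The discriminant in `ζ` of the cubic form at `(t, 1, ζ)`. -/
noncomputable def GA (t : ℝ) : ℝ := (1 - 4 * t) ^ 2 - 4 * t ^ 3

/-- In the plane `x = a + ts`, `y = s`, where `a` is a root of `x³ + ux + k`, the function `F / y` is
quadratic in `z` with discriminant `GA s² + 2 GB s + GC`. -/
noncomputable def GB (c d a t : ℝ) : ℝ := (c - 4 * a) * (1 - 4 * t) - 2 * d * t - 6 * a * t ^ 2

/-- The constant coefficient of the discriminant described at `GB`. -/
noncomputable def GC (u c d e a t : ℝ) : ℝ :=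
  (c - 4 * a) ^ 2 - 4 * (e + d * a) - 4 * (3 * a ^ 2 + u) * t

/-- A quarter of the derivative in `t` of `GB² - GA GC`. -/
noncomputable def GD (u c d e a t : ℝ) : ℝ :=
  (3 * a ^ 2 + u) * GA t - (6 * a * t + 2 * (c - 4 * a) + d) * GB c d a t
    + (3 * t ^ 2 + 2 - 8 * t) * GC u c d e a t

/-- Pairs `(a, t)` such that there are elliptic lines through `(a, 0, *)` of direction
`(t, 1, *)`. -/
def TT (k u c d e : ℝ) : Set (ℝ × ℝ) :=
  {y | y.1 ^ 3 + u * y.1 + k = 0 ∧ 0 ≤ GA y.2 ∧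
    GB c d y.1 y.2 ^ 2 - GA y.2 * GC u c d e y.1 y.2 = 0 ∧
    (3 * y.1 ^ 2 + u) * GD u c d e y.1 y.2 < 0}

lemma br_of_orth {d : E3} {a b : Fin 3 → ℝ} (ha : dot a d = 0) (hb : dot b d = 0) :
    br d a b * d 1 = (d 0 ^ 2 + d 1 ^ 2 + d 2 ^ 2) * (a 2 * b 0 - a 0 * b 2) := by
  simp only [dot] at ha hb
  simp only [br]
  linear_combination (b 2 * d 0 - b 0 * d 2) * ha + (a 0 * d 2 - a 2 * d 0) * hb

lemma grad_add (l : E8) (p d : E3) (s : ℝ) :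
    grad l (p + s • d) = fun i => grad l p i + s * grad₁ l p d i + s ^ 2 * grad₂ l d i :=
  funext fun i => grad_line l p d s i

lemma grad₁_add (l : E8) (p d : E3) (s : ℝ) :
    grad₁ l (p + s • d) d = fun i => grad₁ l p d i + 2 * s * grad₂ l d i := by
  funext i
  fin_cases i <;> simp [grad₁, grad₂] <;> ring

lemma Res_add (l : E8) (p d : E3) (s : ℝ) : Res l (p + s • d) d = Res l p d := by
  simp only [Res, grad_add, grad₁_add, br]
  ring

lemma grad₁_smul (l : E8) (p d : E3) (s : ℝ) (i : Fin 3) :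
    grad₁ l p (s • d) i = s * grad₁ l p d i := by
  fin_cases i <;> simp [grad₁] <;> ring

lemma grad₂_smul (l : E8) (d : E3) (s : ℝ) (i : Fin 3) :
    grad₂ l (s • d) i = s ^ 2 * grad₂ l d i := by
  fin_cases i <;> simp [grad₂] <;> ring

lemma Res_smul (l : E8) (p d : E3) (s : ℝ) : Res l p (s • d) = s ^ 6 * Res l p d := by
  simp only [Res, br, grad₁_smul, grad₂_smul, PiLp.smul_apply, smul_eq_mul]
  ring

/-- The resultant for an unnormalised line. -/
lemma Res_fam {k u c d e a t z ζ : ℝ}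
    (h : ∀ s : ℝ, P82Def (!₂[a, 0, z] + s • !₂[t, 1, ζ] : E3) (fam k u c d e) = 0) :
    Res (fam k u c d e) !₂[a, 0, z] !₂[t, 1, ζ] = (t ^ 2 + 1 + ζ ^ 2) ^ 2 *
      ((3 * a ^ 2 + u) * ((3 * a ^ 2 + u) * (2 * ζ + 1 - 4 * t) ^ 2
        - (6 * a * t - 4 * z + d) * (2 * z + (c - 4 * a)) * (2 * ζ + 1 - 4 * t)
        + (3 * t ^ 2 - 4 * ζ) * (2 * z + (c - 4 * a)) ^ 2)) := by
  have key : ∀ s : ℝ, dot (grad (fam k u c d e) !₂[a, 0, z]) !₂[t, 1, ζ]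
      + s * dot (grad₁ (fam k u c d e) !₂[a, 0, z] !₂[t, 1, ζ]) !₂[t, 1, ζ]
      + s ^ 2 * dot (grad₂ (fam k u c d e) !₂[t, 1, ζ]) !₂[t, 1, ζ] = 0 := by
    intro s
    have h1 := hasDerivAt_line (fam k u c d e) !₂[a, 0, z] !₂[t, 1, ζ] s
    rw [funext h] at h1
    have h3 := h1.unique (hasDerivAt_const s (0 : ℝ))
    simp only [dot, grad_line] at h3 ⊢
    linear_combination h3
  have h0 := key 0
  have h1 := key 1
  have h2 := key (-1)
  have b01 := br_of_orth (by linarith : dot (grad (fam k u c d e) !₂[a, 0, z]) !₂[t, 1, ζ] = 0)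
    (by linarith : dot (grad₁ (fam k u c d e) !₂[a, 0, z] !₂[t, 1, ζ]) !₂[t, 1, ζ] = 0)
  have b02 := br_of_orth (by linarith : dot (grad (fam k u c d e) !₂[a, 0, z]) !₂[t, 1, ζ] = 0)
    (by linarith : dot (grad₂ (fam k u c d e) !₂[t, 1, ζ]) !₂[t, 1, ζ] = 0)
  have b12 := br_of_orth
    (by linarith : dot (grad₁ (fam k u c d e) !₂[a, 0, z] !₂[t, 1, ζ]) !₂[t, 1, ζ] = 0)
    (by linarith : dot (grad₂ (fam k u c d e) !₂[t, 1, ζ]) !₂[t, 1, ζ] = 0)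
  have e1 : (!₂[t, 1, ζ] : E3) 1 = 1 := rfl
  rw [e1, mul_one] at b01 b02 b12
  rw [Res, b01, b02, b12]
  simp [grad, grad₁, grad₂, fam]
  ring

lemma line_iff {k u c d e a t z ζ : ℝ} :
    (∀ s : ℝ, P82Def (!₂[a, 0, z] + s • !₂[t, 1, ζ] : E3) (fam k u c d e) = 0) ↔
      a ^ 3 + u * a + k = 0 ∧ (2 * ζ + 1 - 4 * t) ^ 2 = GA t ∧
      (2 * ζ + 1 - 4 * t) * (2 * z + (c - 4 * a)) = GB c d a t ∧
      (2 * z + (c - 4 * a)) ^ 2 = GC u c d e a t := by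
  have ex : ∀ s : ℝ, P82Def (!₂[a, 0, z] + s • !₂[t, 1, ζ] : E3) (fam k u c d e)
      = (a ^ 3 + u * a + k) + s / 4 * ((2 * z + (c - 4 * a)) ^ 2 - GC u c d e a t)
        + s ^ 2 / 2 * ((2 * ζ + 1 - 4 * t) * (2 * z + (c - 4 * a)) - GB c d a t)
        + s ^ 3 / 4 * ((2 * ζ + 1 - 4 * t) ^ 2 - GA t) := by
    intro s
    rw [F_fam]
    simp [GA, GB, GC]
    ring
  simp only [ex]
  constructor
  · intro h
    have h0 := h 0
    have h1 := h 1
    have h2 := h (-1)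
    have h3 := h 2
    refine ⟨by linarith, by linarith, by linarith, by linarith⟩
  · rintro ⟨h0, h1, h2, h3⟩ s
    rw [h0, h1, h2, h3]
    ring

lemma Res_fam' {k u c d e a t z ζ : ℝ}
    (h : ∀ s : ℝ, P82Def (!₂[a, 0, z] + s • !₂[t, 1, ζ] : E3) (fam k u c d e) = 0) :
    Res (fam k u c d e) !₂[a, 0, z] !₂[t, 1, ζ] = (t ^ 2 + 1 + ζ ^ 2) ^ 2 *
      ((3 * a ^ 2 + u) * GD u c d e a t) := by
  rw [Res_fam h]
  obtain ⟨-, h1, h2, h3⟩ := line_iff.1 h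
  rw [GD, ← h1, ← h2, ← h3]
  ring

/-- The foot of the perpendicular from the origin to the line `P + ℝv`. -/
noncomputable def foot (P v : E3) : E3 := P + (-(dot P v / ‖v‖ ^ 2)) • v

lemma isLine_foot {l : E8} {P v : E3} {o : ℝ} (ho : o ^ 2 = 1) (hv : v ≠ 0)
    (h : ∀ s : ℝ, P82Def (P + s • v) l = 0) : IsLine l (foot P v, (o / ‖v‖) • v) := by
  have hN : ‖v‖ ≠ 0 := norm_ne_zero_iff.2 hv
  refine ⟨?_, ?_, fun s => ?_⟩
  · dsimp only
    rw [norm_smul, Real.norm_eq_abs, abs_div, abs_norm, div_mul_cancel₀ _ hN]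
    exact (pow_eq_one_iff_of_nonneg (abs_nonneg o) (by norm_num)).1 (by rw [sq_abs, ho] : |o| ^ 2 = 1)
  · have : dot (foot P v) ((o / ‖v‖) • v) = (o / ‖v‖) * (dot P v - dot P v / ‖v‖ ^ 2 * ‖v‖ ^ 2) := by
      have hn := norm_sq v
      have : dot (foot P v) ((o / ‖v‖) • v) = (o / ‖v‖) * (dot P v - dot P v / ‖v‖ ^ 2 *
          (v 0 ^ 2 + v 1 ^ 2 + v 2 ^ 2)) := by
        simp [dot, foot]
        ring
      rw [this, ← hn]
    dsimp only
    rw [this, div_mul_cancel₀ _ (pow_ne_zero _ hN)]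
    ring
  · dsimp only
    rw [foot, smul_smul, add_assoc, ← add_smul]
    exact h _

lemma Res_foot (l : E8) (P v : E3) (r : ℝ) : Res l (foot P v) (r • v) = r ^ 6 * Res l P v := by
  rw [foot, Res_smul, Res_add]

/-- The elliptic line with data `(a, t)`, sign `σ` of the root and orientation `o`. -/
noncomputable def mk (c d : ℝ) (y : (ℝ × ℝ) × (ℝ × ℝ)) : E3 × E3 :=
  let S := y.2.1 * √(GA y.1.2)
  let v : E3 := !₂[y.1.2, 1, (S - 1 + 4 * y.1.2) / 2]
  let P : E3 := !₂[y.1.1, 0, (GB c d y.1.1 y.1.2 / S - (c - 4 * y.1.1)) / 2]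
  (foot P v, (y.2.2 / ‖v‖) • v)

/-- Signs. -/
def pm : Set ℝ := {1, -1}

lemma pm_sq {o : ℝ} (h : o ∈ pm) : o ^ 2 = 1 := by
  rcases h with rfl | h
  · norm_num
  · rw [mem_singleton_iff.1 h]; norm_num

lemma vec_ne (t ζ : ℝ) : (!₂[t, 1, ζ] : E3) ≠ 0 := by
  intro h
  have := congrArg (fun w : E3 => w 1) h
  simp at this

lemma mk_mem {k u c d e : ℝ} {y : ℝ × ℝ} (hy : y ∈ TT k u c d e) (hA : 0 < GA y.2) {σ o : ℝ}
    (hσ : σ ∈ pm) (ho : o ∈ pm) : mk c d (y, (σ, o)) ∈ Ell (fam k u c d e) ∧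
      (1 / 4 < y.2 → mk c d (y, (σ, o)) ∈ EllO (fam k u c d e)) := by
  obtain ⟨a, t⟩ := y
  obtain ⟨h1, -, h3, h4⟩ := hy
  dsimp only at h1 h3 h4 hA ⊢
  have hq := Real.sq_sqrt hA.le
  have hq0 := Real.sqrt_pos.2 hA
  have hσ2 := pm_sq hσ
  have ho2 := pm_sq ho
  have hS2 : (σ * √(GA t)) ^ 2 = GA t := by rw [mul_pow, hσ2, hq, one_mul]
  have hS : σ * √(GA t) ≠ 0 := by
    intro h; rw [h] at hS2; norm_num at hS2; exact hA.ne hS2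
  simp only [mk]
  set S := σ * √(GA t) with hSd
  have hL : ∀ s : ℝ, P82Def (!₂[a, 0, (GB c d a t / S - (c - 4 * a)) / 2]
      + s • !₂[t, 1, (S - 1 + 4 * t) / 2] : E3) (fam k u c d e) = 0 := by
    refine line_iff.2 ⟨h1, ?_, ?_, ?_⟩
    · rw [← hS2]; ring
    · field_simp; ring
    · have : (GB c d a t / S) ^ 2 = GC u c d e a t := by
        rw [div_pow, hS2, div_eq_iff hA.ne']; linarith
      rw [← this]; ring
  have hv := vec_ne t ((S - 1 + 4 * t) / 2)
  set v : E3 := !₂[t, 1, (S - 1 + 4 * t) / 2] with hvd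
  have hN : 0 < ‖v‖ := norm_pos_iff.2 hv
  have ho' : o / ‖v‖ ≠ 0 := by
    intro h
    rw [div_eq_zero_iff] at h
    rcases h with h | h
    · rw [h] at ho2; norm_num at ho2
    · exact hN.ne' h
  have hline := isLine_foot ho2 hv hL
  have hres : Res (fam k u c d e) (foot !₂[a, 0, (GB c d a t / S - (c - 4 * a)) / 2] v)
      ((o / ‖v‖) • v) < 0 := by
    rw [Res_foot, Res_fam' hL]
    have : 0 < (o / ‖v‖) ^ 6 := by positivity
    exact mul_neg_of_pos_of_neg this (mul_neg_of_pos_of_neg (by positivity) h4)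
  refine ⟨⟨hline, hres⟩, fun ht => ⟨hline, hres, ?_, ?_⟩⟩
  · have : ((o / ‖v‖) • v) 0 * ((o / ‖v‖) • v) 1 = (o / ‖v‖) ^ 2 * t := by
      simp [hvd]; ring
    dsimp only
    rw [this]
    positivity
  · have : ((o / ‖v‖) • v) 0 * ((o / ‖v‖) • v) 2 = (o / ‖v‖) ^ 2 * (t * ((S - 1 + 4 * t) / 2)) := by
      simp [hvd]; ring
    dsimp only
    rw [this]
    have h5 : S ^ 2 < (4 * t - 1) ^ 2 := by
      rw [hS2, GA]
      have : 0 < t ^ 3 := by positivity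
      nlinarith
    have h6 := (abs_lt.1 (abs_lt_of_sq_lt_sq h5 (by linarith))).1
    have h7 : 0 < (S - 1 + 4 * t) / 2 := by linarith
    positivity

lemma mk_injOn {k u c d e : ℝ} :
    InjOn (mk c d) ((TT k u c d e ∩ {y | 0 < GA y.2}) ×ˢ (pm ×ˢ pm)) := by
  rintro ⟨⟨a, t⟩, σ, o⟩ ⟨⟨-, hA⟩, hσ, ho⟩ ⟨⟨a', t'⟩, σ', o'⟩ ⟨⟨-, hA'⟩, hσ', ho'⟩ h
  simp only [mk, mem_ofPred_eq] at h hA hA' hσ hσ' ho ho'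
  have hq0 := Real.sqrt_pos.2 hA
  set S := σ * √(GA t) with hSd
  set S' := σ' * √(GA t') with hSd'
  have hv := vec_ne t ((S - 1 + 4 * t) / 2)
  have hv' := vec_ne t' ((S' - 1 + 4 * t') / 2)
  have hN := norm_pos_iff.2 hv
  have hN' := norm_pos_iff.2 hv'
  rw [Prod.mk.injEq] at h
  obtain ⟨hf, hd⟩ := h
  have hd0 := congrArg (fun w : E3 => w 0) hd
  have hd1 := congrArg (fun w : E3 => w 1) hd
  have hd2 := congrArg (fun w : E3 => w 2) hd
  have hf0 := congrArg (fun w : E3 => w 0) hf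
  have hf1 := congrArg (fun w : E3 => w 1) hf
  simp only [foot, PiLp.add_apply, PiLp.smul_apply, smul_eq_mul] at hd0 hd1 hd2 hf0 hf1
  simp only [Matrix.cons_val, mul_one, zero_add] at hd0 hd1 hd2 hf0 hf1
  have ho0 : o / ‖(!₂[t, 1, (S - 1 + 4 * t) / 2] : E3)‖ ≠ 0 := by
    have := pm_sq ho
    intro h
    rw [div_eq_zero_iff] at h
    rcases h with h | h
    · rw [h] at this; norm_num at this
    · exact hN.ne' h
  have hoo : o = o' := by
    rcases ho with rfl | ho <;> rcases ho' with rfl | ho'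
    · rfl
    · rw [mem_singleton_iff.1 ho'] at hd1
      have h1 : 0 < 1 / ‖(!₂[t, 1, (S - 1 + 4 * t) / 2] : E3)‖ := by positivity
      have h2 : 0 < 1 / ‖(!₂[t', 1, (S' - 1 + 4 * t') / 2] : E3)‖ := by positivity
      rw [neg_div] at hd1
      linarith
    · rw [mem_singleton_iff.1 ho] at hd1
      have h1 : 0 < 1 / ‖(!₂[t, 1, (S - 1 + 4 * t) / 2] : E3)‖ := by positivity
      have h2 : 0 < 1 / ‖(!₂[t', 1, (S' - 1 + 4 * t') / 2] : E3)‖ := by positivity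
      rw [neg_div] at hd1
      linarith
    · rw [mem_singleton_iff.1 ho, mem_singleton_iff.1 ho']
  rw [← hd1] at hd0 hd2
  have ht : t = t' := mul_left_cancel₀ ho0 hd0
  have hSS : S = S' := by
    have := mul_left_cancel₀ ho0 hd2
    rw [← ht] at this
    linarith
  have ha : a = a' := by
    rw [← ht] at hf0 hf1
    linear_combination hf0 - t * hf1
  have hσσ : σ = σ' := by
    rw [hSd, hSd', ← ht] at hSS
    exact mul_right_cancel₀ hq0.ne' hSS
  rw [ha, ht, hσσ, hoo]

lemma encard_pm : (pm ×ˢ pm : Set (ℝ × ℝ)).encard = 4 := by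
  have h : pm.encard = 2 := encard_pair (by norm_num)
  rw [encard_prod, h]
  norm_num

/-- Lower bound for the number of elliptic lines. -/
lemma le_ell {k u c d e : ℝ} {R : Set (ℝ × ℝ)} (hR : R ⊆ TT k u c d e)
    (hA : ∀ y ∈ R, 0 < GA y.2) :
    R.encard * 4 ≤ (Ell (fam k u c d e)).encard ∧
      ((∀ y ∈ R, 1 / 4 < y.2) → R.encard * 4 ≤ (EllO (fam k u c d e)).encard) := by
  have hsub : R ⊆ TT k u c d e ∩ {y | 0 < GA y.2} := fun y hy => ⟨hR hy, hA y hy⟩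
  have hinj : InjOn (mk c d) (R ×ˢ (pm ×ˢ pm)) :=
    mk_injOn.mono (Set.prod_mono hsub Subset.rfl)
  have hc : (mk c d '' (R ×ˢ (pm ×ˢ pm))).encard = R.encard * 4 := by
    rw [hinj.encard_image, encard_prod, encard_pm]
  rw [← hc]
  constructor
  · refine encard_le_encard ?_
    rintro _ ⟨⟨y, σ, o⟩, ⟨h1, h2, h3⟩, rfl⟩
    exact (mk_mem (hR h1) (hA _ h1) h2 h3).1
  · intro h
    refine encard_le_encard ?_
    rintro _ ⟨⟨y, σ, o⟩, ⟨h1, h2, h3⟩, rfl⟩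
    exact (mk_mem (hR h1) (hA _ h1) h2 h3).2 (h y h1)

lemma mk_surj {k u c d e : ℝ} {x : E3 × E3} (hx : x ∈ Ell (fam k u c d e)) :
    ∃ y ∈ TT k u c d e, 0 ≤ GC u c d e y.1 y.2 ∧ (x ∈ EllO (fam k u c d e) → 1 / 4 < y.2) ∧
      (0 < GA y.2 → ∃ w ∈ pm ×ˢ pm, mk c d (y, w) = x) := by
  obtain ⟨p, v⟩ := x
  obtain ⟨⟨hn, hpv, hL⟩, hR⟩ := hx
  dsimp only at hn hpv hL hR
  have hcub := line_cubic (l := fam k u c d e) (x := (p, v)) ⟨hn, hpv, hL⟩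
  have hl7 : (fam k u c d e) 7 = 0 := rfl
  rw [hl7] at hcub
  dsimp only at hcub
  have hns := (norm_eq_one_iff _).1 hn
  -- the lines at infinity of direction `(0, 0, ±1)` are hyperbolic
  have hv1 : v 1 ≠ 0 := by
    intro h0
    have h00 : v 0 = 0 := by
      rw [h0] at hcub
      exact pow_eq_zero_iff (n := 3) (by norm_num) |>.1 (by linarith)
    rw [h0, h00] at hns
    have hp1 : p 1 = 0 := by
      have e1 := hL 0
      have e2 := hL 1
      have e3 := hL (-1)
      rw [F_fam] at e1 e2 e3
      simp [h0, h00] at e1 e2 e3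
      have : p 1 * v 2 ^ 2 = 0 := by linarith
      rw [show v 2 ^ 2 = 1 by linarith] at this
      linarith
    have : Res (fam k u c d e) p v = (v 2 * (3 * p 0 ^ 2 + u)) ^ 2 * v 2 ^ 4 := by
      simp [Res, br, grad, grad₁, grad₂, fam, h0, h00, hp1]
      ring
    rw [this] at hR
    have : 0 ≤ (v 2 * (3 * p 0 ^ 2 + u)) ^ 2 * v 2 ^ 4 := by positivity
    linarith
  set t := v 0 / v 1 with ht
  set ζ := v 2 / v 1 with hζ
  set a := p 0 - t * p 1 with ha
  set z := p 2 - ζ * p 1 with hz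
  have hvw : v = v 1 • (!₂[t, 1, ζ] : E3) := by
    ext i
    fin_cases i
    · simp [ht]; field_simp
    · simp
    · simp [hζ]; field_simp
  have hpw : p = (!₂[a, 0, z] : E3) + p 1 • (!₂[t, 1, ζ] : E3) := by
    ext i
    fin_cases i <;> simp [ha, hz] <;> ring
  have hL' : ∀ s : ℝ, P82Def (!₂[a, 0, z] + s • !₂[t, 1, ζ] : E3) (fam k u c d e) = 0 := by
    intro s
    have h1 := hL ((s - p 1) / v 1)
    have h2 : p + ((s - p 1) / v 1) • v = (!₂[a, 0, z] + s • !₂[t, 1, ζ] : E3) := by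
      conv_lhs => rw [hvw, hpw]
      rw [smul_smul, add_assoc, ← add_smul]
      congr 2
      have : (!₂[a, 0, z] + p 1 • !₂[t, 1, ζ] : E3) 1 = p 1 := by simp
      have h' : (v 1 • !₂[t, 1, ζ] : E3) 1 = v 1 := by simp
      simp only [this, h']
      rw [div_mul_cancel₀ _ hv1]
      ring
    rwa [h2] at h1
  obtain ⟨h1, h2, h3, h4⟩ := line_iff.1 hL'
  have hR' : Res (fam k u c d e) !₂[a, 0, z] !₂[t, 1, ζ] < 0 := by
    rw [hvw, Res_smul, hpw, Res_add] at hR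
    by_contra! hcon
    have : 0 ≤ v 1 ^ 6 := by positivity
    nlinarith [mul_nonneg this hcon]
  rw [Res_fam' hL'] at hR'
  have hR'' : (3 * a ^ 2 + u) * GD u c d e a t < 0 := by
    by_contra! hcon
    have := mul_nonneg (by positivity : 0 ≤ (t ^ 2 + 1 + ζ ^ 2) ^ 2) hcon
    linarith
  refine ⟨(a, t), ⟨h1, ?_, ?_, hR''⟩, h4 ▸ sq_nonneg _, ?_, ?_⟩
  · show 0 ≤ GA t
    rw [← h2]; positivity
  · show GB c d a t ^ 2 - GA t * GC u c d e a t = 0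
    rw [← h2, ← h3, ← h4]; ring
  · rintro ⟨-, -, h5, h6⟩
    have hv2 : 0 < v 1 ^ 2 := by positivity
    have ht0 : 0 < t := by
      have : v 0 * v 1 = t * v 1 ^ 2 := by rw [ht]; field_simp
      dsimp only at h5
      rw [this] at h5
      exact (mul_pos_iff_of_pos_right hv2).1 h5
    have hζ0 : 0 < ζ := by
      have : v 0 * v 2 = t * ζ * v 1 ^ 2 := by rw [ht, hζ]; field_simp
      dsimp only at h6
      rw [this] at h6
      exact (mul_pos_iff_of_pos_left ht0).1 ((mul_pos_iff_of_pos_right hv2).1 h6)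
    show 1 / 4 < t
    by_contra! hcon
    have h7 : (2 * ζ + 1 - 4 * t) ^ 2 < (1 - 4 * t) ^ 2 := by
      rw [h2, GA]
      have : 0 < t ^ 3 := by positivity
      linarith
    have := (abs_lt.1 (abs_lt_of_sq_lt_sq h7 (by linarith))).2
    linarith
  · intro hA
    dsimp only at hA
    set S := 2 * ζ + 1 - 4 * t with hS
    have hS0 : S ≠ 0 := by
      intro h; rw [h] at h2; norm_num at h2; exact hA.ne h2
    have hsq : √(GA t) = |S| := by rw [← h2, Real.sqrt_sq_eq_abs]
    obtain ⟨σ, hσ, hσS⟩ : ∃ σ ∈ pm, σ * |S| = S := by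
      rcases abs_cases S with h | h
      · exact ⟨1, by simp [pm], by rw [h.1]; ring⟩
      · exact ⟨-1, by simp [pm], by rw [h.1]; ring⟩
    obtain ⟨o, ho, hov⟩ : ∃ o ∈ pm, o * |v 1| = v 1 := by
      rcases abs_cases (v 1) with h | h
      · exact ⟨1, by simp [pm], by rw [h.1]; ring⟩
      · exact ⟨-1, by simp [pm], by rw [h.1]; ring⟩
    refine ⟨(σ, o), ⟨hσ, ho⟩, ?_⟩
    have e1 : (S - 1 + 4 * t) / 2 = ζ := by rw [hS]; ring
    have e2 : (GB c d a t / S - (c - 4 * a)) / 2 = z := by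
      rw [← h3]; field_simp; ring
    have e3 : ‖(!₂[t, 1, ζ] : E3)‖ = |v 1|⁻¹ := by
      have : |v 1| * ‖(!₂[t, 1, ζ] : E3)‖ = 1 := by
        rw [← Real.norm_eq_abs, ← norm_smul, ← hvw, hn]
      exact eq_inv_of_mul_eq_one_right this
    simp only [mk]
    rw [hsq, hσS, e1, e2]
    have e4 : o / ‖(!₂[t, 1, ζ] : E3)‖ = v 1 := by rw [e3, div_inv_eq_mul, hov]
    have hw0 : ‖(!₂[t, 1, ζ] : E3)‖ ^ 2 ≠ 0 := pow_ne_zero _ (norm_ne_zero_iff.2 (vec_ne t ζ))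
    refine Prod.ext ?_ ?_
    · dsimp only
      have e5 : dot (!₂[a, 0, z] : E3) (!₂[t, 1, ζ] : E3) = -p 1 * ‖(!₂[t, 1, ζ] : E3)‖ ^ 2 := by
        have h8 : dot p (!₂[t, 1, ζ] : E3) = 0 := by
          have : v 1 * dot p (!₂[t, 1, ζ] : E3) = dot p v := by
            conv_rhs => rw [hvw]
            simp [dot]; ring
          rw [hpv] at this
          exact (mul_eq_zero.1 this).resolve_left hv1
        have h9 : dot p (!₂[t, 1, ζ] : E3) = dot (!₂[a, 0, z] : E3) (!₂[t, 1, ζ] : E3)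
            + p 1 * ‖(!₂[t, 1, ζ] : E3)‖ ^ 2 := by
          rw [norm_sq]
          simp [dot, ha, hz]; ring
        linarith
      rw [foot, e5, mul_div_assoc, div_self hw0, mul_one, neg_neg, ← hpw]
    · dsimp only
      rw [e4, ← hvw]

lemma ell_le {k u c d e : ℝ} {R : Set (ℝ × ℝ)} (hR : TT k u c d e ⊆ R)
    (hA : ∀ y ∈ R, 0 < GA y.2) : (Ell (fam k u c d e)).encard ≤ R.encard * 4 := by
  have : Ell (fam k u c d e) ⊆ mk c d '' (R ×ˢ (pm ×ˢ pm)) := by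
    intro x hx
    obtain ⟨y, hy, -, -, h⟩ := mk_surj hx
    obtain ⟨w, hw, rfl⟩ := h (hA y (hR hy))
    exact ⟨(y, w), ⟨hR hy, hw⟩, rfl⟩
  refine (encard_le_encard this).trans ((encard_image_le _ _).trans ?_)
  rw [encard_prod, encard_pm]

lemma ellO_le {k u c d e : ℝ} {R : Set (ℝ × ℝ)}
    (hR : ∀ y ∈ TT k u c d e, 0 ≤ GC u c d e y.1 y.2 → 1 / 4 < y.2 → y ∈ R)
    (hA : ∀ y ∈ R, 0 < GA y.2) : (EllO (fam k u c d e)).encard ≤ R.encard * 4 := by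
  have : EllO (fam k u c d e) ⊆ mk c d '' (R ×ˢ (pm ×ˢ pm)) := by
    intro x hx
    obtain ⟨y, hy, hC, ho, h⟩ := mk_surj (x := x) ⟨hx.1, hx.2.1⟩
    have hyR := hR y hy hC (ho hx)
    obtain ⟨w, hw, rfl⟩ := h (hA y hyR)
    exact ⟨(y, w), ⟨hyR, hw⟩, rfl⟩
  refine (encard_le_encard this).trans ((encard_image_le _ _).trans ?_)
  rw [encard_prod, encard_pm]

/-! ### Nonsingularity and counting of elliptic lines by means of quartic polynomials -/

lemma grad_sc_zero {τ : ℝ} (hτ : τ ≠ 0) {l : E8} {p : E3} (h : grad (sc τ l) (τ • p) = 0) :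
    grad l p = 0 := by
  funext i
  have := congrFun h i
  rw [grad_sc] at this
  simpa [hτ] using this

/-- Along the planes through the line `x = a, y = 0`, where `a` is a root of the cubic `F(x, 0, 0)`,
the zero surface is a conic bundle; its singular points produce multiple roots of `GB² - GA GC`. -/
lemma ns_fam {k u c d e a : ℝ} (ha : a ^ 3 + u * a + k = 0)
    (h1 : ∀ x : ℝ, x ^ 3 + u * x + k = 0 → 3 * x ^ 2 + u = 0 → False)
    (h2 : ∀ t : ℝ, GB c d a t ^ 2 - GA t * GC u c d e a t = 0 → GD u c d e a t = 0 → False)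
    (p : E3) (hF : P82Def p (fam k u c d e) = 0) : grad (fam k u c d e) p ≠ 0 := by
  intro hg
  rw [F_fam] at hF
  rw [grad_fam] at hg
  have g0 := congrFun hg 0
  have g1 := congrFun hg 1
  have g2 := congrFun hg 2
  simp only [Matrix.cons_val_zero, Matrix.cons_val_one, Matrix.cons_val, Pi.zero_apply] at g0 g1 g2
  generalize p 0 = x at *
  generalize p 1 = y at *
  generalize p 2 = z at *
  clear hg
  rcases mul_eq_zero.1 g2 with hy | hz
  · subst hy
    exact h1 x (by linarith) (by linarith)
  by_cases hy : y = 0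
  · subst hy
    exact h1 x (by linarith) (by linarith)
  obtain ⟨t, rfl⟩ : ∃ t, x = a + t * y := ⟨(x - a) / y, by field_simp; ring⟩
  obtain rfl : z = -(((1 - 4 * t) * y + (c - 4 * a)) / 2) := by linarith
  have e1 : GA t * y ^ 2 + 2 * GB c d a t * y + GC u c d e a t = 0 := by
    have : y * (GA t * y ^ 2 + 2 * GB c d a t * y + GC u c d e a t) = 0 := by
      simp only [GA, GB, GC]
      linear_combination (-4) * hF + 4 * ha
    exact (mul_eq_zero.1 this).resolve_left hy
  have e2 : GA t * y + GB c d a t = 0 := by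
    have : y * (GA t * y + GB c d a t) = 0 := by
      have h3 := e1
      simp only [GA, GB, GC] at h3 ⊢
      linear_combination (-2) * (t * g0 + g1) - (1 / 2) * h3
    exact (mul_eq_zero.1 this).resolve_left hy
  have e3 : GC u c d e a t = GA t * y ^ 2 := by linear_combination e1 - 2 * y * e2
  have e4 : GB c d a t = - (GA t * y) := by linear_combination e2
  refine h2 t (by rw [e3, e4]; ring) ?_
  rw [GD, e3, e4]
  simp only [GA]
  linear_combination ((1 - 4 * t) ^ 2 - 4 * t ^ 3) * g0

/-- A quartic polynomial given by its coefficients. -/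
def qu (c₀ c₁ c₂ c₃ c₄ t : ℝ) : ℝ := c₀ + c₁ * t + c₂ * t ^ 2 + c₃ * t ^ 3 + c₄ * t ^ 4

/-- A quartic polynomial is positive on an interval where its Bernstein coefficients are. -/
lemma qu_pos {c₀ c₁ c₂ c₃ c₄ α β t : ℝ} (h : α < β)
    (b₀ : 0 < qu c₀ c₁ c₂ c₃ c₄ α)
    (b₁ : 0 < 4 * qu c₀ c₁ c₂ c₃ c₄ α + (β - α) * qu c₁ (2 * c₂) (3 * c₃) (4 * c₄) 0 α)
    (b₂ : 0 < 12 * qu c₀ c₁ c₂ c₃ c₄ α + 6 * (β - α) * qu c₁ (2 * c₂) (3 * c₃) (4 * c₄) 0 α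
      + (β - α) ^ 2 * qu (2 * c₂) (6 * c₃) (12 * c₄) 0 0 α)
    (b₃ : 0 < 4 * qu c₀ c₁ c₂ c₃ c₄ β - (β - α) * qu c₁ (2 * c₂) (3 * c₃) (4 * c₄) 0 β)
    (b₄ : 0 < qu c₀ c₁ c₂ c₃ c₄ β) (h1 : α ≤ t) (h2 : t ≤ β) : 0 < qu c₀ c₁ c₂ c₃ c₄ t := by
  obtain ⟨s, rfl⟩ : ∃ s, t = α + s := ⟨t - α, by ring⟩
  obtain ⟨r, rfl⟩ : ∃ r, β = α + s + r := ⟨β - (α + s), by ring⟩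
  have hs : 0 ≤ s := by linarith
  have hr : 0 ≤ r := by linarith
  have hw : 0 < s + r := by linarith
  have key : qu c₀ c₁ c₂ c₃ c₄ (α + s) * (s + r) ^ 4 =
      qu c₀ c₁ c₂ c₃ c₄ α * r ^ 4
      + (4 * qu c₀ c₁ c₂ c₃ c₄ α + (α + s + r - α) * qu c₁ (2 * c₂) (3 * c₃) (4 * c₄) 0 α)
        * (r ^ 3 * s)
      + (12 * qu c₀ c₁ c₂ c₃ c₄ α + 6 * (α + s + r - α) * qu c₁ (2 * c₂) (3 * c₃) (4 * c₄) 0 α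
        + (α + s + r - α) ^ 2 * qu (2 * c₂) (6 * c₃) (12 * c₄) 0 0 α) * (r ^ 2 * s ^ 2 / 2)
      + (4 * qu c₀ c₁ c₂ c₃ c₄ (α + s + r)
        - (α + s + r - α) * qu c₁ (2 * c₂) (3 * c₃) (4 * c₄) 0 (α + s + r)) * (r * s ^ 3)
      + qu c₀ c₁ c₂ c₃ c₄ (α + s + r) * s ^ 4 := by
    simp only [qu]; ring
  have hpos : 0 < qu c₀ c₁ c₂ c₃ c₄ (α + s) * (s + r) ^ 4 := by
    rw [key]
    rcases hs.eq_or_lt with h0 | h0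
    · subst h0
      have : 0 < r := by linarith
      positivity
    · positivity
  exact (mul_pos_iff_of_pos_right (by positivity)).1 hpos

lemma qu_pos_ge {c₀ c₁ c₂ c₃ c₄ α t : ℝ} (b₀ : 0 < qu c₀ c₁ c₂ c₃ c₄ α)
    (b₁ : 0 ≤ qu c₁ (2 * c₂) (3 * c₃) (4 * c₄) 0 α) (b₂ : 0 ≤ qu c₂ (3 * c₃) (6 * c₄) 0 0 α)
    (b₃ : 0 ≤ c₃ + 4 * c₄ * α) (b₄ : 0 ≤ c₄) (h : α ≤ t) : 0 < qu c₀ c₁ c₂ c₃ c₄ t := by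
  obtain ⟨s, rfl⟩ : ∃ s, t = α + s := ⟨t - α, by ring⟩
  have hs : 0 ≤ s := by linarith
  have key : qu c₀ c₁ c₂ c₃ c₄ (α + s) = qu c₀ c₁ c₂ c₃ c₄ α
      + qu c₁ (2 * c₂) (3 * c₃) (4 * c₄) 0 α * s + qu c₂ (3 * c₃) (6 * c₄) 0 0 α * s ^ 2
      + (c₃ + 4 * c₄ * α) * s ^ 3 + c₄ * s ^ 4 := by
    simp only [qu]; ring
  rw [key]
  positivity

lemma qu_pos_le {c₀ c₁ c₂ c₃ c₄ α t : ℝ} (b₀ : 0 < qu c₀ c₁ c₂ c₃ c₄ α)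
    (b₁ : 0 ≤ -qu c₁ (2 * c₂) (3 * c₃) (4 * c₄) 0 α) (b₂ : 0 ≤ qu c₂ (3 * c₃) (6 * c₄) 0 0 α)
    (b₃ : 0 ≤ -(c₃ + 4 * c₄ * α)) (b₄ : 0 ≤ c₄) (h : t ≤ α) : 0 < qu c₀ c₁ c₂ c₃ c₄ t := by
  obtain ⟨s, rfl⟩ : ∃ s, t = α - s := ⟨α - t, by ring⟩
  have hs : 0 ≤ s := by linarith
  have key : qu c₀ c₁ c₂ c₃ c₄ (α - s) = qu c₀ c₁ c₂ c₃ c₄ α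
      + -qu c₁ (2 * c₂) (3 * c₃) (4 * c₄) 0 α * s + qu c₂ (3 * c₃) (6 * c₄) 0 0 α * s ^ 2
      + -(c₃ + 4 * c₄ * α) * s ^ 3 + c₄ * s ^ 4 := by
    simp only [qu]; ring
  rw [key]
  positivity

/-- The polynomial `n (GB² - GA GC)`, `n = 3 a² + u`, has the given coefficients. -/
structure IsG (u c d e a c₀ c₁ c₂ c₃ c₄ : ℝ) : Prop where
  val : ∀ t, (3 * a ^ 2 + u) * (GB c d a t ^ 2 - GA t * GC u c d e a t) = qu c₀ c₁ c₂ c₃ c₄ t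
  der : ∀ t, (3 * a ^ 2 + u) * GD u c d e a t
    = qu c₁ (2 * c₂) (3 * c₃) (4 * c₄) 0 t / 4

lemma hasDerivAt_qu (c₀ c₁ c₂ c₃ c₄ t : ℝ) :
    HasDerivAt (qu c₀ c₁ c₂ c₃ c₄) (qu c₁ (2 * c₂) (3 * c₃) (4 * c₄) 0 t) t := by
  have h := ((((hasDerivAt_const t c₀).add ((hasDerivAt_id t).const_mul c₁)).add
    ((hasDerivAt_pow 2 t).const_mul c₂)).add ((hasDerivAt_pow 3 t).const_mul c₃)).add
    ((hasDerivAt_pow 4 t).const_mul c₄)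
  refine h.congr_deriv ?_
  simp [qu]; ring

lemma GA_pos_of_le {t : ℝ} (h : t ≤ 1 / 5) : 0 < GA t := by
  simp only [GA]
  rcases le_total t 0 with h0 | h0
  · nlinarith [pow_pos (show (0:ℝ) < 1 - 4 * t by linarith) 2, pow_nonneg (neg_nonneg.2 h0) 3]
  · nlinarith [mul_nonneg h0 h0, mul_nonneg (mul_nonneg h0 h0) (sub_nonneg.2 h),
      mul_nonneg h0 (sub_nonneg.2 h)]

lemma GA_pos_of_mem {t : ℝ} (h : 9 / 25 ≤ t) (h' : t ≤ 17 / 5) : 0 < GA t := by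
  simp only [GA]
  nlinarith [mul_nonneg (sub_nonneg.2 h) (sub_nonneg.2 h'),
    mul_nonneg (mul_nonneg (sub_nonneg.2 h) (sub_nonneg.2 h')) (sub_nonneg.2 h)]

lemma le_of_GA {t : ℝ} (h : 0 ≤ GA t) : t ≤ 69 / 20 := by
  by_contra! hc
  simp only [GA] at h
  nlinarith [mul_pos (sub_pos.2 hc) (sub_pos.2 hc),
    mul_pos (mul_pos (sub_pos.2 hc) (sub_pos.2 hc)) (sub_pos.2 hc)]

lemma of_GA {t : ℝ} (h : 0 ≤ GA t) : t ≤ 41 / 200 ∨ 7 / 20 ≤ t := by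
  by_contra! hc
  simp only [GA] at h
  nlinarith [mul_pos (sub_pos.2 hc.1) (sub_pos.2 hc.2),
    mul_pos (mul_pos (sub_pos.2 hc.1) (sub_pos.2 hc.2)) (sub_pos.2 hc.1)]

/-- An interval on which the quartic is monotone of the right sense contains exactly one element of
`TT`. -/
lemma cell {k u c d e a c₀ c₁ c₂ c₃ c₄ α β : ℝ} (ha : a ^ 3 + u * a + k = 0)
    (hG : IsG u c d e a c₀ c₁ c₂ c₃ c₄) (h : α < β)
    (hA : β ≤ 1 / 5 ∨ 9 / 25 ≤ α ∧ β ≤ 17 / 5)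
    (hα : 0 < qu c₀ c₁ c₂ c₃ c₄ α) (hβ : qu c₀ c₁ c₂ c₃ c₄ β < 0)
    (hd : ∀ t, α ≤ t → t ≤ β → 0 < qu (-c₁) (2 * -c₂) (3 * -c₃) (4 * -c₄) 0 t) :
    ∃ r, α < r ∧ r < β ∧ (a, r) ∈ TT k u c d e ∧ 0 < GA r ∧
      ∀ t, α ≤ t → t ≤ β → GB c d a t ^ 2 - GA t * GC u c d e a t = 0 → t = r := by
  have hd' : ∀ t, α ≤ t → t ≤ β → qu c₁ (2 * c₂) (3 * c₃) (4 * c₄) 0 t < 0 := by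
    intro t h1 h2
    have := hd t h1 h2
    simp only [qu] at this ⊢
    linarith
  have hcont : Continuous (qu c₀ c₁ c₂ c₃ c₄) := by unfold qu; fun_prop
  obtain ⟨r, ⟨h1, h2⟩, h3⟩ := intermediate_value_Ioo' h.le hcont.continuousOn ⟨hβ, hα⟩
  have hn : 3 * a ^ 2 + u ≠ 0 := by
    intro h0
    have := hG.val α
    rw [h0, zero_mul] at this
    exact hα.ne this
  have hAr : 0 < GA r := by
    rcases hA with hA | hA
    · exact GA_pos_of_le (h2.le.trans hA)
    · exact GA_pos_of_mem (hA.1.trans h1.le) (h2.le.trans hA.2)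
  have hanti : StrictAntiOn (qu c₀ c₁ c₂ c₃ c₄) (Icc α β) := by
    refine strictAntiOn_of_deriv_neg (convex_Icc _ _) hcont.continuousOn ?_
    intro t ht
    rw [interior_Icc] at ht
    rw [(hasDerivAt_qu _ _ _ _ _ _).deriv]
    exact hd' t ht.1.le ht.2.le
  refine ⟨r, h1, h2, ⟨ha, hAr.le, ?_, ?_⟩, hAr, ?_⟩
  · have := hG.val r
    rw [h3] at this
    exact (mul_eq_zero.1 this).resolve_left hn
  · dsimp only
    rw [hG.der]
    linarith [hd' r h1.le h2.le]
  · intro t ht1 ht2 ht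
    refine hanti.injOn ⟨ht1, ht2⟩ ⟨h1.le, h2.le⟩ ?_
    rw [h3, ← hG.val t, ht, mul_zero]

/-- Elements of `TT` outside of the cells are excluded by the sign of the quartic or of its
derivative. -/
lemma TT_qu {k u c d e a c₀ c₁ c₂ c₃ c₄ t : ℝ} (hG : IsG u c d e a c₀ c₁ c₂ c₃ c₄)
    (h : (a, t) ∈ TT k u c d e) : qu c₀ c₁ c₂ c₃ c₄ t = 0 ∧
      qu c₁ (2 * c₂) (3 * c₃) (4 * c₄) 0 t < 0 := by
  obtain ⟨-, -, h1, h2⟩ := h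
  dsimp only at h1 h2
  rw [hG.der] at h2
  exact ⟨by rw [← hG.val t, h1, mul_zero], by linarith⟩

/-! ### The sample parameters: nonsingularity and positions of the elliptic lines -/

/-!
The samples are called `P4`, ..., `P1` (with four, ..., one quadruples of oriented elliptic lines
on the oval), `T` (the self-mirror one), `D3`, ..., `D0` and `D0s` (with spherical component).
Nonsingularity is proved by Bézout identities between `f` and its derivative, where `f` is the cubic `x³ + ux + k` or
the quartic `GB² - GA GC`. The lemmas `cell_*` isolate the roots of the quartics that correspond
to elliptic lines, and the lemmas `cov_*` exclude others in the range needed; the suffix `m1`, `0`, `1`,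
... is the root `a` of the cubic.
-/

lemma kill_pos {k u c d e a c₀ c₁ c₂ c₃ c₄ t : ℝ} (hG : IsG u c d e a c₀ c₁ c₂ c₃ c₄)
    (h : (a, t) ∈ TT k u c d e) (hq : 0 < qu c₀ c₁ c₂ c₃ c₄ t) : False :=
  hq.ne' (TT_qu hG h).1

lemma kill_neg {k u c d e a c₀ c₁ c₂ c₃ c₄ t : ℝ} (hG : IsG u c d e a c₀ c₁ c₂ c₃ c₄)
    (h : (a, t) ∈ TT k u c d e) (hq : 0 < qu (-c₀) (-c₁) (-c₂) (-c₃) (-c₄) t) : False := by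
  have := (TT_qu hG h).1
  simp only [qu] at this hq
  linarith

lemma kill_der {k u c d e a c₀ c₁ c₂ c₃ c₄ t : ℝ} (hG : IsG u c d e a c₀ c₁ c₂ c₃ c₄)
    (h : (a, t) ∈ TT k u c d e) (hq : 0 < qu c₁ (2 * c₂) (3 * c₃) (4 * c₄) 0 t) : False :=
  hq.not_gt (TT_qu hG h).2

lemma ns_P4 (p : E3) (hF : P82Def p (fam 0 (-4) 5 (-3) 6) = 0) :
    grad (fam 0 (-4) 5 (-3) 6) p ≠ 0 := by
  refine ns_fam (a := 0) (by norm_num) ?_ ?_ p hF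
  · intro t h1 h2
    refine zero_ne_one (α := ℝ) ?_
    linear_combination (-((-9 / 32) * t)) * h1 - ((-1 / 4) + (3 / 32) * t ^ 2) * h2
  · intro t h1 h2
    refine zero_ne_one (α := ℝ) ?_
    simp only [GA, GB, GC, GD] at h1 h2
    linear_combination (-((-7395797 / 400276) + (4570204 / 100069) * t + (-1978112 / 100069) * t ^ 2)) * h1
      - ((-1202023 / 100069) + (5357239 / 100069) * t + (-6517408 / 100069) * t ^ 2 + (1978112 / 100069) * t ^ 3) * h2

lemma ns_P3 (p : E3) (hF : P82Def p (fam 0 (-1) 1 0 0) = 0) :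
    grad (fam 0 (-1) 1 0 0) p ≠ 0 := by
  refine ns_fam (a := 0) (by norm_num) ?_ ?_ p hF
  · intro t h1 h2
    refine zero_ne_one (α := ℝ) ?_
    linear_combination (-((-9 / 2) * t)) * h1 - ((-1) + (3 / 2) * t ^ 2) * h2
  · intro t h1 h2
    refine zero_ne_one (α := ℝ) ?_
    simp only [GA, GB, GC, GD] at h1 h2
    linear_combination (-((-10397 / 916) + (105527 / 1832) * t + (-5030 / 229) * t ^ 2)) * h1
      - ((-1) + (6733 / 229) * t + (-35813 / 458) * t ^ 2 + (5030 / 229) * t ^ 3) * h2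

lemma ns_P2 (p : E3) (hF : P82Def p (fam 0 (-1) 2 (-2) 1) = 0) :
    grad (fam 0 (-1) 2 (-2) 1) p ≠ 0 := by
  refine ns_fam (a := 0) (by norm_num) ?_ ?_ p hF
  · intro t h1 h2
    refine zero_ne_one (α := ℝ) ?_
    linear_combination (-((-9 / 2) * t)) * h1 - ((-1) + (3 / 2) * t ^ 2) * h2
  · intro t h1 h2
    refine zero_ne_one (α := ℝ) ?_
    simp only [GA, GB, GC, GD] at h1 h2
    linear_combination (-((-112 / 247) + (864 / 247) * t + (-336 / 247) * t ^ 2)) * h1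
      - ((-139 / 247) + (472 / 247) * t + (-1200 / 247) * t ^ 2 + (336 / 247) * t ^ 3) * h2

lemma ns_P1 (p : E3) (hF : P82Def p (fam (-1) 0 0 0 (-1)) = 0) :
    grad (fam (-1) 0 0 0 (-1)) p ≠ 0 := by
  refine ns_fam (a := 1) (by norm_num) ?_ ?_ p hF
  · intro t h1 h2
    refine zero_ne_one (α := ℝ) ?_
    linear_combination (-((-1))) * h1 - ((1 / 3) * t) * h2
  · intro t h1 h2
    refine zero_ne_one (α := ℝ) ?_
    simp only [GA, GB, GC, GD] at h1 h2
    linear_combination (-((10132 / 7289) + (-16440 / 7289) * t + (3588 / 7289) * t ^ 2)) * h1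
      - ((4347 / 7289) + (-24376 / 7289) * t + (22420 / 7289) * t ^ 2 + (-3588 / 7289) * t ^ 3) * h2

lemma ns_D3 (p : E3) (hF : P82Def p (fam 0 (-1) 8 0 0) = 0) :
    grad (fam 0 (-1) 8 0 0) p ≠ 0 := by
  refine ns_fam (a := 0) (by norm_num) ?_ ?_ p hF
  · intro t h1 h2
    refine zero_ne_one (α := ℝ) ?_
    linear_combination (-((-9 / 2) * t)) * h1 - ((-1) + (3 / 2) * t ^ 2) * h2
  · intro t h1 h2
    refine zero_ne_one (α := ℝ) ?_
    simp only [GA, GB, GC, GD] at h1 h2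
    linear_combination (-((-263600 / 34597) + (-69856 / 1193) * t + (-224624 / 34597) * t ^ 2)) * h1
      - ((-1) + (500848 / 34597) * t + (2699696 / 34597) * t ^ 2 + (224624 / 34597) * t ^ 3) * h2

lemma ns_D2 (p : E3) (hF : P82Def p (fam 0 (-1) 5 0 0) = 0) :
    grad (fam 0 (-1) 5 0 0) p ≠ 0 := by
  refine ns_fam (a := 0) (by norm_num) ?_ ?_ p hF
  · intro t h1 h2
    refine zero_ne_one (α := ℝ) ?_
    linear_combination (-((-9 / 2) * t)) * h1 - ((-1) + (3 / 2) * t ^ 2) * h2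
  · intro t h1 h2
    refine zero_ne_one (α := ℝ) ?_
    simp only [GA, GB, GC, GD] at h1 h2
    linear_combination (-((-44515 / 5708) + (-142679 / 11416) * t + (-10282 / 1427) * t ^ 2)) * h1
      - ((-1) + (21683 / 1427) * t + (47237 / 2854) * t ^ 2 + (10282 / 1427) * t ^ 3) * h2

lemma ns_D1 (p : E3) (hF : P82Def p (fam 1 0 0 1 1) = 0) :
    grad (fam 1 0 0 1 1) p ≠ 0 := by
  refine ns_fam (a := (-1)) (by norm_num) ?_ ?_ p hF
  · intro t h1 h2
    refine zero_ne_one (α := ℝ) ?_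
    linear_combination (-(1)) * h1 - ((-1 / 3) * t) * h2
  · intro t h1 h2
    refine zero_ne_one (α := ℝ) ?_
    simp only [GA, GB, GC, GD] at h1 h2
    linear_combination (-((-50495 / 10457) + (-131400 / 10457) * t + (53628 / 10457) * t ^ 2)) * h1
      - ((-1) + (97410 / 10457) * t + (176090 / 10457) * t ^ 2 + (-53628 / 10457) * t ^ 3) * h2

lemma ns_D0 (p : E3) (hF : P82Def p (fam 1 0 0 0 0) = 0) :
    grad (fam 1 0 0 0 0) p ≠ 0 := by
  refine ns_fam (a := (-1)) (by norm_num) ?_ ?_ p hF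
  · intro t h1 h2
    refine zero_ne_one (α := ℝ) ?_
    linear_combination (-(1)) * h1 - ((-1 / 3) * t) * h2
  · intro t h1 h2
    refine zero_ne_one (α := ℝ) ?_
    simp only [GA, GB, GC, GD] at h1 h2
    linear_combination (-((32 / 37) + (32 / 37) * t + (-12 / 37) * t ^ 2)) * h1
      - ((1 / 3) + (-88 / 111) * t + (-48 / 37) * t ^ 2 + (12 / 37) * t ^ 3) * h2

lemma ns_D0s (p : E3) (hF : P82Def p (fam (63 / 2) (-187 / 10) 8 0 0) = 0) :
    grad (fam (63 / 2) (-187 / 10) 8 0 0) p ≠ 0 := by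
  refine ns_fam (a := (-5)) (by norm_num) ?_ ?_ p hF
  · intro t h1 h2
    refine zero_ne_one (α := ℝ) ?_
    linear_combination (-((425250 / 316969) + (168300 / 316969) * t)) * h1 - ((699380 / 316969) + (-141750 / 316969) * t + (-56100 / 316969) * t ^ 2) * h2
  · intro t h1 h2
    refine zero_ne_one (α := ℝ) ?_
    simp only [GA, GB, GC, GD] at h1 h2
    linear_combination (-((1803697600 / 50364155317) + (-1198831040 / 50364155317) * t + (85873840 / 50364155317) * t ^ 2)) * h1
      - ((10 / 563) + (-6248720960 / 50364155317) * t + (1714074080 / 50364155317) * t ^ 2 + (-85873840 / 50364155317) * t ^ 3) * h2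

lemma ns_T (p : E3) (hF : P82Def p (fam 0 1 0 0 0) = 0) :
    grad (fam 0 1 0 0 0) p ≠ 0 := by
  refine ns_fam (a := 0) (by norm_num) ?_ ?_ p hF
  · intro t h1 h2
    refine zero_ne_one (α := ℝ) ?_
    linear_combination (-((-9 / 2) * t)) * h1 - (1 + (3 / 2) * t ^ 2) * h2
  · intro t h1 h2
    refine zero_ne_one (α := ℝ) ?_
    simp only [GA, GB, GC, GD] at h1 h2
    linear_combination (-((560 / 37) + (-3872 / 37) * t + (1392 / 37) * t ^ 2)) * h1
      - (1 + (-1648 / 37) * t + (5264 / 37) * t ^ 2 + (-1392 / 37) * t ^ 3) * h2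

lemma G_P4_m2 : IsG (-4) 5 (-3) 6 (-2) 384 (-1568) 1888 (-864) 128 := by
  constructor <;> intro t <;> simp only [GA, GB, GC, GD, qu] <;> ring

lemma G_P4_0 : IsG (-4) 5 (-3) 6 0 (-96) 592 (-1232) 1008 (-256) := by
  constructor <;> intro t <;> simp only [GA, GB, GC, GD, qu] <;> ring

lemma G_P3_m1 : IsG (-1) 1 0 0 (-1) 0 16 (-8) (-24) 8 := by
  constructor <;> intro t <;> simp only [GA, GB, GC, GD, qu] <;> ring

lemma G_P3_0 : IsG (-1) 1 0 0 0 0 4 (-32) 60 (-16) := by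
  constructor <;> intro t <;> simp only [GA, GB, GC, GD, qu] <;> ring

lemma G_P3_1 : IsG (-1) 1 0 0 1 0 16 (-56) 40 8 := by
  constructor <;> intro t <;> simp only [GA, GB, GC, GD, qu] <;> ring

lemma G_P2_m1 : IsG (-1) 2 (-2) 1 (-1) 24 (-80) 48 (-32) 8 := by
  constructor <;> intro t <;> simp only [GA, GB, GC, GD, qu] <;> ring

lemma G_P2_0 : IsG (-1) 2 (-2) 1 0 (-4) 20 (-48) 64 (-16) := by
  constructor <;> intro t <;> simp only [GA, GB, GC, GD, qu] <;> ring

lemma G_P2_1 : IsG (-1) 2 (-2) 1 1 (-8) 48 (-48) 32 8 := by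
  constructor <;> intro t <;> simp only [GA, GB, GC, GD, qu] <;> ring

lemma G_P1_1 : IsG 0 0 0 (-1) 1 (-12) 132 (-336) 240 (-36) := by
  constructor <;> intro t <;> simp only [GA, GB, GC, GD, qu] <;> ring

lemma G_D3_m1 : IsG (-1) 8 0 0 (-1) 0 16 160 256 8 := by
  constructor <;> intro t <;> simp only [GA, GB, GC, GD, qu] <;> ring

lemma G_D3_0 : IsG (-1) 8 0 0 0 0 4 (-32) (-192) (-16) := by
  constructor <;> intro t <;> simp only [GA, GB, GC, GD, qu] <;> ring

lemma G_D3_1 : IsG (-1) 8 0 0 1 0 16 (-224) 768 8 := by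
  constructor <;> intro t <;> simp only [GA, GB, GC, GD, qu] <;> ring

lemma G_D2_m1 : IsG (-1) 5 0 0 (-1) 0 16 88 40 8 := by
  constructor <;> intro t <;> simp only [GA, GB, GC, GD, qu] <;> ring

lemma G_D2_0 : IsG (-1) 5 0 0 0 0 4 (-32) (-36) (-16) := by
  constructor <;> intro t <;> simp only [GA, GB, GC, GD, qu] <;> ring

lemma G_D2_1 : IsG (-1) 5 0 0 1 0 16 (-152) 360 8 := by
  constructor <;> intro t <;> simp only [GA, GB, GC, GD, qu] <;> ring

lemma G_D1_m1 : IsG 0 0 1 1 (-1) 0 (-12) 60 120 (-36) := by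
  constructor <;> intro t <;> simp only [GA, GB, GC, GD, qu] <;> ring

lemma G_D0_m1 : IsG 0 0 0 0 (-1) 0 36 (-144) 192 (-36) := by
  constructor <;> intro t <;> simp only [GA, GB, GC, GD, qu] <;> ring

lemma G_D0s_m5 : IsG (-187 / 10) 8 0 0 (-5) 0 (316969 / 25) (-171152 / 25) (27024 / 25) (-1126 / 25) := by
  constructor <;> intro t <;> simp only [GA, GB, GC, GD, qu] <;> ring

lemma cell_P4_m2a : ∃ r, (2 / 5) < r ∧ r < (1 / 2) ∧ ((-2), r) ∈ TT 0 (-4) 5 (-3) 6 ∧ 0 < GA r ∧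
    ∀ t, (2 / 5) ≤ t → t ≤ (1 / 2) → GB 5 (-3) (-2) t ^ 2 - GA t * GC (-4) 5 (-3) 6 (-2) t = 0 → t = r := by
  refine cell (by norm_num) G_P4_m2 (by norm_num) (by norm_num) (by norm_num [qu]) (by norm_num [qu]) ?_
  intro t h0 hm
  refine qu_pos (α := (2 / 5)) (β := (1 / 2)) ?_ ?_ ?_ ?_ ?_ ?_ h0 hm <;> norm_num [qu]

lemma cell_P4_m2b : ∃ r, (8 / 5) < r ∧ r < 2 ∧ ((-2), r) ∈ TT 0 (-4) 5 (-3) 6 ∧ 0 < GA r ∧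
    ∀ t, (8 / 5) ≤ t → t ≤ 2 → GB 5 (-3) (-2) t ^ 2 - GA t * GC (-4) 5 (-3) 6 (-2) t = 0 → t = r := by
  refine cell (by norm_num) G_P4_m2 (by norm_num) (by norm_num) (by norm_num [qu]) (by norm_num [qu]) ?_
  intro t h0 hm
  refine qu_pos (α := (8 / 5)) (β := 2) ?_ ?_ ?_ ?_ ?_ ?_ h0 hm <;> norm_num [qu]

lemma cell_P4_0a : ∃ r, (3 / 5) < r ∧ r < (16 / 25) ∧ (0, r) ∈ TT 0 (-4) 5 (-3) 6 ∧ 0 < GA r ∧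
    ∀ t, (3 / 5) ≤ t → t ≤ (16 / 25) → GB 5 (-3) 0 t ^ 2 - GA t * GC (-4) 5 (-3) 6 0 t = 0 → t = r := by
  refine cell (by norm_num) G_P4_0 (by norm_num) (by norm_num) (by norm_num [qu]) (by norm_num [qu]) ?_
  intro t h0 hm
  refine qu_pos (α := (3 / 5)) (β := (16 / 25)) ?_ ?_ ?_ ?_ ?_ ?_ h0 hm <;> norm_num [qu]

lemma cell_P4_0b : ∃ r, 2 < r ∧ r < (5 / 2) ∧ (0, r) ∈ TT 0 (-4) 5 (-3) 6 ∧ 0 < GA r ∧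
    ∀ t, 2 ≤ t → t ≤ (5 / 2) → GB 5 (-3) 0 t ^ 2 - GA t * GC (-4) 5 (-3) 6 0 t = 0 → t = r := by
  refine cell (by norm_num) G_P4_0 (by norm_num) (by norm_num) (by norm_num [qu]) (by norm_num [qu]) ?_
  intro t h0 hm
  refine qu_pos (α := 2) (β := (5 / 2)) ?_ ?_ ?_ ?_ ?_ ?_ h0 hm <;> norm_num [qu]

lemma cell_P3_m1 : ∃ r, (1 / 2) < r ∧ r < (11 / 5) ∧ ((-1), r) ∈ TT 0 (-1) 1 0 0 ∧ 0 < GA r ∧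
    ∀ t, (1 / 2) ≤ t → t ≤ (11 / 5) → GB 1 0 (-1) t ^ 2 - GA t * GC (-1) 1 0 0 (-1) t = 0 → t = r := by
  refine cell (by norm_num) G_P3_m1 (by norm_num) (by norm_num) (by norm_num [qu]) (by norm_num [qu]) ?_
  intro t h0 hm
  refine qu_pos (α := (1 / 2)) (β := (11 / 5)) ?_ ?_ ?_ ?_ ?_ ?_ h0 hm <;> norm_num [qu]

lemma cell_P3_0 : ∃ r, (5 / 2) < r ∧ r < (17 / 5) ∧ (0, r) ∈ TT 0 (-1) 1 0 0 ∧ 0 < GA r ∧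
    ∀ t, (5 / 2) ≤ t → t ≤ (17 / 5) → GB 1 0 0 t ^ 2 - GA t * GC (-1) 1 0 0 0 t = 0 → t = r := by
  refine cell (by norm_num) G_P3_0 (by norm_num) (by norm_num) (by norm_num [qu]) (by norm_num [qu]) ?_
  intro t h0 hm
  refine qu_pos (α := (5 / 2)) (β := (17 / 5)) ?_ ?_ ?_ ?_ ?_ ?_ h0 hm <;> norm_num [qu]

lemma cell_P3_1 : ∃ r, (9 / 25) < r ∧ r < (3 / 5) ∧ (1, r) ∈ TT 0 (-1) 1 0 0 ∧ 0 < GA r ∧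
    ∀ t, (9 / 25) ≤ t → t ≤ (3 / 5) → GB 1 0 1 t ^ 2 - GA t * GC (-1) 1 0 0 1 t = 0 → t = r := by
  refine cell (by norm_num) G_P3_1 (by norm_num) (by norm_num) (by norm_num [qu]) (by norm_num [qu]) ?_
  intro t h0 hm
  refine qu_pos (α := (9 / 25)) (β := (3 / 5)) ?_ ?_ ?_ ?_ ?_ ?_ h0 hm <;> norm_num [qu]

lemma cell_P2_m1 : ∃ r, (9 / 25) < r ∧ r < 2 ∧ ((-1), r) ∈ TT 0 (-1) 2 (-2) 1 ∧ 0 < GA r ∧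
    ∀ t, (9 / 25) ≤ t → t ≤ 2 → GB 2 (-2) (-1) t ^ 2 - GA t * GC (-1) 2 (-2) 1 (-1) t = 0 → t = r := by
  refine cell (by norm_num) G_P2_m1 (by norm_num) (by norm_num) (by norm_num [qu]) (by norm_num [qu]) ?_
  intro t h0 hm
  refine qu_pos (α := (9 / 25)) (β := 2) ?_ ?_ ?_ ?_ ?_ ?_ h0 hm <;> norm_num [qu]

lemma cell_P2_0 : ∃ r, (5 / 2) < r ∧ r < (17 / 5) ∧ (0, r) ∈ TT 0 (-1) 2 (-2) 1 ∧ 0 < GA r ∧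
    ∀ t, (5 / 2) ≤ t → t ≤ (17 / 5) → GB 2 (-2) 0 t ^ 2 - GA t * GC (-1) 2 (-2) 1 0 t = 0 → t = r := by
  refine cell (by norm_num) G_P2_0 (by norm_num) (by norm_num) (by norm_num [qu]) (by norm_num [qu]) ?_
  intro t h0 hm
  refine qu_pos (α := (5 / 2)) (β := (17 / 5)) ?_ ?_ ?_ ?_ ?_ ?_ h0 hm <;> norm_num [qu]

lemma cell_P1_1 : ∃ r, (9 / 25) < r ∧ r < (3 / 5) ∧ (1, r) ∈ TT (-1) 0 0 0 (-1) ∧ 0 < GA r ∧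
    ∀ t, (9 / 25) ≤ t → t ≤ (3 / 5) → GB 0 0 1 t ^ 2 - GA t * GC 0 0 0 (-1) 1 t = 0 → t = r := by
  refine cell (by norm_num) G_P1_1 (by norm_num) (by norm_num) (by norm_num [qu]) (by norm_num [qu]) ?_
  intro t h0 hm
  refine qu_pos (α := (9 / 25)) (β := (3 / 5)) ?_ ?_ ?_ ?_ ?_ ?_ h0 hm <;> norm_num [qu]

lemma cell_D3_m1a : ∃ r, (-40) < r ∧ r < (-30) ∧ ((-1), r) ∈ TT 0 (-1) 8 0 0 ∧ 0 < GA r ∧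
    ∀ t, (-40) ≤ t → t ≤ (-30) → GB 8 0 (-1) t ^ 2 - GA t * GC (-1) 8 0 0 (-1) t = 0 → t = r := by
  refine cell (by norm_num) G_D3_m1 (by norm_num) (by norm_num) (by norm_num [qu]) (by norm_num [qu]) ?_
  intro t h0 hm
  refine qu_pos (α := (-40)) (β := (-30)) ?_ ?_ ?_ ?_ ?_ ?_ h0 hm <;> norm_num [qu]

lemma cell_D3_m1b : ∃ r, (-1 / 5) < r ∧ r < (-1 / 10) ∧ ((-1), r) ∈ TT 0 (-1) 8 0 0 ∧ 0 < GA r ∧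
    ∀ t, (-1 / 5) ≤ t → t ≤ (-1 / 10) → GB 8 0 (-1) t ^ 2 - GA t * GC (-1) 8 0 0 (-1) t = 0 → t = r := by
  refine cell (by norm_num) G_D3_m1 (by norm_num) (by norm_num) (by norm_num [qu]) (by norm_num [qu]) ?_
  intro t h0 hm
  refine qu_pos (α := (-1 / 5)) (β := (-1 / 10)) ?_ ?_ ?_ ?_ ?_ ?_ h0 hm <;> norm_num [qu]

lemma cell_D3_0a : ∃ r, (-3 / 10) < r ∧ r < (-1 / 5) ∧ (0, r) ∈ TT 0 (-1) 8 0 0 ∧ 0 < GA r ∧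
    ∀ t, (-3 / 10) ≤ t → t ≤ (-1 / 5) → GB 8 0 0 t ^ 2 - GA t * GC (-1) 8 0 0 0 t = 0 → t = r := by
  refine cell (by norm_num) G_D3_0 (by norm_num) (by norm_num) (by norm_num [qu]) (by norm_num [qu]) ?_
  intro t h0 hm
  refine qu_pos (α := (-3 / 10)) (β := (-1 / 5)) ?_ ?_ ?_ ?_ ?_ ?_ h0 hm <;> norm_num [qu]

lemma cell_D3_0b : ∃ r, (1 / 20) < r ∧ r < (1 / 5) ∧ (0, r) ∈ TT 0 (-1) 8 0 0 ∧ 0 < GA r ∧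
    ∀ t, (1 / 20) ≤ t → t ≤ (1 / 5) → GB 8 0 0 t ^ 2 - GA t * GC (-1) 8 0 0 0 t = 0 → t = r := by
  refine cell (by norm_num) G_D3_0 (by norm_num) (by norm_num) (by norm_num [qu]) (by norm_num [qu]) ?_
  intro t h0 hm
  refine qu_pos (α := (1 / 20)) (β := (1 / 5)) ?_ ?_ ?_ ?_ ?_ ?_ h0 hm <;> norm_num [qu]

lemma cell_D2_m1 : ∃ r, (-2) < r ∧ r < (-1 / 10) ∧ ((-1), r) ∈ TT 0 (-1) 5 0 0 ∧ 0 < GA r ∧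
    ∀ t, (-2) ≤ t → t ≤ (-1 / 10) → GB 5 0 (-1) t ^ 2 - GA t * GC (-1) 5 0 0 (-1) t = 0 → t = r := by
  refine cell (by norm_num) G_D2_m1 (by norm_num) (by norm_num) (by norm_num [qu]) (by norm_num [qu]) ?_
  intro t h0 hm
  refine qu_pos (α := (-2)) (β := (-1 / 10)) ?_ ?_ ?_ ?_ ?_ ?_ h0 hm <;> norm_num [qu]

lemma cell_D2_0 : ∃ r, (3 / 50) < r ∧ r < (1 / 5) ∧ (0, r) ∈ TT 0 (-1) 5 0 0 ∧ 0 < GA r ∧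
    ∀ t, (3 / 50) ≤ t → t ≤ (1 / 5) → GB 5 0 0 t ^ 2 - GA t * GC (-1) 5 0 0 0 t = 0 → t = r := by
  refine cell (by norm_num) G_D2_0 (by norm_num) (by norm_num) (by norm_num [qu]) (by norm_num [qu]) ?_
  intro t h0 hm
  refine qu_pos (α := (3 / 50)) (β := (1 / 5)) ?_ ?_ ?_ ?_ ?_ ?_ h0 hm <;> norm_num [qu]

lemma cell_D2_1 : ∃ r, (-100) < r ∧ r < (-35) ∧ (1, r) ∈ TT 0 (-1) 5 0 0 ∧ 0 < GA r ∧
    ∀ t, (-100) ≤ t → t ≤ (-35) → GB 5 0 1 t ^ 2 - GA t * GC (-1) 5 0 0 1 t = 0 → t = r := by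
  refine cell (by norm_num) G_D2_1 (by norm_num) (by norm_num) (by norm_num [qu]) (by norm_num [qu]) ?_
  intro t h0 hm
  refine qu_pos (α := (-100)) (β := (-35)) ?_ ?_ ?_ ?_ ?_ ?_ h0 hm <;> norm_num [qu]

lemma cell_D1_m1 : ∃ r, (-1 / 5) < r ∧ r < (1 / 20) ∧ ((-1), r) ∈ TT 1 0 0 1 1 ∧ 0 < GA r ∧
    ∀ t, (-1 / 5) ≤ t → t ≤ (1 / 20) → GB 0 1 (-1) t ^ 2 - GA t * GC 0 0 1 1 (-1) t = 0 → t = r := by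
  refine cell (by norm_num) G_D1_m1 (by norm_num) (by norm_num) (by norm_num [qu]) (by norm_num [qu]) ?_
  intro t h0 hm
  refine qu_pos (α := (-1 / 5)) (β := (1 / 20)) ?_ ?_ ?_ ?_ ?_ ?_ h0 hm <;> norm_num [qu]

lemma cov_P3_m1 {t : ℝ} (h : ((-1), t) ∈ TT 0 (-1) 1 0 0) (h0 : (7 / 20) ≤ t) (hm : t ≤ (69 / 20)) :
    (1 / 2) ≤ t ∧ t ≤ (11 / 5) := by
  rcases le_total t (1 / 2) with h1 | h1
  · exact False.elim <| kill_pos G_P3_m1 h (by refine qu_pos (α := (7 / 20)) (β := (1 / 2)) ?_ ?_ ?_ ?_ ?_ ?_ h0 h1 <;> norm_num [qu])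
  rcases le_total t (11 / 5) with h2 | h2
  · exact ⟨h1, h2⟩
  rcases le_total t 3 with h3 | h3
  · exact False.elim <| kill_neg G_P3_m1 h (by refine qu_pos (α := (11 / 5)) (β := 3) ?_ ?_ ?_ ?_ ?_ ?_ h2 h3 <;> norm_num [qu])
  exact False.elim <| kill_der G_P3_m1 h (by refine qu_pos (α := 3) (β := (69 / 20)) ?_ ?_ ?_ ?_ ?_ ?_ h3 hm <;> norm_num [qu])

lemma cov_P3_0 {t : ℝ} (h : (0, t) ∈ TT 0 (-1) 1 0 0) (h0 : (7 / 20) ≤ t) (hm : t ≤ (69 / 20)) :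
    (5 / 2) ≤ t ∧ t ≤ (17 / 5) := by
  rcases le_total t (9 / 20) with h1 | h1
  · exact False.elim <| kill_der G_P3_0 h (by refine qu_pos (α := (7 / 20)) (β := (9 / 20)) ?_ ?_ ?_ ?_ ?_ ?_ h0 h1 <;> norm_num [qu])
  rcases le_total t (5 / 2) with h2 | h2
  · exact False.elim <| kill_pos G_P3_0 h (by refine qu_pos (α := (9 / 20)) (β := (5 / 2)) ?_ ?_ ?_ ?_ ?_ ?_ h1 h2 <;> norm_num [qu])
  rcases le_total t (17 / 5) with h3 | h3
  · exact ⟨h2, h3⟩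
  exact False.elim <| kill_neg G_P3_0 h (by refine qu_pos (α := (17 / 5)) (β := (69 / 20)) ?_ ?_ ?_ ?_ ?_ ?_ h3 hm <;> norm_num [qu])

lemma cov_P3_1 {t : ℝ} (h : (1, t) ∈ TT 0 (-1) 1 0 0) (h0 : (7 / 20) ≤ t) (hm : t ≤ (69 / 20)) :
    (9 / 25) ≤ t ∧ t ≤ (3 / 5) := by
  rcases le_total t (9 / 25) with h1 | h1
  · exact False.elim <| kill_pos G_P3_1 h (by refine qu_pos (α := (7 / 20)) (β := (9 / 25)) ?_ ?_ ?_ ?_ ?_ ?_ h0 h1 <;> norm_num [qu])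
  rcases le_total t (3 / 5) with h2 | h2
  · exact ⟨h1, h2⟩
  rcases le_total t (7 / 10) with h3 | h3
  · exact False.elim <| kill_neg G_P3_1 h (by refine qu_pos (α := (3 / 5)) (β := (7 / 10)) ?_ ?_ ?_ ?_ ?_ ?_ h2 h3 <;> norm_num [qu])
  exact False.elim <| kill_der G_P3_1 h (by refine qu_pos (α := (7 / 10)) (β := (69 / 20)) ?_ ?_ ?_ ?_ ?_ ?_ h3 hm <;> norm_num [qu])

lemma cov_P2_m1 {t : ℝ} (h : ((-1), t) ∈ TT 0 (-1) 2 (-2) 1) (h0 : (7 / 20) ≤ t) (hm : t ≤ (69 / 20)) :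
    (9 / 25) ≤ t ∧ t ≤ 2 := by
  rcases le_total t (9 / 25) with h1 | h1
  · exact False.elim <| kill_pos G_P2_m1 h (by refine qu_pos (α := (7 / 20)) (β := (9 / 25)) ?_ ?_ ?_ ?_ ?_ ?_ h0 h1 <;> norm_num [qu])
  rcases le_total t 2 with h2 | h2
  · exact ⟨h1, h2⟩
  rcases le_total t (5 / 2) with h3 | h3
  · exact False.elim <| kill_neg G_P2_m1 h (by refine qu_pos (α := 2) (β := (5 / 2)) ?_ ?_ ?_ ?_ ?_ ?_ h2 h3 <;> norm_num [qu])
  exact False.elim <| kill_der G_P2_m1 h (by refine qu_pos (α := (5 / 2)) (β := (69 / 20)) ?_ ?_ ?_ ?_ ?_ ?_ h3 hm <;> norm_num [qu])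

lemma cov_P2_0 {t : ℝ} (h : (0, t) ∈ TT 0 (-1) 2 (-2) 1) (h0 : (7 / 20) ≤ t) (hm : t ≤ (69 / 20)) :
    (5 / 2) ≤ t ∧ t ≤ (17 / 5) := by
  rcases le_total t 2 with h1 | h1
  · exact False.elim <| kill_der G_P2_0 h (by refine qu_pos (α := (7 / 20)) (β := 2) ?_ ?_ ?_ ?_ ?_ ?_ h0 h1 <;> norm_num [qu])
  rcases le_total t (5 / 2) with h2 | h2
  · exact False.elim <| kill_pos G_P2_0 h (by refine qu_pos (α := 2) (β := (5 / 2)) ?_ ?_ ?_ ?_ ?_ ?_ h1 h2 <;> norm_num [qu])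
  rcases le_total t (17 / 5) with h3 | h3
  · exact ⟨h2, h3⟩
  exact False.elim <| kill_neg G_P2_0 h (by refine qu_pos (α := (17 / 5)) (β := (69 / 20)) ?_ ?_ ?_ ?_ ?_ ?_ h3 hm <;> norm_num [qu])

lemma cov_P2_1 {t : ℝ} (h : (1, t) ∈ TT 0 (-1) 2 (-2) 1) (h0 : (7 / 20) ≤ t) : False := by
  rcases le_total t 1 with h1 | h1
  · exact kill_pos G_P2_1 h (by refine qu_pos (α := (7 / 20)) (β := 1) ?_ ?_ ?_ ?_ ?_ ?_ h0 h1 <;> norm_num [qu])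
  exact kill_pos G_P2_1 h (by refine qu_pos_ge (α := 1) ?_ ?_ ?_ ?_ ?_ h1 <;> norm_num [qu])

lemma cov_P1_1 {t : ℝ} (h : (1, t) ∈ TT (-1) 0 0 0 (-1)) (h0 : (7 / 20) ≤ t) (hm : t ≤ (69 / 20)) :
    (9 / 25) ≤ t ∧ t ≤ (3 / 5) := by
  rcases le_total t (9 / 25) with h1 | h1
  · exact False.elim <| kill_pos G_P1_1 h (by refine qu_pos (α := (7 / 20)) (β := (9 / 25)) ?_ ?_ ?_ ?_ ?_ ?_ h0 h1 <;> norm_num [qu])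
  rcases le_total t (3 / 5) with h2 | h2
  · exact ⟨h1, h2⟩
  rcases le_total t (11 / 10) with h3 | h3
  · exact False.elim <| kill_neg G_P1_1 h (by refine qu_pos (α := (3 / 5)) (β := (11 / 10)) ?_ ?_ ?_ ?_ ?_ ?_ h2 h3 <;> norm_num [qu])
  rcases le_total t 2 with h4 | h4
  · exact False.elim <| kill_der G_P1_1 h (by refine qu_pos (α := (11 / 10)) (β := 2) ?_ ?_ ?_ ?_ ?_ ?_ h3 h4 <;> norm_num [qu])
  exact False.elim <| kill_pos G_P1_1 h (by refine qu_pos (α := 2) (β := (69 / 20)) ?_ ?_ ?_ ?_ ?_ ?_ h4 hm <;> norm_num [qu])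

lemma cov_D3_m1 {t : ℝ} (h : ((-1), t) ∈ TT 0 (-1) 8 0 0) (h0 : (7 / 20) ≤ t) : False := by
  exact kill_pos G_D3_m1 h (by refine qu_pos_ge (α := (7 / 20)) ?_ ?_ ?_ ?_ ?_ h0 <;> norm_num [qu])

lemma cov_D3_0 {t : ℝ} (h : (0, t) ∈ TT 0 (-1) 8 0 0) (h0 : (7 / 20) ≤ t) : False := by
  exact kill_neg G_D3_0 h (by refine qu_pos_ge (α := (7 / 20)) ?_ ?_ ?_ ?_ ?_ h0 <;> norm_num [qu])

lemma cov_D3_1 {t : ℝ} (h : (1, t) ∈ TT 0 (-1) 8 0 0) (h0 : (7 / 20) ≤ t) : False := by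
  exact kill_pos G_D3_1 h (by refine qu_pos_ge (α := (7 / 20)) ?_ ?_ ?_ ?_ ?_ h0 <;> norm_num [qu])

lemma cov_D2_m1 {t : ℝ} (h : ((-1), t) ∈ TT 0 (-1) 5 0 0) :
    (-2) ≤ t ∧ t ≤ (-1 / 10) := by
  rcases le_total t (-2) with h1 | h1
  · exact False.elim <| kill_pos G_D2_m1 h (by refine qu_pos_le (α := (-2)) ?_ ?_ ?_ ?_ ?_ h1 <;> norm_num [qu])
  rcases le_total t (-1 / 10) with h2 | h2
  · exact ⟨h1, h2⟩
  rcases le_total t (-1 / 20) with h3 | h3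
  · exact False.elim <| kill_neg G_D2_m1 h (by refine qu_pos (α := (-1 / 10)) (β := (-1 / 20)) ?_ ?_ ?_ ?_ ?_ ?_ h2 h3 <;> norm_num [qu])
  exact False.elim <| kill_der G_D2_m1 h (by refine qu_pos_ge (α := (-1 / 20)) ?_ ?_ ?_ ?_ ?_ h3 <;> norm_num [qu])

lemma cov_D2_0 {t : ℝ} (h : (0, t) ∈ TT 0 (-1) 5 0 0) :
    (3 / 50) ≤ t ∧ t ≤ (1 / 5) := by
  rcases le_total t (-1) with h1 | h1
  · exact False.elim <| kill_der G_D2_0 h (by refine qu_pos_le (α := (-1)) ?_ ?_ ?_ ?_ ?_ h1 <;> norm_num [qu])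
  rcases le_total t (1 / 20) with h2 | h2
  · exact False.elim <| kill_der G_D2_0 h (by refine qu_pos (α := (-1)) (β := (1 / 20)) ?_ ?_ ?_ ?_ ?_ ?_ h1 h2 <;> norm_num [qu])
  rcases le_total t (3 / 50) with h3 | h3
  · exact False.elim <| kill_pos G_D2_0 h (by refine qu_pos (α := (1 / 20)) (β := (3 / 50)) ?_ ?_ ?_ ?_ ?_ ?_ h2 h3 <;> norm_num [qu])
  rcases le_total t (1 / 5) with h4 | h4
  · exact ⟨h3, h4⟩
  exact False.elim <| kill_neg G_D2_0 h (by refine qu_pos_ge (α := (1 / 5)) ?_ ?_ ?_ ?_ ?_ h4 <;> norm_num [qu])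

lemma cov_D2_1 {t : ℝ} (h : (1, t) ∈ TT 0 (-1) 5 0 0) :
    (-100) ≤ t ∧ t ≤ (-35) := by
  rcases le_total t (-100) with h1 | h1
  · exact False.elim <| kill_pos G_D2_1 h (by refine qu_pos_le (α := (-100)) ?_ ?_ ?_ ?_ ?_ h1 <;> norm_num [qu])
  rcases le_total t (-35) with h2 | h2
  · exact ⟨h1, h2⟩
  rcases le_total t (-30) with h3 | h3
  · exact False.elim <| kill_neg G_D2_1 h (by refine qu_pos (α := (-35)) (β := (-30)) ?_ ?_ ?_ ?_ ?_ ?_ h2 h3 <;> norm_num [qu])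
  rcases le_total t (1 / 20) with h4 | h4
  · exact False.elim <| kill_der G_D2_1 h (by refine qu_pos (α := (-30)) (β := (1 / 20)) ?_ ?_ ?_ ?_ ?_ ?_ h3 h4 <;> norm_num [qu])
  rcases le_total t (3 / 20) with h5 | h5
  · exact False.elim <| kill_pos G_D2_1 h (by refine qu_pos (α := (1 / 20)) (β := (3 / 20)) ?_ ?_ ?_ ?_ ?_ ?_ h4 h5 <;> norm_num [qu])
  rcases le_total t (1 / 5) with h6 | h6
  · exact False.elim <| kill_pos G_D2_1 h (by refine qu_pos (α := (3 / 20)) (β := (1 / 5)) ?_ ?_ ?_ ?_ ?_ ?_ h5 h6 <;> norm_num [qu])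
  rcases le_total t (9 / 40) with h7 | h7
  · exact False.elim <| kill_pos G_D2_1 h (by refine qu_pos (α := (1 / 5)) (β := (9 / 40)) ?_ ?_ ?_ ?_ ?_ ?_ h6 h7 <;> norm_num [qu])
  rcases le_total t (1 / 4) with h8 | h8
  · exact False.elim <| kill_pos G_D2_1 h (by refine qu_pos (α := (9 / 40)) (β := (1 / 4)) ?_ ?_ ?_ ?_ ?_ ?_ h7 h8 <;> norm_num [qu])
  exact False.elim <| kill_der G_D2_1 h (by refine qu_pos_ge (α := (1 / 4)) ?_ ?_ ?_ ?_ ?_ h8 <;> norm_num [qu])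

lemma cov_D1_m1 {t : ℝ} (h : ((-1), t) ∈ TT 1 0 0 1 1) (hm : t ≤ (69 / 20)) :
    (-1 / 5) ≤ t ∧ t ≤ (1 / 20) := by
  rcases le_total t (-2 / 5) with h1 | h1
  · exact False.elim <| kill_der G_D1_m1 h (by refine qu_pos_le (α := (-2 / 5)) ?_ ?_ ?_ ?_ ?_ h1 <;> norm_num [qu])
  rcases le_total t (-1 / 5) with h2 | h2
  · exact False.elim <| kill_pos G_D1_m1 h (by refine qu_pos (α := (-2 / 5)) (β := (-1 / 5)) ?_ ?_ ?_ ?_ ?_ ?_ h1 h2 <;> norm_num [qu])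
  rcases le_total t (1 / 20) with h3 | h3
  · exact ⟨h2, h3⟩
  rcases le_total t (1 / 10) with h4 | h4
  · exact False.elim <| kill_neg G_D1_m1 h (by refine qu_pos (α := (1 / 20)) (β := (1 / 10)) ?_ ?_ ?_ ?_ ?_ ?_ h3 h4 <;> norm_num [qu])
  rcases le_total t (5 / 2) with h5 | h5
  · exact False.elim <| kill_der G_D1_m1 h (by refine qu_pos (α := (1 / 10)) (β := (5 / 2)) ?_ ?_ ?_ ?_ ?_ ?_ h4 h5 <;> norm_num [qu])
  exact False.elim <| kill_pos G_D1_m1 h (by refine qu_pos (α := (5 / 2)) (β := (69 / 20)) ?_ ?_ ?_ ?_ ?_ ?_ h5 hm <;> norm_num [qu])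

lemma cov_D0s_m5 {t : ℝ} (h : ((-5), t) ∈ TT (63 / 2) (-187 / 10) 8 0 0) (hm : t ≤ (69 / 20)) : False := by
  rcases le_total t 1 with h1 | h1
  · exact kill_der G_D0s_m5 h (by refine qu_pos_le (α := 1) ?_ ?_ ?_ ?_ ?_ h1 <;> norm_num [qu])
  exact kill_pos G_D0s_m5 h (by refine qu_pos (α := 1) (β := (69 / 20)) ?_ ?_ ?_ ?_ ?_ ?_ h1 hm <;> norm_num [qu])

/-! ### The numbers of elliptic lines of the samples -/

lemma four_eq {X : Type*} {x y z w : X} (h1 : x ≠ y) (h2 : x ≠ z) (h3 : x ≠ w) (h4 : y ≠ z)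
    (h5 : y ≠ w) (h6 : z ≠ w) : ({x, y, z, w} : Set X).encard * 4 = 16 := by
  rw [encard_insert_of_notMem (by simp [h1, h2, h3]), encard_insert_of_notMem (by simp [h4, h5]),
    encard_pair h6]
  norm_num

lemma three_eq {X : Type*} {x y z : X} (h1 : x ≠ y) (h2 : x ≠ z) (h4 : y ≠ z) :
    ({x, y, z} : Set X).encard * 4 = 12 := by
  rw [encard_insert_of_notMem (by simp [h1, h2]), encard_pair h4]
  norm_num

lemma two_eq {X : Type*} {x y : X} (h1 : x ≠ y) : ({x, y} : Set X).encard * 4 = 8 := by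
  rw [encard_pair h1]
  norm_num

lemma one_eq {X : Type*} (x : X) : ({x} : Set X).encard * 4 = 4 := by simp

lemma ne_fst {x y : ℝ × ℝ} (h : x.1 ≠ y.1) : x ≠ y := fun h' => h (h' ▸ rfl)

lemma ne_snd {x y : ℝ × ℝ} (h : x.2 < y.2) : x ≠ y := fun h' => h.ne (h' ▸ rfl)

lemma oval_range {k u c d e : ℝ} {y : ℝ × ℝ} (hy : y ∈ TT k u c d e) (h : 1 / 4 < y.2) :
    7 / 20 ≤ y.2 ∧ y.2 ≤ 69 / 20 :=
  ⟨(of_GA hy.2.1).resolve_left (by linarith), le_of_GA hy.2.1⟩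

lemma root_sub {a : ℝ} (h : a ^ 3 + (-1) * a + 0 = 0) : a = -1 ∨ a = 0 ∨ a = 1 := by
  have : (a + 1) * (a * (a - 1)) = 0 := by linarith
  rcases mul_eq_zero.1 this with h | h
  · exact .inl (by linarith)
  · rcases mul_eq_zero.1 h with h | h
    · exact .inr (.inl h)
    · exact .inr (.inr (by linarith))

lemma root_one {a : ℝ} (h : a ^ 3 + 0 * a + -1 = 0) : a = 1 := by
  have : (a - 1) * (a ^ 2 + a + 1) = 0 := by linarith
  rcases mul_eq_zero.1 this with h | h
  · linarith
  · nlinarith [sq_nonneg (2 * a + 1)]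

lemma root_neg_one {a : ℝ} (h : a ^ 3 + 0 * a + 1 = 0) : a = -1 := by
  have : (a + 1) * (a ^ 2 - a + 1) = 0 := by linarith
  rcases mul_eq_zero.1 this with h | h
  · linarith
  · nlinarith [sq_nonneg (2 * a - 1)]

lemma root_neg_five {a : ℝ} (h : a ^ 3 + (-187 / 10) * a + 63 / 2 = 0) : a = -5 := by
  have : (a + 5) * (a ^ 2 - 5 * a + 63 / 10) = 0 := by linarith
  rcases mul_eq_zero.1 this with h | h
  · linarith
  · nlinarith [sq_nonneg (2 * a - 5)]

lemma ov_P4 : 16 ≤ (EllO (fam 0 (-4) 5 (-3) 6)).encard := by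
  obtain ⟨r, a1, b1, t1, A1, -⟩ := cell_P4_m2a
  obtain ⟨s, a2, b2, t2, A2, -⟩ := cell_P4_m2b
  obtain ⟨v, a3, b3, t3, A3, -⟩ := cell_P4_0a
  obtain ⟨w, a4, b4, t4, A4, -⟩ := cell_P4_0b
  have h := (le_ell (R := {(-2, r), (-2, s), (0, v), (0, w)}) (k := 0) (u := -4) (c := 5) (d := -3)
    (e := 6) (by rintro y (rfl | rfl | rfl | rfl) <;> assumption)
    (by rintro y (rfl | rfl | rfl | rfl) <;> assumption)).2
    (by rintro y (rfl | rfl | rfl | rfl) <;> dsimp only <;> linarith)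
  rwa [four_eq (ne_snd (by dsimp only; linarith)) (ne_fst (by norm_num)) (ne_fst (by norm_num))
    (ne_fst (by norm_num)) (ne_fst (by norm_num)) (ne_snd (by dsimp only; linarith))] at h

lemma ov_P3 : (EllO (fam 0 (-1) 1 0 0)).encard = 12 := by
  obtain ⟨r, a1, b1, t1, A1, u1⟩ := cell_P3_m1
  obtain ⟨s, a2, b2, t2, A2, u2⟩ := cell_P3_0
  obtain ⟨v, a3, b3, t3, A3, u3⟩ := cell_P3_1
  rw [← three_eq (x := ((-1 : ℝ), r)) (y := ((0 : ℝ), s)) (z := ((1 : ℝ), v))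
    (ne_fst (by norm_num)) (ne_fst (by norm_num)) (ne_fst (by norm_num))]
  refine le_antisymm (ellO_le ?_ ?_) ((le_ell ?_ ?_).2 ?_)
  · rintro ⟨a, t⟩ hy - ht
    have hr := oval_range hy ht
    rcases root_sub hy.1 with h | h | h <;> dsimp only at h hr <;> subst h
    · have hc := cov_P3_m1 hy hr.1 hr.2
      rw [u1 t hc.1 hc.2 hy.2.2.1]; simp
    · have hc := cov_P3_0 hy hr.1 hr.2
      rw [u2 t hc.1 hc.2 hy.2.2.1]; simp
    · have hc := cov_P3_1 hy hr.1 hr.2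
      rw [u3 t hc.1 hc.2 hy.2.2.1]; simp
  · rintro y (rfl | rfl | rfl) <;> assumption
  · rintro y (rfl | rfl | rfl) <;> assumption
  · rintro y (rfl | rfl | rfl) <;> assumption
  · rintro y (rfl | rfl | rfl) <;> dsimp only <;> linarith

lemma ov_P2 : (EllO (fam 0 (-1) 2 (-2) 1)).encard = 8 := by
  obtain ⟨r, a1, b1, t1, A1, u1⟩ := cell_P2_m1
  obtain ⟨s, a2, b2, t2, A2, u2⟩ := cell_P2_0
  rw [← two_eq (x := ((-1 : ℝ), r)) (y := ((0 : ℝ), s)) (ne_fst (by norm_num))]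
  refine le_antisymm (ellO_le ?_ ?_) ((le_ell ?_ ?_).2 ?_)
  · rintro ⟨a, t⟩ hy - ht
    have hr := oval_range hy ht
    rcases root_sub hy.1 with h | h | h <;> dsimp only at h hr <;> subst h
    · have hc := cov_P2_m1 hy hr.1 hr.2
      rw [u1 t hc.1 hc.2 hy.2.2.1]; simp
    · have hc := cov_P2_0 hy hr.1 hr.2
      rw [u2 t hc.1 hc.2 hy.2.2.1]; simp
    · exact (cov_P2_1 hy hr.1).elim
  · rintro y (rfl | rfl) <;> assumption
  · rintro y (rfl | rfl) <;> assumption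
  · rintro y (rfl | rfl) <;> assumption
  · rintro y (rfl | rfl) <;> dsimp only <;> linarith

lemma ov_P1 : (EllO (fam (-1) 0 0 0 (-1))).encard = 4 := by
  obtain ⟨r, a1, b1, t1, A1, u1⟩ := cell_P1_1
  rw [← one_eq ((1 : ℝ), r)]
  refine le_antisymm (ellO_le ?_ ?_) ((le_ell ?_ ?_).2 ?_)
  · rintro ⟨a, t⟩ hy - ht
    have hr := oval_range hy ht
    have h := root_one hy.1
    dsimp only at h hr
    subst h
    have hc := cov_P1_1 hy hr.1 hr.2
    rw [u1 t hc.1 hc.2 hy.2.2.1]; simp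
  · rintro y rfl; assumption
  · rintro y rfl; assumption
  · rintro y rfl; assumption
  · rintro y rfl; dsimp only; linarith

lemma ov_T : (EllO (fam 0 1 0 0 0)).encard = 0 := by
  have := ellO_le (R := ∅) (k := 0) (u := 1) (c := 0) (d := 0) (e := 0) ?_ (by simp)
  · simpa using this
  · rintro ⟨a, t⟩ hy hC ht
    have h := hy.1
    dsimp only at h hC ht
    have ha : a = 0 := by
      have : a * (a ^ 2 + 1) = 0 := by linarith
      exact (mul_eq_zero.1 this).resolve_right (by positivity)
    subst ha
    simp only [GC] at hC
    linarith

lemma ov_D3 : (EllO (fam 0 (-1) 8 0 0)).encard = 0 := by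
  have := ellO_le (R := ∅) (k := 0) (u := -1) (c := 8) (d := 0) (e := 0) ?_ (by simp)
  · simpa using this
  · rintro ⟨a, t⟩ hy - ht
    have hr := oval_range hy ht
    rcases root_sub hy.1 with h | h | h <;> dsimp only at h hr <;> subst h
    · exact (cov_D3_m1 hy hr.1).elim
    · exact (cov_D3_0 hy hr.1).elim
    · exact (cov_D3_1 hy hr.1).elim

lemma ov_D2 : (EllO (fam 0 (-1) 5 0 0)).encard = 0 := by
  have := ellO_le (R := ∅) (k := 0) (u := -1) (c := 5) (d := 0) (e := 0) ?_ (by simp)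
  · simpa using this
  · rintro ⟨a, t⟩ hy - ht
    rcases root_sub hy.1 with h | h | h <;> dsimp only at h ht <;> subst h
    · linarith [(cov_D2_m1 hy).2]
    · linarith [(cov_D2_0 hy).2]
    · linarith [(cov_D2_1 hy).2]

lemma ov_D1 : (EllO (fam 1 0 0 1 1)).encard = 0 := by
  have := ellO_le (R := ∅) (k := 1) (u := 0) (c := 0) (d := 1) (e := 1) ?_ (by simp)
  · simpa using this
  · rintro ⟨a, t⟩ hy - ht
    have h := root_neg_one hy.1
    have hm := le_of_GA hy.2.1
    dsimp only at h ht hm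
    subst h
    linarith [(cov_D1_m1 hy hm).2]

lemma ev_D3 : 16 ≤ (Ell (fam 0 (-1) 8 0 0)).encard := by
  obtain ⟨r, a1, b1, t1, A1, -⟩ := cell_D3_m1a
  obtain ⟨s, a2, b2, t2, A2, -⟩ := cell_D3_m1b
  obtain ⟨v, a3, b3, t3, A3, -⟩ := cell_D3_0a
  obtain ⟨w, a4, b4, t4, A4, -⟩ := cell_D3_0b
  have h := (le_ell (R := {(-1, r), (-1, s), (0, v), (0, w)}) (k := 0) (u := -1) (c := 8) (d := 0)
    (e := 0) (by rintro y (rfl | rfl | rfl | rfl) <;> assumption)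
    (by rintro y (rfl | rfl | rfl | rfl) <;> assumption)).1
  rwa [four_eq (ne_snd (by dsimp only; linarith)) (ne_fst (by norm_num)) (ne_fst (by norm_num))
    (ne_fst (by norm_num)) (ne_fst (by norm_num)) (ne_snd (by dsimp only; linarith))] at h

lemma ev_D2 : (Ell (fam 0 (-1) 5 0 0)).encard = 12 := by
  obtain ⟨r, a1, b1, t1, A1, u1⟩ := cell_D2_m1
  obtain ⟨s, a2, b2, t2, A2, u2⟩ := cell_D2_0
  obtain ⟨v, a3, b3, t3, A3, u3⟩ := cell_D2_1
  rw [← three_eq (x := ((-1 : ℝ), r)) (y := ((0 : ℝ), s)) (z := ((1 : ℝ), v))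
    (ne_fst (by norm_num)) (ne_fst (by norm_num)) (ne_fst (by norm_num))]
  refine le_antisymm (ell_le ?_ ?_) (le_ell ?_ ?_).1
  · rintro ⟨a, t⟩ hy
    rcases root_sub hy.1 with h | h | h <;> dsimp only at h <;> subst h
    · have hc := cov_D2_m1 hy
      rw [u1 t hc.1 hc.2 hy.2.2.1]; simp
    · have hc := cov_D2_0 hy
      rw [u2 t hc.1 hc.2 hy.2.2.1]; simp
    · have hc := cov_D2_1 hy
      rw [u3 t hc.1 hc.2 hy.2.2.1]; simp
  · rintro y (rfl | rfl | rfl) <;> assumption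
  · rintro y (rfl | rfl | rfl) <;> assumption
  · rintro y (rfl | rfl | rfl) <;> assumption

lemma ev_D1 : (Ell (fam 1 0 0 1 1)).encard = 4 := by
  obtain ⟨r, a1, b1, t1, A1, u1⟩ := cell_D1_m1
  rw [← one_eq ((-1 : ℝ), r)]
  refine le_antisymm (ell_le ?_ ?_) (le_ell ?_ ?_).1
  · rintro ⟨a, t⟩ hy
    have h := root_neg_one hy.1
    have hm := le_of_GA hy.2.1
    dsimp only at h hm
    subst h
    have hc := cov_D1_m1 hy hm
    rw [u1 t hc.1 hc.2 hy.2.2.1]; simp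
  · rintro y rfl; assumption
  · rintro y rfl; assumption
  · rintro y rfl; assumption

lemma ev_D0 : (Ell (fam 1 0 0 0 0)).encard = 0 := by
  have := ell_le (R := ∅) (k := 1) (u := 0) (c := 0) (d := 0) (e := 0) ?_ (by simp)
  · simpa using this
  · rintro ⟨a, t⟩ hy
    have h := root_neg_one hy.1
    have hA := hy.2.1
    have hd := hy.2.2.2
    dsimp only at h hA hd
    subst h
    have : (3 * (-1) ^ 2 + 0) * GD 0 0 0 0 (-1) t = 9 * GA t := by
      simp only [GD, GA, GB, GC]; ring
    rw [this] at hd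
    linarith

lemma ev_D0s : (Ell (fam (63 / 2) (-187 / 10) 8 0 0)).encard = 0 := by
  have := ell_le (R := ∅) (k := 63 / 2) (u := -187 / 10) (c := 8) (d := 0) (e := 0) ?_ (by simp)
  · simpa using this
  · rintro ⟨a, t⟩ hy
    have h := root_neg_five hy.1
    have hm := le_of_GA hy.2.1
    dsimp only at h hm
    subst h
    exact (cov_D0s_m5 hy hm).elim

lemma ellO_le_ell (l : E8) : (EllO l).encard ≤ (Ell l).encard :=
  encard_le_encard fun _ h => ⟨h.1, h.2.1⟩

/-! ### Invariance under the quasi-homogeneous scaling -/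

lemma Res_sc (τ : ℝ) (l : E8) (p d : E3) : Res (sc τ l) (τ • p) d = τ ^ 4 * Res l p d := by
  have h0 : grad (sc τ l) (τ • p) = fun i => τ ^ 2 * grad l p i := funext fun i => grad_sc τ l p i
  have h1 : grad₁ (sc τ l) (τ • p) d = fun i => τ * grad₁ l p d i :=
    funext fun i => grad₁_sc τ l p d i
  have h2 : grad₂ (sc τ l) d = grad₂ l d := funext fun i => grad₂_sc τ l d i
  simp only [Res, h0, h1, h2, br]
  ring

lemma isLine_sc {τ : ℝ} (hτ : τ ≠ 0) {l : E8} {x : E3 × E3} (h : IsLine l x) :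
    IsLine (sc τ l) (τ • x.1, x.2) := by
  obtain ⟨h1, h2, h3⟩ := h
  refine ⟨h1, ?_, fun s => ?_⟩
  · have : dot (WithLp.ofLp (τ • x.1)) x.2 = τ * dot x.1 x.2 := by simp [dot]; ring
    dsimp only
    rw [this, h2, mul_zero]
  · have := F_sc τ l (x.1 + (s / τ) • x.2)
    rw [h3, mul_zero, smul_add, smul_smul, mul_div_cancel₀ _ hτ] at this
    exact this

lemma ell_sc_subset {τ : ℝ} (hτ : τ ≠ 0) (l : E8) :
    (fun x : E3 × E3 => (τ • x.1, x.2)) '' Ell l ⊆ Ell (sc τ l) ∧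
      (fun x : E3 × E3 => (τ • x.1, x.2)) '' EllO l ⊆ EllO (sc τ l) := by
  have h4 : 0 < τ ^ 4 := by positivity
  constructor
  · rintro _ ⟨x, ⟨h1, h2⟩, rfl⟩
    refine ⟨isLine_sc hτ h1, ?_⟩
    dsimp only
    rw [Res_sc]
    exact mul_neg_of_pos_of_neg h4 h2
  · rintro _ ⟨x, ⟨h1, h2, h3⟩, rfl⟩
    refine ⟨isLine_sc hτ h1, ?_, h3⟩
    dsimp only
    rw [Res_sc]
    exact mul_neg_of_pos_of_neg h4 h2

lemma encard_sc_le {τ : ℝ} (hτ : τ ≠ 0) (l : E8) :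
    (Ell l).encard ≤ (Ell (sc τ l)).encard ∧ (EllO l).encard ≤ (EllO (sc τ l)).encard := by
  have hinj : Function.Injective (fun x : E3 × E3 => (τ • x.1, x.2)) := by
    rintro ⟨p, d⟩ ⟨p', d'⟩ h
    simp only [Prod.mk.injEq] at h
    exact Prod.ext (smul_right_injective E3 hτ h.1) h.2
  obtain ⟨h1, h2⟩ := ell_sc_subset hτ l
  constructor
  · rw [← hinj.encard_image]; exact encard_le_encard h1
  · rw [← hinj.encard_image]; exact encard_le_encard h2

lemma sc_inv_sc {τ : ℝ} (hτ : τ ≠ 0) (l : E8) : sc τ⁻¹ (sc τ l) = l := by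
  rw [sc_sc, inv_mul_cancel₀ hτ, sc_one]

lemma encard_ell_sc {τ : ℝ} (hτ : τ ≠ 0) (l : E8) : (Ell (sc τ l)).encard = (Ell l).encard := by
  refine le_antisymm ?_ (encard_sc_le hτ l).1
  have := (encard_sc_le (inv_ne_zero hτ) (sc τ l)).1
  rwa [sc_inv_sc hτ] at this

lemma encard_ellO_sc {τ : ℝ} (hτ : τ ≠ 0) (l : E8) :
    (EllO (sc τ l)).encard = (EllO l).encard := by
  refine le_antisymm ?_ (encard_sc_le hτ l).2
  have := (encard_sc_le (inv_ne_zero hτ) (sc τ l)).2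
  rwa [sc_inv_sc hτ] at this

/-! ### Separation and connection of the negative sets of the samples -/

lemma F_sc_inv {τ : ℝ} (hτ : τ ≠ 0) (l : E8) (p : E3) :
    P82Def p (sc τ l) = τ ^ 3 * P82Def (τ⁻¹ • p) l := by
  rw [← F_sc, smul_smul, mul_inv_cancel₀ hτ, one_smul]

/-- The boundary of the wedge `y > 0, 4x - y > κ` separates the two base points when `F` is
positive on it. -/
lemma not_conn_fam {k u c d e κ τ : ℝ} (hκ : 0 ≤ κ) (hκ' : κ ≤ 8)
    (h : ∀ x : ℝ, κ / 4 ≤ x → 0 < x ^ 3 + u * x + k ∧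
      0 < x ^ 3 + u * x + k + (4 * x - κ) * (d * x + e - (c - κ) ^ 2 / 4))
    (hτ : 0 < τ) (hτ' : τ ≤ 1 / 10) : ¬ Conn (sc τ (fam k u c d e)) := by
  have hpos : ∀ x y z : ℝ, 0 ≤ y → κ ≤ 4 * x - y → (y = 0 ∨ 4 * x - y = κ) →
      0 < P82Def !₂[x, y, z] (fam k u c d e) := by
    intro x y z hy hw ho
    obtain ⟨h1, h2⟩ := h x (by linarith)
    rw [F_fam]
    simp only [Matrix.cons_val_zero, Matrix.cons_val_one, Matrix.cons_val]
    rcases ho with rfl | ho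
    · linarith
    · obtain rfl : y = 4 * x - κ := by linarith
      nlinarith [mul_nonneg hy (sq_nonneg (z + (c - κ) / 2))]
  have hW : IsOpen {p : E3 | 0 < p 1 ∧ τ * κ < 4 * p 0 - p 1} :=
    (isOpen_lt (f := fun _ => 0) (g := fun p : E3 => p 1) (by fun_prop) (by fun_prop)).and
      (isOpen_lt (f := fun _ => τ * κ) (g := fun p : E3 => 4 * p 0 - p 1) (by fun_prop)
        (by fun_prop))
  have hW' : IsOpen {p : E3 | p 1 < 0 ∨ 4 * p 0 - p 1 < τ * κ} :=
    (isOpen_lt (f := fun p : E3 => p 1) (g := fun _ => 0) (by fun_prop) (by fun_prop)).union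
      (isOpen_lt (f := fun p : E3 => 4 * p 0 - p 1) (g := fun _ => τ * κ) (by fun_prop)
        (by fun_prop))
  have hτκ : τ * κ ≤ 4 / 5 := by nlinarith
  have hτκ' : 0 ≤ τ * κ := by positivity
  refine not_joinedIn_of_sep hW hW' ?_ ?_ ?_ ?_
  · rw [Set.disjoint_left]
    rintro p ⟨h1, h2⟩ (h3 | h3) <;> linarith
  · rintro p ⟨-, hp⟩
    by_contra hcon
    simp only [mem_union, Set.mem_ofPred_eq, not_or, not_and, not_lt] at hcon
    obtain ⟨h1, h2, h3⟩ := hcon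
    have key := hpos (p 0 / τ) (p 1 / τ) (p 2 / τ) (by positivity) (by
      rw [← mul_div_assoc, ← sub_div, le_div_iff₀ hτ]; linarith) (by
      rcases h2.eq_or_lt with h4 | h4
      · left; rw [← h4]; simp
      · right
        rw [← mul_div_assoc, ← sub_div, div_eq_iff hτ.ne']; linarith [h1 h4])
    have hp' : (τ⁻¹ • p : E3) = !₂[p 0 / τ, p 1 / τ, p 2 / τ] := by
      ext i
      fin_cases i <;> simp <;> ring
    rw [F_sc_inv hτ.ne', hp'] at hp
    have : 0 < τ ^ 3 := by positivity
    nlinarith [mul_pos this key]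
  · refine ⟨?_, ?_⟩ <;> simp [q₁] <;> linarith
  · right
    simp [q₂]; linarith

/-- A segment of positive points gives, after the scaling by `-τ`, a path of negative points. -/
lemma seg_join {l : E8} {τ : ℝ} (hτ : 0 < τ) {a b : E3} (ha : ‖(-τ) • a‖ ≤ 1)
    (hb : ‖(-τ) • b‖ ≤ 1)
    (h : ∀ s : ℝ, 0 ≤ s → s ≤ 1 → 0 < P82Def (a + s • (b - a)) l) :
    JoinedIn (neg (sc (-τ) l)) ((-τ) • a) ((-τ) • b) := by
  refine JoinedIn.of_segment_subset ?_
  rw [segment_eq_image']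
  rintro _ ⟨s, ⟨hs, hs'⟩, rfl⟩
  refine ⟨?_, ?_⟩
  · have hconv := convex_closedBall (0 : E3) 1
    have := hconv.segment_subset (x := (-τ) • a) (y := (-τ) • b) (by simpa using ha)
      (by simpa using hb)
    rw [segment_eq_image'] at this
    simpa using this ⟨s, ⟨hs, hs'⟩, rfl⟩
  · have e : ((-τ) • a + s • ((-τ) • b - (-τ) • a) : E3) = (-τ) • (a + s • (b - a)) := by
      module
    have h1 := h s hs hs'
    dsimp only
    rw [e, F_sc]
    have : 0 < τ ^ 3 := by positivity
    nlinarith [mul_pos this h1]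

lemma norm_le_of_bound {τ M : ℝ} (hτ : 0 < τ) (hτ' : τ * M ≤ 1) (hM : 0 ≤ M) {a : E3}
    (h : a 0 ^ 2 + a 1 ^ 2 + a 2 ^ 2 ≤ M ^ 2) : ‖(-τ) • a‖ ≤ 1 := by
  rw [norm_smul, norm_neg, Real.norm_eq_abs, abs_of_pos hτ]
  rw [← norm_sq] at h
  have := abs_le_of_sq_le_sq h hM
  rw [abs_of_nonneg (norm_nonneg a)] at this
  nlinarith

lemma conn_ends {l : E8} {τ : ℝ} (hτ : 0 < τ)
    (h : JoinedIn (neg (sc (-τ) l)) ((-τ) • ((-τ⁻¹) • q₁)) ((-τ) • ((-τ⁻¹) • q₂))) :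
    Conn (sc (-τ) l) := by
  have e : -τ * -τ⁻¹ = 1 := by field_simp
  rwa [smul_smul, smul_smul, e, one_smul, one_smul] at h

lemma norm_end {τ : ℝ} (hτ : 0 < τ) {q : E3} (hq : ‖q‖ ≤ 1) : ‖(-τ) • ((-τ⁻¹) • q)‖ ≤ 1 := by
  have e : -τ * -τ⁻¹ = 1 := by field_simp
  rwa [smul_smul, e, one_smul]

/-- The two base points are joined through the origin. -/
lemma conn_fam {k u c d e τ : ℝ}
    (h1 : ∀ s : ℝ, 0 ≤ s → 0 < k - 2 * (u + e) * s + (4 * d + 6 * c) * s ^ 2 + 10 * s ^ 3)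
    (h2 : ∀ x : ℝ, 0 ≤ x → 0 < x ^ 3 + u * x + k)
    (hτ : 0 < τ) : Conn (sc (-τ) (fam k u c d e)) := by
  have hτi : 0 < τ⁻¹ := inv_pos.2 hτ
  refine conn_ends hτ ((seg_join (b := 0) hτ (norm_end hτ norm_q₁) (by simp) ?_).trans
    (seg_join hτ (by simp) (norm_end hτ norm_q₂) ?_))
  · intro s hs hs'
    have := h1 (τ⁻¹ / 5 * (1 - s)) (mul_nonneg (by positivity) (by linarith))
    convert this using 1
    rw [F_fam]
    simp [q₁]
    ring
  · intro s hs hs'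
    have := h2 (τ⁻¹ * s) (by positivity)
    convert this using 1
    rw [F_fam]
    simp [q₂]
    ring

lemma joined_of_seq {l : E8} {τ : ℝ} (hτ : 0 < τ) (hτ' : τ ≤ 1 / 20) {x y z x' y' z' : ℝ}
    (ha : x ^ 2 + y ^ 2 + z ^ 2 ≤ 400) (hb : x' ^ 2 + y' ^ 2 + z' ^ 2 ≤ 400)
    (h : ∀ s r : ℝ, 0 ≤ s → 0 ≤ r → r + s = 1 →
      0 < P82Def !₂[r * x + s * x', r * y + s * y', r * z + s * z'] l) :
    JoinedIn (neg (sc (-τ) l)) ((-τ) • !₂[x, y, z]) ((-τ) • !₂[x', y', z']) := by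
  refine seg_join hτ (norm_le_of_bound (M := 20) hτ (by linarith) (by norm_num) (by simp; linarith))
    (norm_le_of_bound (M := 20) hτ (by linarith) (by norm_num) (by simp; linarith)) ?_
  intro s hs hs'
  have := h s (1 - s) hs (by linarith) (by ring)
  convert this using 2
  ext i
  fin_cases i <;> simp <;> ring

/-- For `F = x³ - x - y z w`, `w = 4x - y - z - c`, the base points are joined by a polygonal
path. -/
lemma conn_fam' {c τ : ℝ} (hc : 24 / 5 ≤ c) (hc' : c ≤ 8) (hτ : 0 < τ) (hτ' : τ ≤ 1 / 20) :
    Conn (sc (-τ) (fam 0 (-1) c 0 0)) := by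
  have hτi : 20 ≤ τ⁻¹ := by
    rw [le_inv_comm₀ (by norm_num) hτ]; linarith
  have hF : ∀ x y z : ℝ, P82Def !₂[x, y, z] (fam 0 (-1) c 0 0)
      = x ^ 3 - x - y * z * (4 * x - y - z - c) := by
    intro x y z
    rw [F_fam]
    simp
    ring
  have s1 : JoinedIn (neg (sc (-τ) (fam 0 (-1) c 0 0))) ((-τ) • ((-τ⁻¹) • q₁))
      ((-τ) • !₂[-1 / 2, -1 / 2, -3 / 4]) := by
    refine seg_join hτ (norm_end hτ norm_q₁) (norm_le_of_bound (M := 20) hτ (by linarith)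
      (by norm_num) (by simp; norm_num)) ?_
    intro s hs hs'
    set m := τ⁻¹ / 5 * (1 - s) + s / 4 with hm
    have hm0 : 0 < m := by nlinarith
    have : 0 < 2 * m + 6 * c * m ^ 2 + 10 * m ^ 3 := by positivity
    convert this using 1
    rw [F_fam]
    simp [q₁, hm]
    ring
  have s2 := joined_of_seq (l := fam 0 (-1) c 0 0) (x := -1 / 2) (y := -1 / 2) (z := -3 / 4)
    (x' := -1 / 2) (y' := -(2 + c)) (z' := 0) hτ hτ' (by norm_num) (by nlinarith) (by
    intro s r hs hr h
    obtain rfl : s = 1 - r := by linarith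
    rw [hF]
    have h1 : 0 ≤ r / 2 + (1 - r) * (2 + c) := by positivity
    have h2 : 0 ≤ (r / 2 + (1 - r) * (2 + c)) * (3 / 4 * r) * (r * (3 / 4 + c)) := by positivity
    linarith)
  have s3 := joined_of_seq (l := fam 0 (-1) c 0 0) (x := -1 / 2) (y := -(2 + c)) (z := 0)
    (x' := -1 / 2) (y' := -(6 + c)) (z' := 2) hτ hτ' (by nlinarith) (by nlinarith) (by
    intro s r hs hr h
    obtain rfl : r = 1 - s := by linarith
    rw [hF]
    have h2 : 0 ≤ (2 + c + 4 * s) * (2 * s) * (2 * s) := by positivity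
    linarith)
  have s4 := joined_of_seq (l := fam 0 (-1) c 0 0) (x := -1 / 2) (y := -(6 + c)) (z := 2)
    (x' := 6 / 5) (y' := 4 / 5 - c) (z' := 2) hτ hτ' (by nlinarith) (by nlinarith) (by
    intro s r hs hr h
    obtain rfl : s = 1 - r := by linarith
    rw [hF]
    have h2 : 0 ≤ (6 / 5 - 17 / 10 * r + 1) * (6 / 5 - 17 / 10 * r - 1 / 2) ^ 2 :=
      mul_nonneg (by linarith) (sq_nonneg _)
    linarith)
  have s5 := joined_of_seq (l := fam 0 (-1) c 0 0) (x := 6 / 5) (y := 4 / 5 - c) (z := 2)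
    (x' := 6 / 5) (y' := 24 / 5 - c) (z' := 0) hτ hτ' (by nlinarith) (by nlinarith) (by
    intro s r hs hr h
    obtain rfl : s = 1 - r := by linarith
    rw [hF]
    have h2 : 0 ≤ (c - 24 / 5 + 4 * r) * (2 * r) * (2 * r) := by
      have : 0 ≤ c - 24 / 5 := by linarith
      positivity
    linarith)
  have s6 := joined_of_seq (l := fam 0 (-1) c 0 0) (x := 6 / 5) (y := 24 / 5 - c) (z := 0)
    (x' := 6 / 5) (y' := 0) (z' := 0) hτ hτ' (by nlinarith) (by norm_num) (by
    intro s r hs hr h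
    obtain rfl : s = 1 - r := by linarith
    rw [hF]
    linarith)
  have s7 : JoinedIn (neg (sc (-τ) (fam 0 (-1) c 0 0))) ((-τ) • !₂[6 / 5, 0, 0])
      ((-τ) • ((-τ⁻¹) • q₂)) := by
    refine seg_join hτ (norm_le_of_bound (M := 20) hτ (by linarith)
      (by norm_num) (by simp; norm_num)) (norm_end hτ norm_q₂) ?_
    intro s hs hs'
    set m := 6 / 5 + s * (τ⁻¹ - 6 / 5) with hm
    have hm0 : 6 / 5 ≤ m := by nlinarith
    have : 0 < m ^ 3 - m := by nlinarith [mul_pos (show 0 < m by linarith) (show 0 < m - 1 by linarith)]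
    convert this using 1
    rw [F_fam]
    simp [q₂, hm]
    ring
  exact conn_ends hτ (s1.trans (s2.trans (s3.trans (s4.trans (s5.trans (s6.trans s7))))))

/-! ### Spherical components of the samples -/

/-- A spherical component contains a minimum of `F`, hence a critical point with negative
critical value. -/
lemma exists_crit_of_sph {l : E8} (h : Sph l) : ∃ p, P82Def p l < 0 ∧ grad l p = 0 := by
  obtain ⟨W, hW, hWb, hWf, q, hq, hqF⟩ := h
  have hc : IsCompact (closure W) :=
    (isCompact_closedBall (0 : E3) 1).of_isClosed_subset isClosed_closure fun p hp =>
      Metric.ball_subset_closedBall (hWb hp)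
  obtain ⟨p, hp, hmin⟩ := hc.exists_isMinOn ⟨q, subset_closure hq⟩
    (continuous_F_right l).continuousOn
  have hpF : P82Def p l < 0 := lt_of_le_of_lt (hmin (subset_closure hq)) hqF
  have hpW : p ∈ W := by
    by_contra hcon
    have : p ∈ frontier W := by
      rw [hW.frontier_eq]; exact ⟨hp, hcon⟩
    linarith [hWf p this]
  refine ⟨p, hpF, (fderiv_F_eq_zero_iff l p).1 ?_⟩
  have : IsLocalMin (fun q => P82Def q l) p :=
    (hmin.on_subset subset_closure).isLocalMin (hW.mem_nhds hpW)
  exact this.fderiv_eq_zero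

lemma not_sph_D0 {τ : ℝ} (hτ : 0 < τ) : ¬ Sph (sc τ (fam 1 0 0 0 0)) := by
  intro h
  obtain ⟨p, hp, hg⟩ := exists_crit_of_sph h
  obtain ⟨r, rfl⟩ : ∃ r : E3, p = τ • r :=
    ⟨τ⁻¹ • p, by rw [smul_smul, mul_inv_cancel₀ hτ.ne', one_smul]⟩
  have hg' := grad_sc_zero hτ.ne' hg
  rw [F_sc, F_fam] at hp
  rw [grad_fam] at hg'
  have e0 := congrFun hg' 0
  have e1 := congrFun hg' 1
  have e2 := congrFun hg' 2
  simp at e0 e1 e2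
  have : 0 < τ ^ 3 := by positivity
  -- Euler's identity: the homogeneous cubic part of `F` vanishes at a critical point
  have hE : r 0 ^ 3 + 0 * r 0 + 1 + r 1 * (r 2 ^ 2 + r 2 * (r 1 - 4 * r 0 + 0) + 0 * r 0 + 0)
      = 1 := by
    have e0' : r 0 * (3 * r 0 ^ 2 - 4 * r 1 * r 2) = 0 := by
      rw [show 3 * r 0 ^ 2 - 4 * r 1 * r 2 = 0 by linarith]; ring
    have e2' : r 1 * r 2 * (2 * r 2 + r 1 - 4 * r 0) = 0 := by
      have : r 1 * (2 * r 2 + r 1 - 4 * r 0) = 0 := by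
        rcases e2 with h | h
        · rw [h]; ring
        · rw [show 2 * r 2 + r 1 - 4 * r 0 = 0 by linarith]; ring
      linear_combination r 2 * this
    linear_combination (1/3) * e0' + (1/3) * e2' + (1/3) * r 1 * e1
  rw [hE] at hp
  linarith

lemma sph_D0s {τ : ℝ} (hτ : 0 < τ) (hτ' : τ ≤ 1 / 20) :
    Sph (sc τ (fam (63 / 2) (-187 / 10) 8 0 0)) := by
  have hW : IsOpen {p : E3 | 0 < p 1 ∧ 0 < p 2 ∧ 8 * τ < 4 * p 0 - p 1 - p 2 ∧
      p 0 < τ * (7 / 2)} :=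
    (isOpen_lt (f := fun _ => 0) (g := fun p : E3 => p 1) (by fun_prop) (by fun_prop)).and
      ((isOpen_lt (f := fun _ => 0) (g := fun p : E3 => p 2) (by fun_prop) (by fun_prop)).and
      ((isOpen_lt (f := fun _ => 8 * τ) (g := fun p : E3 => 4 * p 0 - p 1 - p 2) (by fun_prop)
        (by fun_prop)).and
      (isOpen_lt (f := fun p : E3 => p 0) (g := fun _ => τ * (7 / 2)) (by fun_prop)
        (by fun_prop))))
  have hC : IsClosed {p : E3 | 0 ≤ p 1 ∧ 0 ≤ p 2 ∧ 8 * τ ≤ 4 * p 0 - p 1 - p 2 ∧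
      p 0 ≤ τ * (7 / 2)} :=
    (isClosed_le (f := fun _ => 0) (g := fun p : E3 => p 1) (by fun_prop) (by fun_prop)).and
      ((isClosed_le (f := fun _ => 0) (g := fun p : E3 => p 2) (by fun_prop) (by fun_prop)).and
      ((isClosed_le (f := fun _ => 8 * τ) (g := fun p : E3 => 4 * p 0 - p 1 - p 2) (by fun_prop)
        (by fun_prop)).and
      (isClosed_le (f := fun p : E3 => p 0) (g := fun _ => τ * (7 / 2)) (by fun_prop)
        (by fun_prop))))
  have hcl : closure {p : E3 | 0 < p 1 ∧ 0 < p 2 ∧ 8 * τ < 4 * p 0 - p 1 - p 2 ∧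
      p 0 < τ * (7 / 2)} ⊆ {p : E3 | 0 ≤ p 1 ∧ 0 ≤ p 2 ∧ 8 * τ ≤ 4 * p 0 - p 1 - p 2 ∧
      p 0 ≤ τ * (7 / 2)} :=
    closure_minimal (fun p hp => ⟨hp.1.le, hp.2.1.le, hp.2.2.1.le, hp.2.2.2.le⟩) hC
  refine ⟨_, hW, ?_, ?_, ?_⟩
  · intro p hp
    obtain ⟨h1, h2, h3, h4⟩ := hcl hp
    rw [mem_ball_zero_iff, ← sq_lt_one_iff₀ (norm_nonneg _), norm_sq]
    nlinarith [mul_nonneg h1 h2]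
  · intro p hp
    rw [hW.frontier_eq] at hp
    obtain ⟨h1, h2, h3, h4⟩ := hcl hp.1
    have hp2 := hp.2
    simp only [Set.mem_ofPred_eq, not_and, not_lt] at hp2
    rw [F_sc_inv hτ.ne', F_fam]
    refine mul_pos (by positivity) ?_
    have key : ∀ x y z : ℝ, 0 ≤ y → 0 ≤ z → 8 ≤ 4 * x - y - z → x ≤ 7 / 2 →
        (y = 0 ∨ z = 0 ∨ 4 * x - y - z = 8 ∨ x = 7 / 2) →
        0 < x ^ 3 + (-187 / 10) * x + 63 / 2
          + y * (z ^ 2 + z * (y - 4 * x + 8) + 0 * x + 0) := by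
      intro x y z hy hz hw hx h
      have hx2 : 2 ≤ x := by linarith
      have hpol : 0 < x ^ 3 + (-187 / 10) * x + 63 / 2 := by
        have : 0 < (x + 5) * ((x - 5 / 2) ^ 2 + 1 / 20) := by positivity
        nlinarith
      rcases h with rfl | rfl | h | rfl
      · linarith
      · linarith
      · have : z ^ 2 + z * (y - 4 * x + 8) + 0 * x + 0 = 0 := by
          linear_combination (-z) * h
        rw [this]; linarith
      · have hs : 0 ≤ 6 - y - z := by linarith
        -- AM-GM: three nonnegative numbers with sum `6` have product at most `8`
        have hyz : y * z * (6 - y - z) ≤ 8 := by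
          nlinarith [mul_nonneg hz (sq_nonneg (y - 2)), mul_nonneg hy (sq_nonneg (z - 2)),
            mul_nonneg hs (sq_nonneg (y - z)), sq_nonneg (y - z), mul_nonneg hy hz,
            sq_nonneg (y + z - 4), mul_nonneg (add_nonneg hy hz) (sq_nonneg (y - z)),
            mul_nonneg (show 0 ≤ y + z + 2 by linarith) (sq_nonneg (y + z - 4))]
        nlinarith
    have hτi : 0 < τ⁻¹ := by positivity
    have c : ∀ i, (τ⁻¹ • p) i = p i / τ := fun i => by simp; ring
    rw [c, c, c]
    refine key _ _ _ (by positivity) (by positivity) ?_ ?_ ?_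
    · rw [← mul_div_assoc, ← sub_div, ← sub_div, le_div_iff₀ hτ]; linarith
    · rw [div_le_iff₀ hτ]; linarith
    · rcases h1.eq_or_lt with a | a
      · left; rw [← a]; simp
      rcases h2.eq_or_lt with b | b
      · right; left; rw [← b]; simp
      rcases h3.eq_or_lt with d | d
      · right; right; left
        rw [← mul_div_assoc, ← sub_div, ← sub_div, div_eq_iff hτ.ne']; linarith
      · right; right; right
        rw [div_eq_iff hτ.ne']; linarith [hp2 a b d]
  · refine ⟨τ • !₂[11 / 4, 1, 1], ?_, ?_⟩
    · refine ⟨?_, ?_, ?_, ?_⟩ <;> simp <;> linarith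
    · rw [F_sc, F_fam]
      have : 0 < τ ^ 3 := by positivity
      simp
      norm_num
      linarith

/-! ### The invariant and its local constancy -/

open Classical in
/-- The last part of the invariant, used when one of the two regions does not join its ends: it
depends on the number `v` of oriented elliptic lines and on the existence `S` of a spherical
component of this region. -/
noncomputable def subcode (v : ℕ∞) (S : Prop) : ℕ :=
  if 16 ≤ v then 0 else if 8 ≤ v then 1 else if 4 ≤ v then 2 else if S then 3 else 4

open Classical in
/-- The values of the invariant: `o` and `v` are the numbers of oriented elliptic lines with
direction on the oval, respectively with any direction; `C`, `S` stand for connectedness of the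
negative region and for existence of its spherical components, and `Cp`, `Sp` for the same
properties of the positive region. -/
noncomputable def codeFun (o v : ℕ∞) (C Cp S Sp : Prop) : ℕ :=
  if 16 ≤ o then 0 else if 12 ≤ o then 1 else if 8 ≤ o then 2 else if 4 ≤ o then 3
  else if ¬ C then (if ¬ Cp then 4 else 5 + subcode v S) else 10 + subcode v Sp

/-- The invariant of a parameter. Since `F(-p, sc (-1) l) = -F(p, l)`, the negative region of
`sc (-1) l` is the mirror image of the positive region of `l`. -/
noncomputable def code (l : E8) : ℕ :=
  codeFun (EllO l).encard (Ell l).encard (Conn l) (Conn (sc (-1) l)) (Sph l) (Sph (sc (-1) l))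

lemma disc_sc {τ ε δ δ' : ℝ} (hτ : τ ≠ 0) {l : E8} (hl : ‖l‖ < δ)
    (h : sc τ l ∈ P82Disc (|τ| * ε) δ') : l ∈ P82Disc ε δ := by
  obtain ⟨-, p, hp, hF, hd⟩ := h
  obtain ⟨r, rfl⟩ : ∃ r : E3, p = τ • r :=
    ⟨τ⁻¹ • p, by rw [smul_smul, mul_inv_cancel₀ hτ, one_smul]⟩
  refine ⟨hl, r, ?_, ?_, ?_⟩
  · rw [norm_smul, Real.norm_eq_abs] at hp
    exact le_of_mul_le_mul_left hp (abs_pos.2 hτ)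
  · rw [F_sc] at hF
    exact (mul_eq_zero.1 hF).resolve_left (pow_ne_zero _ hτ)
  · rw [fderiv_F_eq_zero_iff] at hd ⊢
    exact grad_sc_zero hτ hd

lemma code_locally_const {η : ℝ} (hη : ∀ l : E8, ‖l‖ < η → l ∉ P82Disc 1 η → Good l) {l : E8}
    (hl : l ∈ {l : E8 | ‖l‖ < η} \ P82Disc 1 η) :
    ∀ᶠ m in 𝓝[{l : E8 | ‖l‖ < η} \ P82Disc 1 η] l, code m = code l := by
  have hU : {l : E8 | ‖l‖ < η} \ P82Disc 1 η ⊆ {m | Good m} := fun m hm => hη m hm.1 hm.2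
  have hg := hη l hl.1 hl.2
  have hg' : Good (sc (-1) l) := by
    refine hη _ ((norm_sc_le_self (by simp) l).trans_lt hl.1) fun h => hl.2 ?_
    exact disc_sc (τ := -1) (by norm_num) hl.1 (by simpa using h)
  have ht : Tendsto (sc (-1)) (𝓝 l) (𝓝 (sc (-1) l)) := (continuous_sc (-1)).tendsto l
  filter_upwards [nhdsWithin_mono l hU (ell_locally_const hg),
    nhdsWithin_mono l hU (ellO_locally_const hg),
    nhdsWithin_le_nhds (conn_locally_const hg), nhdsWithin_le_nhds (sph_locally_const hg),
    nhdsWithin_le_nhds (ht.eventually (conn_locally_const hg')),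
    nhdsWithin_le_nhds (ht.eventually (sph_locally_const hg'))] with m h1 h2 h3 h4 h5 h6
  unfold code
  rw [h1, h2, propext h3, propext h4, propext h5, propext h6]

/-! ### The fifteen samples -/

/-- `l` has no critical point with value zero, and the rescalings `sc (s * τ) l` realize the value
`i` of the invariant for all small `τ > 0`. -/
structure IsSample (i : ℕ) (l : E8) (s : ℝ) : Prop where
  last : l 7 = 0
  sign : s ≠ 0
  ns : ∀ p, P82Def p l = 0 → grad l p ≠ 0
  code_eq : ∀ τ : ℝ, 0 < τ → τ ≤ 1 / 20 → code (sc (s * τ) l) = i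

lemma sample_oval {i : ℕ} {k u c d e : ℝ}
    (ns : ∀ p, P82Def p (fam k u c d e) = 0 → grad (fam k u c d e) p ≠ 0)
    (h : ∀ v C Cp S Sp, codeFun (EllO (fam k u c d e)).encard v C Cp S Sp = i) :
    IsSample i (fam k u c d e) 1 := by
  refine ⟨by simp [fam], one_ne_zero, ns, fun τ hτ _ => ?_⟩
  unfold code
  rw [one_mul, encard_ellO_sc hτ.ne', h]

/-- A sample with disconnected negative region and connected positive region, together with its
mirror image. -/
lemma sample_pair {j : ℕ} {k u c d e : ℝ}
    (ns : ∀ p, P82Def p (fam k u c d e) = 0 → grad (fam k u c d e) p ≠ 0)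
    (ho : (EllO (fam k u c d e)).encard = 0)
    (hc : ∀ τ : ℝ, 0 < τ → τ ≤ 1 / 20 → ¬ Conn (sc τ (fam k u c d e)))
    (hc' : ∀ τ : ℝ, 0 < τ → τ ≤ 1 / 20 → Conn (sc (-τ) (fam k u c d e)))
    (h : ∀ τ : ℝ, 0 < τ → τ ≤ 1 / 20 →
      subcode (Ell (fam k u c d e)).encard (Sph (sc τ (fam k u c d e))) = j) :
    IsSample (5 + j) (fam k u c d e) 1 ∧ IsSample (10 + j) (fam k u c d e) (-1) := by
  refine ⟨⟨by simp [fam], one_ne_zero, ns, fun τ hτ hτ' => ?_⟩,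
    ⟨by simp [fam], by norm_num, ns, fun τ hτ hτ' => ?_⟩⟩
  · have hm : sc (-1) (sc τ (fam k u c d e)) = sc (-τ) (fam k u c d e) := by
      rw [sc_sc, neg_one_mul]
    unfold code
    rw [one_mul, encard_ellO_sc hτ.ne', encard_ell_sc hτ.ne', hm, ho]
    simp [codeFun, hc τ hτ hτ', hc' τ hτ hτ', h τ hτ hτ']
  · have hm : sc (-1) (sc (-τ) (fam k u c d e)) = sc τ (fam k u c d e) := by
      rw [sc_sc, neg_mul_neg, one_mul]
    unfold code
    rw [neg_one_mul, encard_ellO_sc (neg_ne_zero.2 hτ.ne'), encard_ell_sc (neg_ne_zero.2 hτ.ne'),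
      hm, ho]
    simp [codeFun, hc' τ hτ hτ', h τ hτ hτ']

lemma sample_P4 : IsSample 0 (fam 0 (-4) 5 (-3) 6) 1 :=
  sample_oval ns_P4 fun v C Cp S Sp => by simp [codeFun, ov_P4]

lemma sample_P3 : IsSample 1 (fam 0 (-1) 1 0 0) 1 :=
  sample_oval ns_P3 fun v C Cp S Sp => by
    rw [ov_P3]; unfold codeFun; rw [if_neg (by decide), if_pos le_rfl]

lemma sample_P2 : IsSample 2 (fam 0 (-1) 2 (-2) 1) 1 :=
  sample_oval ns_P2 fun v C Cp S Sp => by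
    rw [ov_P2]; unfold codeFun
    rw [if_neg (by decide), if_neg (by decide), if_pos le_rfl]

lemma sample_P1 : IsSample 3 (fam (-1) 0 0 0 (-1)) 1 :=
  sample_oval ns_P1 fun v C Cp S Sp => by
    rw [ov_P1]; unfold codeFun
    rw [if_neg (by decide), if_neg (by decide), if_neg (by decide), if_pos le_rfl]

/-- This sample is its own mirror image, so neither region is connected. -/
lemma sample_T : IsSample 4 (fam 0 1 0 0 0) 1 := by
  refine ⟨by simp [fam], one_ne_zero, ns_T, fun τ hτ hτ' => ?_⟩
  have hm : sc (-1) (sc τ (fam 0 1 0 0 0)) = sc τ (fam 0 1 0 0 0) := by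
    rw [sc_sc]
    ext i; fin_cases i <;> simp [sc, fam]
  have hc : ¬ Conn (sc τ (fam 0 1 0 0 0)) := by
    refine not_conn_fam (κ := 1) (by norm_num) (by norm_num) (fun x hx => ?_) hτ (by linarith)
    have hx0 : 0 < x := by linarith
    refine ⟨by positivity, ?_⟩
    nlinarith [pow_pos hx0 3]
  unfold code
  rw [one_mul, encard_ellO_sc hτ.ne', encard_ell_sc hτ.ne', hm, ov_T]
  simp [codeFun, hc]

lemma sample_D3 :
    IsSample 5 (fam 0 (-1) 8 0 0) 1 ∧ IsSample 10 (fam 0 (-1) 8 0 0) (-1) := by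
  refine sample_pair (j := 0) ns_D3 ov_D3 (fun τ hτ hτ' => ?_)
    (fun τ hτ hτ' => conn_fam' (by norm_num) le_rfl hτ hτ') fun τ hτ hτ' => by
      simp [subcode, ev_D3]
  refine not_conn_fam (κ := 8) (by norm_num) le_rfl (fun x hx => ?_) hτ (by linarith)
  have hx : 1 < x := by linarith
  have : 0 < x ^ 3 - x := by nlinarith [mul_pos (sub_pos.2 hx) (sub_pos.2 hx)]
  constructor <;> linarith

lemma sample_D2 :
    IsSample 6 (fam 0 (-1) 5 0 0) 1 ∧ IsSample 11 (fam 0 (-1) 5 0 0) (-1) := by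
  refine sample_pair (j := 1) ns_D2 ov_D2 (fun τ hτ hτ' => ?_)
    (fun τ hτ hτ' => conn_fam' (by norm_num) (by norm_num) hτ hτ') fun τ hτ hτ' => by
      rw [ev_D2]; unfold subcode
      rw [if_neg (by decide), if_pos (by decide)]
  refine not_conn_fam (κ := 5) (by norm_num) (by norm_num) (fun x hx => ?_) hτ (by linarith)
  have hx : 1 < x := by linarith
  have : 0 < x ^ 3 - x := by nlinarith [mul_pos (sub_pos.2 hx) (sub_pos.2 hx)]
  constructor <;> linarith

lemma sample_D1 :
    IsSample 7 (fam 1 0 0 1 1) 1 ∧ IsSample 12 (fam 1 0 0 1 1) (-1) := by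
  refine sample_pair (j := 2) ns_D1 ov_D1 (fun τ hτ hτ' => ?_) (fun τ hτ hτ' => ?_)
    fun τ hτ hτ' => by
      rw [ev_D1]; unfold subcode
      rw [if_neg (by decide), if_neg (by decide), if_pos le_rfl]
  · refine not_conn_fam (κ := 2) (by norm_num) (by norm_num) (fun x hx => ?_) hτ (by linarith)
    have hx0 : 0 < x := by linarith
    refine ⟨by positivity, ?_⟩
    have h1 : 0 ≤ 4 * x - 2 := by linarith
    nlinarith [pow_pos hx0 3, mul_nonneg h1 hx0.le]
  · refine conn_fam (fun s hs => ?_) (fun x hx => by positivity) hτ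
    nlinarith [pow_nonneg hs 3, sq_nonneg (2 * s - 1 / 2)]

lemma sample_D0s : IsSample 8 (fam (63 / 2) (-187 / 10) 8 0 0) 1 ∧
    IsSample 13 (fam (63 / 2) (-187 / 10) 8 0 0) (-1) := by
  have hpol : ∀ x : ℝ, 0 ≤ x → 0 < x ^ 3 + (-187 / 10) * x + 63 / 2 := by
    intro x hx
    have : 0 < (x + 5) * ((x - 5 / 2) ^ 2 + 1 / 20) := by positivity
    nlinarith
  refine sample_pair (j := 3) ns_D0s ?_ (fun τ hτ hτ' => ?_) (fun τ hτ hτ' => ?_)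
    fun τ hτ hτ' => by
      rw [ev_D0s]; simp [subcode, sph_D0s hτ hτ']
  · exact le_antisymm ((ellO_le_ell _).trans ev_D0s.le) zero_le
  · refine not_conn_fam (κ := 8) (by norm_num) le_rfl (fun x hx => ?_) hτ (by linarith)
    have := hpol x (by linarith)
    constructor <;> linarith
  · refine conn_fam (fun s hs => ?_) hpol hτ
    nlinarith [pow_nonneg hs 3, sq_nonneg s]

lemma sample_D0 :
    IsSample 9 (fam 1 0 0 0 0) 1 ∧ IsSample 14 (fam 1 0 0 0 0) (-1) := by
  refine sample_pair (j := 4) ns_D0 ?_ (fun τ hτ hτ' => ?_) (fun τ hτ hτ' => ?_)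
    fun τ hτ hτ' => by
      rw [ev_D0]; simp [subcode, not_sph_D0 hτ]
  · exact le_antisymm ((ellO_le_ell _).trans ev_D0.le) zero_le
  · refine not_conn_fam (κ := 0) le_rfl (by norm_num) (fun x hx => ?_) hτ (by linarith)
    have hx0 : 0 ≤ x := by linarith
    have : 0 ≤ x ^ 3 := by positivity
    constructor <;> linarith
  · exact conn_fam (fun s hs => by nlinarith [pow_nonneg hs 3]) (fun x hx => by positivity) hτ

lemma exists_sample (i : Fin 15) : ∃ l s, IsSample i l s := by
  fin_cases i
  · exact ⟨_, _, sample_P4⟩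
  · exact ⟨_, _, sample_P3⟩
  · exact ⟨_, _, sample_P2⟩
  · exact ⟨_, _, sample_P1⟩
  · exact ⟨_, _, sample_T⟩
  · exact ⟨_, _, sample_D3.1⟩
  · exact ⟨_, _, sample_D2.1⟩
  · exact ⟨_, _, sample_D1.1⟩
  · exact ⟨_, _, sample_D0s.1⟩
  · exact ⟨_, _, sample_D0.1⟩
  · exact ⟨_, _, sample_D3.2⟩
  · exact ⟨_, _, sample_D2.2⟩
  · exact ⟨_, _, sample_D1.2⟩
  · exact ⟨_, _, sample_D0s.2⟩
  · exact ⟨_, _, sample_D0.2⟩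

/-- For every size `δ` there is a rescaled sample of norm less than `δ`, off the discriminant. -/
lemma exists_point {ε δ : ℝ} (hε : 0 < ε) (hδ : 0 < δ) (i : Fin 15) :
    ∃ l : E8, l ∈ {l : E8 | ‖l‖ < δ} \ P82Disc ε δ ∧ code (sc ε⁻¹ l) = i := by
  obtain ⟨l, s, h⟩ := exists_sample i
  have hcont : Continuous fun τ : ℝ => sc (s * τ * ε) l := by
    unfold sc; fun_prop
  have h0 : sc (s * 0 * ε) l = 0 := by
    ext j; fin_cases j <;> simp [sc, h.last]
  have hev : ∀ᶠ τ : ℝ in 𝓝[>] 0, ‖sc (s * τ * ε) l‖ < δ := by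
    refine nhdsWithin_le_nhds ?_
    have := (hcont.norm.tendsto 0)
    simp only [h0, norm_zero] at this
    exact this.eventually_lt_const hδ
  have hsm : ∀ᶠ τ : ℝ in 𝓝[>] 0, τ ≤ 1 / 20 :=
    nhdsWithin_le_nhds (eventually_le_nhds (by norm_num))
  obtain ⟨τ, h1, h2, h3⟩ := (hev.and (hsm.and self_mem_nhdsWithin)).exists
  have h3 : 0 < τ := h3
  have hne : s * τ * ε ≠ 0 := mul_ne_zero (mul_ne_zero h.sign h3.ne') hε.ne'
  refine ⟨sc (s * τ * ε) l, ⟨h1, ?_⟩, ?_⟩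
  · rintro ⟨-, p, -, hF, hd⟩
    obtain ⟨r, rfl⟩ : ∃ r : E3, p = (s * τ * ε) • r :=
      ⟨(s * τ * ε)⁻¹ • p, by rw [smul_smul, mul_inv_cancel₀ hne, one_smul]⟩
    rw [F_sc] at hF
    rw [fderiv_F_eq_zero_iff] at hd
    exact h.ns r ((mul_eq_zero.1 hF).resolve_left (pow_ne_zero _ hne)) (grad_sc_zero hne hd)
  · rw [sc_sc, show ε⁻¹ * (s * τ * ε) = s * τ by field_simp]
    exact h.code_eq τ h3 h2

/-- A locally constant function is constant on connected components. -/
lemma eq_of_component_eq {X : Type*} [TopologicalSpace X] {V : Set X} {f : X → ℕ}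
    (hf : ∀ x ∈ V, ∀ᶠ y in 𝓝[V] x, f y = f x) {x y : X} (hx : x ∈ V) (hy : y ∈ V)
    (h : connectedComponentIn V x = connectedComponentIn V y) : f x = f y := by
  have hc : ContinuousOn f V := fun z hz =>
    tendsto_nhds_of_eventually_eq (hf z hz)
  refine isPreconnected_connectedComponentIn.constant
    (hc.mono (connectedComponentIn_subset V x)) (mem_connectedComponentIn hx) ?_
  rw [h]; exact mem_connectedComponentIn hy

end P82

/-- The complement of the local discriminant of the `P₈²` singularity has at least 15
connected components. -/
theorem P82_discriminant_complement_components :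
    ∃ ε₀ : ℝ, 0 < ε₀ ∧ ∀ ε : ℝ, 0 < ε → ε ≤ ε₀ → ∃ δ : ℝ, 0 < δ ∧
      ∃ pts : Fin 15 → EuclideanSpace ℝ (Fin 8),
        (∀ i, pts i ∈ ({l : EuclideanSpace ℝ (Fin 8) | ‖l‖ < δ} \ P82Disc ε δ)) ∧
        Function.Injective (fun i =>
          connectedComponentIn ({l : EuclideanSpace ℝ (Fin 8) | ‖l‖ < δ} \ P82Disc ε δ)
            (pts i)) := by
  obtain ⟨η, hη0, hη⟩ := P82.exists_good
  refine ⟨1, one_pos, fun ε hε hε1 => ?_⟩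
  have hδ : 0 < η * ε ^ 3 := by positivity
  have hinv : 1 ≤ ε⁻¹ := (one_le_inv₀ hε).2 hε1
  choose pts hpts hcode using P82.exists_point hε hδ
  refine ⟨η * ε ^ 3, hδ, pts, hpts, fun i j hij => ?_⟩
  -- the rescaling `sc ε⁻¹` reduces the radius `ε` to the radius `1`
  have hmaps : Set.MapsTo (P82.sc ε⁻¹)
      ({l : EuclideanSpace ℝ (Fin 8) | ‖l‖ < η * ε ^ 3} \ P82Disc ε (η * ε ^ 3))
      ({l : EuclideanSpace ℝ (Fin 8) | ‖l‖ < η} \ P82Disc 1 η) := by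
    rintro l ⟨hl, hl'⟩
    have hl : ‖l‖ < η * ε ^ 3 := hl
    refine ⟨?_, fun h => hl' ?_⟩
    · have habs : |ε⁻¹| = ε⁻¹ := abs_of_pos (by positivity)
      have := P82.norm_sc_le ε⁻¹ (ε⁻¹ ^ 3) (one_le_pow₀ hinv) (by rw [habs])
        (by rw [habs]; exact pow_le_pow_right₀ hinv (by norm_num))
        (by rw [habs]; exact le_self_pow₀ hinv (by norm_num)) l
      refine lt_of_le_of_lt this ?_
      calc ε⁻¹ ^ 3 * ‖l‖ < ε⁻¹ ^ 3 * (η * ε ^ 3) := by gcongr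
        _ = η := by field_simp
    · refine P82.disc_sc (τ := ε⁻¹) (by positivity) hl (δ' := η) ?_
      rw [abs_of_pos (by positivity), inv_mul_cancel₀ hε.ne']
      exact h
  have key := P82.eq_of_component_eq (f := fun l => P82.code (P82.sc ε⁻¹ l)) (fun l hl => ?_)
    (hpts i) (hpts j) hij
  · simp only [hcode] at key
    exact Fin.ext key
  · have ht : Filter.Tendsto (P82.sc ε⁻¹) (nhdsWithin l _) (nhdsWithin (P82.sc ε⁻¹ l) _) :=
      ((P82.continuous_sc ε⁻¹).continuousWithinAt).tendsto_nhdsWithin hmaps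
    exact ht.eventually (P82.code_locally_const hη (hmaps hl))
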